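/- arXiv:2602.00842 — 2 statements merged into one kernel-verified Lean document; each statement's English description precedes it below -/
import Mathlib

section
/- Let X = {(R₋,S₋,R₊,S₊) ∈ SU(2)⁴ : R₋S₋R₋⁻¹S₋⁻¹R₊S₊R₊⁻¹S₊⁻¹ = 1}, topologized as a subspace of ℍ⁴, and let χ(F₂) be the quotient of X, with the quotient topology, by the action of SU(2) by simultaneous conjugation. Then χ(F₂) is a compact Hausdorff space and every point of χ(F₂) has an open neighborhood homeomorphic to ℝ⁶; that is, χ(F₂) is a closed topological 6-manifold. -/
noncomputable section

/-- The condition defining the representation space of the genus two surface group: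
quadruples `(R₋, S₋, R₊, S₊)` of unit quaternions (elements of `SU(2)`) satisfying the
genus two surface relation `[R₋,S₋][R₊,S₊] = 1`. -/
def memX (t : Quaternion ℝ × Quaternion ℝ × Quaternion ℝ × Quaternion ℝ) : Prop :=
  ‖t.1‖ = 1 ∧ ‖t.2.1‖ = 1 ∧ ‖t.2.2.1‖ = 1 ∧ ‖t.2.2.2‖ = 1 ∧
    t.1 * t.2.1 * t.1⁻¹ * t.2.1⁻¹ * (t.2.2.1 * t.2.2.2 * t.2.2.1⁻¹ * t.2.2.2⁻¹) = 1

/-- The representation space `X ⊂ ℍ⁴`, with the subspace topology. -/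
abbrev GenusTwoRepSpace : Type := {t // memX t}

/-- Two points of `X` are related iff they are simultaneously conjugate by a unit
quaternion `u ∈ SU(2)`. -/
def conjRel (s t : GenusTwoRepSpace) : Prop :=
  ∃ u : Quaternion ℝ, ‖u‖ = 1 ∧
    t.1.1 = u * s.1.1 * u⁻¹ ∧ t.1.2.1 = u * s.1.2.1 * u⁻¹ ∧
    t.1.2.2.1 = u * s.1.2.2.1 * u⁻¹ ∧ t.1.2.2.2 = u * s.1.2.2.2 * u⁻¹

/-- The `SU(2)` character variety `χ(F₂)` of the genus two surface: the quotient of `X`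
by simultaneous conjugation, with the quotient topology. -/
abbrev ChiF2 : Type := Quot conjRel

open Topology


def LocE {χ : Type*} [TopologicalSpace χ] (x : χ) : Prop :=
  ∃ U : Set χ, x ∈ U ∧ IsOpen U ∧ Nonempty (U ≃ₜ (Fin 6 → ℝ))

lemma locE_of_emb {χ E : Type*} [TopologicalSpace χ] [NormedAddCommGroup E] [NormedSpace ℝ E]
    [FiniteDimensional ℝ E] (hE : Module.finrank ℝ E = 6) (W : Set E) (hW : IsOpen W)
    (j : W → χ) (hj : IsOpenEmbedding j) (w : W) : LocE (j w) := by
  obtain ⟨ε, hε, hb⟩ := Metric.isOpen_iff.1 hW w w.2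
  let e := OpenPartialHomeomorph.univBall (w : E) ε
  have hmem : ∀ y, e y ∈ W := fun y => hb (by
    have := e.map_source (x := y) (by simp [e])
    rwa [OpenPartialHomeomorph.univBall_target _ hε] at this)
  have h1 : IsOpenEmbedding (fun y => (e y : E)) := e.to_isOpenEmbedding (by simp [e])
  have h2 : IsOpenEmbedding (fun y => (⟨e y, hmem y⟩ : W)) :=
    IsOpenEmbedding.of_comp _ hW.isOpenEmbedding_subtypeVal h1
  let L : (Fin 6 → ℝ) ≃L[ℝ] E := ContinuousLinearEquiv.ofFinrankEq (by simp [hE])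
  have h3 : IsOpenEmbedding (fun y : Fin 6 → ℝ => j ⟨e (L y), hmem (L y)⟩) :=
    (hj.comp h2).comp L.toHomeomorph.isOpenEmbedding
  refine ⟨Set.range (fun y : Fin 6 → ℝ => j ⟨e (L y), hmem (L y)⟩), ⟨L.symm 0, ?_⟩,
    h3.isOpen_range, ⟨h3.isEmbedding.toHomeomorph.symm⟩⟩
  simp [e]

lemma locE_chart {χ O E : Type*} [TopologicalSpace χ] [TopologicalSpace O]
    [NormedAddCommGroup E] [NormedSpace ℝ E]
    [FiniteDimensional ℝ E] (hE : Module.finrank ℝ E = 6)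
    (g : O → χ) (hg : Continuous g) (hgo : IsOpenMap g) (s : O → E)
    (hr : IsOpen (Set.range s)) (hs : IsQuotientMap (Set.rangeFactorization s))
    (hfib : ∀ o o', g o = g o' ↔ s o = s o') (o : O) : LocE (g o) := by
  let gc : C(O, χ) := ⟨g, hg⟩
  have hfac : Function.FactorsThrough gc (Set.rangeFactorization s) := fun a b h =>
    (hfib a b).2 (congrArg Subtype.val h)
  let q : C(O, Set.range s) := ⟨Set.rangeFactorization s, hs.continuous⟩
  let j : C(Set.range s, χ) := IsQuotientMap.lift (f := q) hs gc hfac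
  have hj : ∀ o, j (Set.rangeFactorization s o) = g o := fun o => by
    have := IsQuotientMap.lift_comp (f := q) hs gc hfac
    exact DFunLike.congr_fun this o
  have hje : IsOpenEmbedding j := by
    refine IsOpenEmbedding.of_continuous_injective_isOpenMap j.continuous ?_ ?_
    · intro a b h
      obtain ⟨a, rfl⟩ := hs.surjective a
      obtain ⟨b, rfl⟩ := hs.surjective b
      rw [hj, hj, hfib] at h
      exact Subtype.ext h
    · intro W hW
      have : j '' W = g '' (Set.rangeFactorization s ⁻¹' W) := by
        ext x; constructor
        · rintro ⟨y, hy, rfl⟩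
          obtain ⟨a, rfl⟩ := hs.surjective y
          exact ⟨a, hy, (hj a).symm⟩
        · rintro ⟨a, ha, rfl⟩
          exact ⟨_, ha, hj a⟩
      rw [this]
      exact hgo _ (hW.preimage hs.continuous)
  have := locE_of_emb hE _ hr j hje (Set.rangeFactorization s o)
  rwa [hj] at this

lemma quot_of_open {O E : Type*} [TopologicalSpace O] [TopologicalSpace E] (s : O → E)
    (hc : Continuous s) (ho : IsOpenMap s) : IsOpen (Set.range s) ∧
      IsQuotientMap (Set.rangeFactorization s) := by
  refine ⟨ho.isOpen_range, ?_⟩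
  refine IsOpenMap.isQuotientMap ?_ (by fun_prop) Set.rangeFactorization_surjective
  intro W hW
  have h := ho W hW
  have : Set.rangeFactorization s '' W = Subtype.val ⁻¹' (s '' W) := by
    ext ⟨x, y, rfl⟩
    simp [Set.rangeFactorization, Subtype.ext_iff]
  rw [this]
  exact h.preimage continuous_subtype_val

lemma open_of_retract {Z χ O : Type*} [TopologicalSpace χ] [TopologicalSpace O]
    [TopologicalSpace Z] (ψ : Z → χ) (hψ : IsOpenMap ψ) (G : O → Z) 
    (D : Set Z) (hD : IsOpen D) (r : D → O) (hr : Continuous r) (hGD : ∀ o, G o ∈ D)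
    (hrG : ∀ o, r ⟨G o, hGD o⟩ = o) (hψr : ∀ z : D, ψ (G (r z)) = ψ z) :
    IsOpenMap (fun o => ψ (G o)) := by
  intro W hW
  have : (fun o => ψ (G o)) '' W = ψ '' (Subtype.val '' (r ⁻¹' W)) := by
    ext x; constructor
    · rintro ⟨o, ho, rfl⟩
      exact ⟨G o, ⟨⟨G o, hGD o⟩, by simpa [hrG] using ho, rfl⟩, rfl⟩
    · rintro ⟨_, ⟨z, hz, rfl⟩, rfl⟩
      exact ⟨r z, hz, hψr z⟩
  rw [this]
  exact hψ _ (hD.isOpenMap_subtype_val _ (hW.preimage hr))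


abbrev VV : Type := ℝ × ℂ
def emb (v : VV) : Quaternion ℝ := ⟨v.1, v.2.re, v.2.im, 0⟩
def IsU (v : VV) : Prop := v.1 ^ 2 + (v.2.re ^ 2 + v.2.im ^ 2) = 1
def f0 (v : Fin 4 → VV) : ℝ := (emb (v 0) * emb (v 1) * emb (v 2) * emb (v 3)).imK
abbrev ZZ (f : (Fin 4 → VV) → ℝ) : Type := {v : Fin 4 → VV // (∀ i, IsU (v i)) ∧ f v = 0}
def rotv (u : ℂ) (v : VV) : VV := (v.1, u * v.2)
def cjv (v : VV) : VV := (v.1, starRingEnd ℂ v.2)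

@[simp] lemma emb_re (v : VV) : (emb v).re = v.1 := rfl
@[simp] lemma emb_imI (v : VV) : (emb v).imI = v.2.re := rfl
@[simp] lemma emb_imJ (v : VV) : (emb v).imJ = v.2.im := rfl
@[simp] lemma emb_imK (v : VV) : (emb v).imK = 0 := rfl

lemma norm_one_iff (q : Quaternion ℝ) : ‖q‖ = 1 ↔ q.re ^ 2 + q.imI ^ 2 + q.imJ ^ 2 + q.imK ^ 2 = 1 := by
  rw [← Quaternion.normSq_def', Quaternion.normSq_eq_norm_mul_self]
  constructor
  · intro h; simp [h]
  · intro h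
    nlinarith [norm_nonneg q]

lemma inv_eq_star {q : Quaternion ℝ} (h : ‖q‖ = 1) : q⁻¹ = star q := by
  rw [Quaternion.inv_def, Quaternion.normSq_eq_norm_mul_self, h]; simp

lemma ne_zero_of_norm {q : Quaternion ℝ} (h : ‖q‖ = 1) : q ≠ 0 := by
  rintro rfl; simp at h

lemma norm_emb {v : VV} (h : IsU v) : ‖emb v‖ = 1 := by
  rw [norm_one_iff]; simp only [emb_re, emb_imI, emb_imJ, emb_imK]; unfold IsU at h; linarith

lemma group_rel {G : Type*} [Group G] (a b c d : G) :
    (a * b) * a⁻¹ * (a * b)⁻¹ * (a⁻¹)⁻¹ * (((b * a) * (c * d) * (b * a)⁻¹) * (b * a * c)⁻¹ *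
      ((b * a) * (c * d) * (b * a)⁻¹)⁻¹ * ((b * a * c)⁻¹)⁻¹) = (a * b * c * d) * (d * c * b * a)⁻¹ := by
  group

lemma quat_rel {a b c d : Quaternion ℝ} (ha : ‖a‖ = 1) (hb : ‖b‖ = 1) (hc : ‖c‖ = 1) (hd : ‖d‖ = 1) :
    (a * b) * a⁻¹ * (a * b)⁻¹ * (a⁻¹)⁻¹ * (((b * a) * (c * d) * (b * a)⁻¹) * (b * a * c)⁻¹ *
      ((b * a) * (c * d) * (b * a)⁻¹)⁻¹ * ((b * a * c)⁻¹)⁻¹) = (a * b * c * d) * (d * c * b * a)⁻¹ := by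
  have := group_rel (Units.mk0 a (ne_zero_of_norm ha)) (Units.mk0 b (ne_zero_of_norm hb))
    (Units.mk0 c (ne_zero_of_norm hc)) (Units.mk0 d (ne_zero_of_norm hd))
  have := congrArg Units.val this
  simpa only [Units.val_mul, Units.val_inv_eq_inv_val, Units.val_mk0] using this

def wX (a b c d : Quaternion ℝ) : Quaternion ℝ × Quaternion ℝ × Quaternion ℝ × Quaternion ℝ :=
  (a * b, a⁻¹, (b * a) * (c * d) * (b * a)⁻¹, (b * a * c)⁻¹)

lemma memX_wX {a b c d : Quaternion ℝ} (ha : ‖a‖ = 1) (hb : ‖b‖ = 1) (hc : ‖c‖ = 1) (hd : ‖d‖ = 1)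
    (h : a * b * c * d = d * c * b * a) : memX (wX a b c d) := by
  refine ⟨by simp [wX, *], by simp [wX, *], by simp [wX, *], by simp [wX, *], ?_⟩
  have h2 := quat_rel ha hb hc hd
  rw [h, mul_inv_cancel₀] at h2
  · exact h2
  · apply ne_zero_of_norm; simp [*]

/-- inverse words -/
def wA (t : Quaternion ℝ × Quaternion ℝ × Quaternion ℝ × Quaternion ℝ) : Fin 4 → Quaternion ℝ :=
  ![star t.2.1, t.2.1 * t.1, star (t.2.1 * t.1 * star t.2.1) * star t.2.2.2,
    star (star (t.2.1 * t.1 * star t.2.1) * star t.2.2.2) *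
      (star (t.2.1 * t.1 * star t.2.1) * t.2.2.1 * (t.2.1 * t.1 * star t.2.1))]

lemma star_mul_self1 {q : Quaternion ℝ} (h : ‖q‖ = 1) : star q * q = 1 := by
  rw [← inv_eq_star h, inv_mul_cancel₀ (ne_zero_of_norm h)]
lemma self_mul_star1 {q : Quaternion ℝ} (h : ‖q‖ = 1) : q * star q = 1 := by
  rw [← inv_eq_star h, mul_inv_cancel₀ (ne_zero_of_norm h)]

lemma group_wA {G : Type*} [Group G] (a b c d : G) :
   a⁻¹ * (a * b) = b ∧ (b * a)⁻¹ * ((b * a * c)⁻¹)⁻¹ = c ∧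
   c⁻¹ * ((b * a)⁻¹ * ((b * a) * (c * d) * (b * a)⁻¹) * (b * a)) = d := by
  refine ⟨?_, ?_, ?_⟩ <;> group

lemma wA_wX {a b c d : Quaternion ℝ} (ha : ‖a‖ = 1) (hb : ‖b‖ = 1) (hc : ‖c‖ = 1) (hd : ‖d‖ = 1) :
    wA (wX a b c d) = ![a, b, c, d] := by
  have := group_wA (Units.mk0 a (ne_zero_of_norm ha)) (Units.mk0 b (ne_zero_of_norm hb))
    (Units.mk0 c (ne_zero_of_norm hc)) (Units.mk0 d (ne_zero_of_norm hd))
  obtain ⟨h2, h3, h4⟩ := this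
  have h2 := congrArg Units.val h2
  have h3 := congrArg Units.val h3
  have h4 := congrArg Units.val h4
  simp only [Units.val_mul, Units.val_inv_eq_inv_val, Units.val_mk0] at h2 h3 h4
  have e1 : star (a⁻¹) = a := by rw [← inv_eq_star (by simp [ha]), inv_inv]
  have e2 : star (b * a) = (b * a)⁻¹ := (inv_eq_star (by simp [ha, hb])).symm
  have e3 : star ((b * a * c)⁻¹) = ((b * a * c)⁻¹)⁻¹ := (inv_eq_star (by simp [ha, hb, hc])).symm
  have e4 : star c = c⁻¹ := (inv_eq_star hc).symm
  simp only [wA, wX, e1, h2, e2, e3, h3, e4, h4]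

lemma group_wX {G : Type*} [Group G] (R S P Q : G) :
    S⁻¹ * (S * R) = R ∧ (S⁻¹)⁻¹ = S ∧
    ((S * R) * S⁻¹) * (((S * R * S⁻¹)⁻¹ * Q⁻¹) * (((S * R * S⁻¹)⁻¹ * Q⁻¹)⁻¹ *
      ((S * R * S⁻¹)⁻¹ * P * (S * R * S⁻¹)))) * ((S * R) * S⁻¹)⁻¹ = P ∧
    ((S * R) * S⁻¹ * ((S * R * S⁻¹)⁻¹ * Q⁻¹))⁻¹ = Q := by
  refine ⟨?_, ?_, ?_, ?_⟩ <;> group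

lemma wX_wA (t : GenusTwoRepSpace) : wX (wA t.1 0) (wA t.1 1) (wA t.1 2) (wA t.1 3) = t.1 := by
  obtain ⟨⟨R, S, P, Q⟩, h1, h2, h3, h4, -⟩ := t
  simp only at h1 h2 h3 h4
  obtain ⟨g1, g2, g3, g4⟩ := group_wX (Units.mk0 R (ne_zero_of_norm h1)) (Units.mk0 S (ne_zero_of_norm h2))
    (Units.mk0 P (ne_zero_of_norm h3)) (Units.mk0 Q (ne_zero_of_norm h4))
  have g1 := congrArg Units.val g1
  have g2 := congrArg Units.val g2
  have g3 := congrArg Units.val g3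
  have g4 := congrArg Units.val g4
  simp only [Units.val_mul, Units.val_inv_eq_inv_val, Units.val_mk0] at g1 g2 g3 g4
  have e1 : star S = S⁻¹ := (inv_eq_star h2).symm
  have e2 : star (S * R * S⁻¹) = (S * R * S⁻¹)⁻¹ := (inv_eq_star (by simp [h1, h2])).symm
  have e3 : star Q = Q⁻¹ := (inv_eq_star h4).symm
  have e4 : star ((S * R * S⁻¹)⁻¹ * Q⁻¹) = ((S * R * S⁻¹)⁻¹ * Q⁻¹)⁻¹ :=
    (inv_eq_star (by simp [h1, h2, h4])).symm
  simp only [wX, wA, e1, e2, e3, e4, Matrix.cons_val]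
  rw [g1, g2, g3, g4]

lemma norm_wA (t : GenusTwoRepSpace) (i : Fin 4) : ‖wA t.1 i‖ = 1 := by
  obtain ⟨⟨R, S, P, Q⟩, h1, h2, h3, h4, -⟩ := t
  simp only at h1 h2 h3 h4
  fin_cases i <;> simp [wA, *]

lemma rel_wA (t : GenusTwoRepSpace) : wA t.1 0 * wA t.1 1 * wA t.1 2 * wA t.1 3 =
    wA t.1 3 * wA t.1 2 * wA t.1 1 * wA t.1 0 := by
  have h := quat_rel (norm_wA t 0) (norm_wA t 1) (norm_wA t 2) (norm_wA t 3)
  have h2 := t.2.2.2.2.2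
  rw [← wX_wA t] at h2
  simp only [wX] at h2
  rw [h2] at h
  exact (mul_inv_eq_one₀ (ne_zero_of_norm (by simp [norm_wA]))).1 h.symm

lemma emb_rel {v : Fin 4 → VV} (h : f0 v = 0) : emb (v 0) * emb (v 1) * emb (v 2) * emb (v 3) =
    emb (v 3) * emb (v 2) * emb (v 1) * emb (v 0) := by
  simp only [f0, Quaternion.imK_mul, Quaternion.re_mul, Quaternion.imI_mul, Quaternion.imJ_mul, emb_re, emb_imI, emb_imJ, emb_imK] at h
  ext <;> simp only [Quaternion.imK_mul, Quaternion.re_mul, Quaternion.imI_mul, Quaternion.imJ_mul, emb_re, emb_imI, emb_imJ, emb_imK]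
  · ring
  · ring
  · ring
  · linear_combination 2 * h

def toX (v : ZZ f0) : GenusTwoRepSpace :=
  ⟨wX (emb (v.1 0)) (emb (v.1 1)) (emb (v.1 2)) (emb (v.1 3)),
    memX_wX (norm_emb (v.2.1 0)) (norm_emb (v.2.1 1)) (norm_emb (v.2.1 2)) (norm_emb (v.2.1 3))
      (emb_rel v.2.2)⟩

def psi (v : ZZ f0) : ChiF2 := Quot.mk conjRel (toX v)

def qI : Quaternion ℝ := ⟨0, 1, 0, 0⟩
def qJ : Quaternion ℝ := ⟨0, 0, 1, 0⟩
def qK : Quaternion ℝ := ⟨0, 0, 0, 1⟩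
@[simp] lemma qI_re : qI.re = 0 := rfl
@[simp] lemma qI_imI : qI.imI = 1 := rfl
@[simp] lemma qI_imJ : qI.imJ = 0 := rfl
@[simp] lemma qI_imK : qI.imK = 0 := rfl
@[simp] lemma qJ_re : qJ.re = 0 := rfl
@[simp] lemma qJ_imI : qJ.imI = 0 := rfl
@[simp] lemma qJ_imJ : qJ.imJ = 1 := rfl
@[simp] lemma qJ_imK : qJ.imK = 0 := rfl
@[simp] lemma qK_re : qK.re = 0 := rfl
@[simp] lemma qK_imI : qK.imI = 0 := rfl
@[simp] lemma qK_imJ : qK.imJ = 0 := rfl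
@[simp] lemma qK_imK : qK.imK = 1 := rfl

lemma continuous_emb : Continuous emb := by
  have : emb = fun v => (v.1 : Quaternion ℝ) + v.2.re • qI + v.2.im • qJ := by
    funext v; ext <;> simp
  rw [this]
  have := Quaternion.continuous_coe
  have := Complex.continuous_re
  have := Complex.continuous_im
  fun_prop

lemma continuous_toX : Continuous toX := by
  refine Continuous.subtype_mk ?_ _
  have e : ∀ i, Continuous fun v : ZZ f0 => emb (v.1 i) := fun i =>
    continuous_emb.comp ((continuous_apply i).comp continuous_subtype_val)
  have n : ∀ i, ∀ v : ZZ f0, emb (v.1 i) ≠ 0 := fun i v => ne_zero_of_norm (norm_emb (v.2.1 i))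
  have e0 := e 0
  have e1 := e 1
  have e2 := e 2
  have e3 := e 3
  unfold wX
  refine Continuous.prodMk (by fun_prop) (Continuous.prodMk ?_ (Continuous.prodMk ?_ ?_))
  · exact e0.inv₀ (n 0)
  · exact Continuous.mul (by fun_prop) (Continuous.inv₀ (by fun_prop) fun v => mul_ne_zero (n 1 v) (n 0 v))
  · exact (Continuous.inv₀ (by fun_prop) fun v => mul_ne_zero (mul_ne_zero (n 1 v) (n 0 v)) (n 2 v))

lemma continuous_psi : Continuous psi := continuous_quot_mk.comp continuous_toX


lemma gram_complex {ι : Type*} (z w : ι → ℂ)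
    (h : ∀ i j, (z i).re * (z j).re + (z i).im * (z j).im = (w i).re * (w j).re + (w i).im * (w j).im) :
    ∃ u : ℂ, ‖u‖ = 1 ∧ ((∀ i, w i = u * z i) ∨ (∀ i, w i = u * starRingEnd ℂ (z i))) := by
  have hn : ∀ i, ‖z i‖ = ‖w i‖ := fun i => by
    have := h i i
    rw [← sq_eq_sq₀ (norm_nonneg _) (norm_nonneg _), ← Complex.normSq_eq_norm_sq, ← Complex.normSq_eq_norm_sq, Complex.normSq_apply, Complex.normSq_apply, this]
  by_cases hz : ∀ i, z i = 0
  · refine ⟨1, by simp, Or.inl fun i => ?_⟩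
    have := hn i
    rw [hz i, norm_zero] at this
    rw [hz i, norm_eq_zero.1 this.symm]; simp
  push Not at hz
  obtain ⟨k, hk⟩ := hz
  have hwk : w k ≠ 0 := by
    rw [← norm_ne_zero_iff, ← hn k]; exact norm_ne_zero_iff.2 hk
  have hwk' : starRingEnd ℂ (w k) ≠ 0 := by simpa using hwk
  set I : ι → ℝ := fun i => (z i).im * (z k).re - (z i).re * (z k).im with hI
  set I' : ι → ℝ := fun i => (w i).im * (w k).re - (w i).re * (w k).im with hI'
  have hp : ∀ i j, I i * I j = I' i * I' j := fun i j => by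
    have e1 : I i * I j = ((z k).re * (z k).re + (z k).im * (z k).im) * ((z i).re * (z j).re + (z i).im * (z j).im) - ((z i).re * (z k).re + (z i).im * (z k).im) * ((z j).re * (z k).re + (z j).im * (z k).im) := by
      simp only [hI]; ring
    have e2 : I' i * I' j = ((w k).re * (w k).re + (w k).im * (w k).im) * ((w i).re * (w j).re + (w i).im * (w j).im) - ((w i).re * (w k).re + (w i).im * (w k).im) * ((w j).re * (w k).re + (w j).im * (w k).im) := by
      simp only [hI']; ring
    rw [e1, e2, h, h, h, h]
  have hs : (∀ i, I' i = I i) ∨ (∀ i, I' i = - I i) := by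
    by_cases h0 : ∀ i, I i = 0
    · left; intro i
      have := hp i i
      rw [h0 i] at this ⊢
      nlinarith
    push Not at h0
    obtain ⟨l, hl⟩ := h0
    have h1 : (I' l - I l) * (I' l + I l) = 0 := by linarith [hp l l]
    rcases mul_eq_zero.1 h1 with h2 | h2
    · left; intro i
      have := hp l i
      have h3 : I' l = I l := by linarith
      rw [h3] at this
      exact (mul_left_cancel₀ hl this).symm
    · right; intro i
      have := hp l i
      have h3 : I' l = - I l := by linarith
      rw [h3] at this
      apply mul_left_cancel₀ hl; linarith
  rcases hs with hs | hs
  · refine ⟨starRingEnd ℂ (z k) / starRingEnd ℂ (w k), ?_, Or.inl fun i => ?_⟩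
    · simp [hn k, norm_ne_zero_iff.2 hwk]
    · have : w i * starRingEnd ℂ (w k) = z i * starRingEnd ℂ (z k) := by
        have e1 := h i k
        have e2 := hs i
        simp only [hI, hI'] at e2
        apply Complex.ext <;> simp <;> linarith
      field_simp
      linear_combination this
  · refine ⟨z k / starRingEnd ℂ (w k), ?_, Or.inr fun i => ?_⟩
    · simp [hn k, norm_ne_zero_iff.2 hwk]
    · have : w i * starRingEnd ℂ (w k) = starRingEnd ℂ (z i) * z k := by
        have e1 := h i k
        have e2 := hs i
        simp only [hI, hI'] at e2
        apply Complex.ext <;> simp <;> linarith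
      field_simp
      linear_combination this

lemma quat_re_comm (x y : Quaternion ℝ) : (x * y).re = (y * x).re := by
  simp only [Quaternion.re_mul]; ring

def gam (w : Fin 4 → Quaternion ℝ) : (Fin 4 → ℝ) × (Fin 4 → Fin 4 → ℝ) :=
  (fun i => (w i).re, fun i j => (w i * star (w j)).re)

lemma gam_conj {u : Quaternion ℝ} (hu : ‖u‖ = 1) (w : Fin 4 → Quaternion ℝ) :
    gam (fun i => u * w i * star u) = gam w := by
  have hs := star_mul_self1 hu
  unfold gam
  refine Prod.ext ?_ ?_
  · funext i
    show (u * w i * star u).re = _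
    rw [quat_re_comm, ← mul_assoc, hs, one_mul]
  · funext i j
    show (u * w i * star u * star (u * w j * star u)).re = (w i * star (w j)).re
    rw [star_mul, star_mul, star_star]
    have : u * w i * star u * (u * (star (w j) * star u)) = u * (w i * star (w j) * star u) := by
      have : u * w i * star u * (u * (star (w j) * star u)) = u * w i * (star u * u) * (star (w j) * star u) := by
        simp only [mul_assoc]
      rw [this, hs, mul_one]; simp only [mul_assoc]
    rw [this, quat_re_comm, mul_assoc, hs, mul_one]

lemma wA_conj {u : Quaternion ℝ} (hu : ‖u‖ = 1) (R S P Q : Quaternion ℝ) :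
    wA (u * R * star u, u * S * star u, u * P * star u, u * Q * star u) =
      fun i => u * wA (R, S, P, Q) i * star u := by
  have hs := star_mul_self1 hu
  have hm : ∀ x y, (u * x * star u) * (u * y * star u) = u * (x * y) * star u := fun x y => by
    have : (u * x * star u) * (u * y * star u) = u * x * (star u * u) * y * star u := by
      simp only [mul_assoc]
    rw [this, hs, mul_one]; simp only [mul_assoc]
  have ht : ∀ x, star (u * x * star u) = u * star x * star u := fun x => by
    simp only [star_mul, star_star, mul_assoc]
  funext i
  fin_cases i <;> simp only [wA, ht, hm] <;> simp [hm]

lemma wX_conj {u : Quaternion ℝ} (hu : ‖u‖ = 1) (a b c d : Quaternion ℝ) :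
    wX (u * a * u⁻¹) (u * b * u⁻¹) (u * c * u⁻¹) (u * d * u⁻¹) =
      (u * (wX a b c d).1 * u⁻¹, u * (wX a b c d).2.1 * u⁻¹, u * (wX a b c d).2.2.1 * u⁻¹, u * (wX a b c d).2.2.2 * u⁻¹) := by
  have h0 := ne_zero_of_norm hu
  have hs : u⁻¹ * u = 1 := inv_mul_cancel₀ h0
  have hm : ∀ x y, (u * x * u⁻¹) * (u * y * u⁻¹) = u * (x * y) * u⁻¹ := fun x y => by
    have : (u * x * u⁻¹) * (u * y * u⁻¹) = u * x * (u⁻¹ * u) * y * u⁻¹ := by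
      simp only [mul_assoc]
    rw [this, hs, mul_one]; simp only [mul_assoc]
  have ht : ∀ x, (u * x * u⁻¹)⁻¹ = u * x⁻¹ * u⁻¹ := fun x => by
    simp only [mul_inv_rev, inv_inv, mul_assoc]
  simp only [wX, hm, ht]

def Gam : ChiF2 → (Fin 4 → ℝ) × (Fin 4 → Fin 4 → ℝ) :=
  Quot.lift (fun t => gam (wA t.1)) (by
    rintro ⟨⟨R, S, P, Q⟩, hs⟩ ⟨⟨R', S', P', Q'⟩, ht⟩ ⟨u, hu, h1, h2, h3, h4⟩
    simp only at h1 h2 h3 h4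
    rw [inv_eq_star hu] at h1 h2 h3 h4
    simp only [h1, h2, h3, h4]
    rw [wA_conj hu, gam_conj hu])

lemma continuous_Gam : Continuous Gam := by
  apply continuous_quot_lift
  have hA : ∀ i, Continuous fun t : GenusTwoRepSpace => wA t.1 i := by
    intro i
    fin_cases i <;> simp only [wA] <;> simp <;> fun_prop
  unfold gam
  refine Continuous.prodMk ?_ ?_
  · exact continuous_pi fun i => Quaternion.continuous_re.comp (hA i)
  · exact continuous_pi fun i => continuous_pi fun j => Quaternion.continuous_re.comp
      ((hA i).mul (hA j).star)

lemma Gam_psi (v : ZZ f0) : Gam (psi v) = gam (fun i => emb (v.1 i)) := by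
  show gam (wA (wX _ _ _ _)) = _
  rw [wA_wX (norm_emb (v.2.1 0)) (norm_emb (v.2.1 1)) (norm_emb (v.2.1 2)) (norm_emb (v.2.1 3))]
  congr 1
  funext i; fin_cases i <;> rfl

/-- conjugation realising `rotv`. -/
lemma rot_conj (u : ℂ) (hu : ‖u‖ = 1) : ∃ q : Quaternion ℝ, ‖q‖ = 1 ∧ ∀ v, emb (rotv u v) = q * emb v * q⁻¹ := by
  obtain ⟨s, hs⟩ : ∃ s : ℂ, s ^ 2 = u := IsAlgClosed.exists_pow_nat_eq u (by norm_num)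
  have hs1 : s.re ^ 2 + s.im ^ 2 = 1 := by
    have : ‖s‖ ^ 2 = 1 := by rw [← norm_pow, hs, hu]
    rw [← Complex.normSq_eq_norm_sq, Complex.normSq_apply] at this; nlinarith
  obtain ⟨q, q0, q1, q2, q3⟩ : ∃ q : Quaternion ℝ, q.re = s.re ∧ q.imI = 0 ∧ q.imJ = 0 ∧ q.imK = s.im :=
    ⟨⟨s.re, 0, 0, s.im⟩, rfl, rfl, rfl, rfl⟩
  have hq : ‖q‖ = 1 := by rw [norm_one_iff, q0, q1, q2, q3]; linarith
  refine ⟨q, hq, fun v => ?_⟩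
  rw [eq_mul_inv_iff_mul_eq₀ (ne_zero_of_norm hq)]
  have e1 : u.re = s.re ^ 2 - s.im ^ 2 := by rw [← hs, pow_two]; simp; ring
  have e2 : u.im = 2 * s.re * s.im := by rw [← hs, pow_two]; simp; ring
  ext <;> simp only [Quaternion.imK_mul, Quaternion.re_mul, Quaternion.imI_mul, Quaternion.imJ_mul, emb_re, emb_imI, emb_imJ, emb_imK, q0, q1, q2, q3, rotv, Complex.mul_re, Complex.mul_im, e1, e2]
  · ring
  · linear_combination (s.re * v.2.re - s.im * v.2.im) * hs1
  · linear_combination (s.im * v.2.re + s.re * v.2.im) * hs1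
  · ring

lemma cj_conj : ∃ q : Quaternion ℝ, ‖q‖ = 1 ∧ ∀ v, emb (cjv v) = q * emb v * q⁻¹ := by
  have hq : ‖qI‖ = 1 := by rw [norm_one_iff]; simp
  refine ⟨qI, hq, fun v => ?_⟩
  rw [eq_mul_inv_iff_mul_eq₀ (ne_zero_of_norm hq)]
  ext <;> simp [cjv]

lemma conj_comp {q q' : Quaternion ℝ} (x : Quaternion ℝ) :
    q * (q' * x * q'⁻¹) * q⁻¹ = (q * q') * x * (q * q')⁻¹ := by
  simp only [mul_inv_rev, mul_assoc]

lemma psi_eq_of_conj (v v' : ZZ f0) (q : Quaternion ℝ) (hq : ‖q‖ = 1)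
    (h : ∀ i, emb (v'.1 i) = q * emb (v.1 i) * q⁻¹) : psi v = psi v' := by
  apply Quot.sound
  refine ⟨q, hq, ?_⟩
  have := wX_conj hq (emb (v.1 0)) (emb (v.1 1)) (emb (v.1 2)) (emb (v.1 3))
  simp only [toX, h, this]
  exact ⟨trivial, trivial, trivial, trivial⟩

def Orb (v v' : Fin 4 → VV) : Prop :=
  ∃ u : ℂ, ‖u‖ = 1 ∧ ((∀ i, v' i = rotv u (v i)) ∨ (∀ i, v' i = rotv u (cjv (v i))))

lemma psi_eq_of_orb (v v' : ZZ f0) (h : Orb v.1 v'.1) : psi v = psi v' := by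
  obtain ⟨u, hu, h | h⟩ := h
  · obtain ⟨q, hq, hq'⟩ := rot_conj u hu
    exact psi_eq_of_conj v v' q hq fun i => by rw [h, hq']
  · obtain ⟨q, hq, hq'⟩ := rot_conj u hu
    obtain ⟨p, hp, hp'⟩ := cj_conj
    exact psi_eq_of_conj v v' (q * p) (by simp [hq, hp]) fun i => by rw [h, hq', hp', conj_comp]

lemma orb_of_Gam (v v' : ZZ f0) (h : Gam (psi v) = Gam (psi v')) : Orb v.1 v'.1 := by
  rw [Gam_psi, Gam_psi] at h
  have h1 : ∀ i, (v.1 i).1 = (v'.1 i).1 := fun i => congrFun (congrArg Prod.fst h) i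
  have h2 : ∀ i j, (emb (v.1 i) * star (emb (v.1 j))).re = (emb (v'.1 i) * star (emb (v'.1 j))).re :=
    fun i j => congrFun (congrFun (congrArg Prod.snd h) i) j
  obtain ⟨u, hu, h3⟩ := gram_complex (fun i => (v.1 i).2) (fun i => (v'.1 i).2) (by
    intro i j
    have := h2 i j
    simp only [Quaternion.re_mul, Quaternion.re_star, Quaternion.imI_star, Quaternion.imJ_star, Quaternion.imK_star, emb_re, emb_imI, emb_imJ, emb_imK, h1] at this
    linarith)
  refine ⟨u, hu, ?_⟩
  rcases h3 with h3 | h3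
  · exact Or.inl fun i => Prod.ext (h1 i).symm (h3 i)
  · exact Or.inr fun i => Prod.ext (h1 i).symm (h3 i)

lemma psi_fib (v v' : ZZ f0) : psi v = psi v' ↔ Orb v.1 v'.1 :=
  ⟨fun h => orb_of_Gam _ _ (by rw [h]), psi_eq_of_orb _ _⟩


lemma perp2 (p q : Fin 3 → ℝ) : ∃ n : Fin 3 → ℝ, n ≠ 0 ∧ n 0 * p 0 + n 1 * p 1 + n 2 * p 2 = 0 ∧ n 0 * q 0 + n 1 * q 1 + n 2 * q 2 = 0 := by
  obtain ⟨n, hn, h⟩ := (Matrix.exists_mulVec_eq_zero_iff (M := Matrix.of ![p, q, 0])).2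
    (by simp [Matrix.det_fin_three])
  refine ⟨n, hn, ?_, ?_⟩
  · have := congrFun h 0
    simp [Matrix.mulVec, dotProduct, Fin.sum_univ_three] at this
    linarith
  · have := congrFun h 1
    simp [Matrix.mulVec, dotProduct, Fin.sum_univ_three] at this
    linarith

def dotq (n : Fin 3 → ℝ) (q : Quaternion ℝ) : ℝ := n 0 * q.imI + n 1 * q.imJ + n 2 * q.imK

lemma sq3 {x y z : ℝ} (h : x ^ 2 + y ^ 2 + z ^ 2 = 0) : x = 0 ∧ y = 0 ∧ z = 0 := by
  refine ⟨?_, ?_, ?_⟩ <;> nlinarith [sq_nonneg x, sq_nonneg y, sq_nonneg z]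

/-- parallel: `c × v = 0`, `v ≠ 0`, `n ⟂ v` gives `n ⟂ c`. -/
lemma par_perp {n1 n2 n3 c1 c2 c3 v1 v2 v3 : ℝ} (h1 : c2 * v3 - c3 * v2 = 0) (h2 : c3 * v1 - c1 * v3 = 0)
    (h3 : c1 * v2 - c2 * v1 = 0) (hv : v1 ^ 2 + v2 ^ 2 + v3 ^ 2 ≠ 0) (hn : n1 * v1 + n2 * v2 + n3 * v3 = 0) :
    n1 * c1 + n2 * c2 + n3 * c3 = 0 := by
  apply mul_left_cancel₀ hv
  linear_combination (c1 * v1 + c2 * v2 + c3 * v3) * hn + (-n3 * v2 + n2 * v3) * h1 + (n3 * v1 - n1 * v3) * h2 + (-n2 * v1 + n1 * v2) * h3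

lemma par_exists {c1 c2 c3 v1 v2 v3 : ℝ} (h1 : c2 * v3 - c3 * v2 = 0) (h2 : c3 * v1 - c1 * v3 = 0)
    (h3 : c1 * v2 - c2 * v1 = 0) : ∃ p : Fin 3 → ℝ, ∀ n : Fin 3 → ℝ, n 0 * p 0 + n 1 * p 1 + n 2 * p 2 = 0 → 
    n 0 * c1 + n 1 * c2 + n 2 * c3 = 0 ∧ n 0 * v1 + n 1 * v2 + n 2 * v3 = 0 := by
  by_cases hv : v1 ^ 2 + v2 ^ 2 + v3 ^ 2 = 0
  · obtain ⟨rfl, rfl, rfl⟩ := sq3 hv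
    exact ⟨![c1, c2, c3], fun n hn => ⟨by simpa using hn, by simp⟩⟩
  · refine ⟨![v1, v2, v3], fun n hn => ?_⟩
    simp at hn
    exact ⟨par_perp h1 h2 h3 hv hn, hn⟩

set_option maxHeartbeats 2000000 in
lemma planar_aux (a b c d : Quaternion ℝ) (hc : ‖c‖ = 1) (hd : ‖d‖ = 1)
    (h : a * b * c * d = d * c * b * a) :
    (a.imJ * b.imK - a.imK * b.imJ = 0 ∧ a.imK * b.imI - a.imI * b.imK = 0 ∧ a.imI * b.imJ - a.imJ * b.imI = 0) ∨
    ∃ n : Fin 3 → ℝ, n ≠ 0 ∧ dotq n a = 0 ∧ dotq n b = 0 ∧ dotq n c = 0 ∧ dotq n d = 0 := by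
  have hcd : ‖c * d‖ = 1 := by simp [hc, hd]
  rw [norm_one_iff] at hcd
  have e0 := congrArg (fun q => q.re) h
  have e1 := congrArg (fun q => q.imI) h
  have e2 := congrArg (fun q => q.imJ) h
  have e3 := congrArg (fun q => q.imK) h
  simp only [Quaternion.imK_mul, Quaternion.re_mul, Quaternion.imI_mul, Quaternion.imJ_mul] at e0 e1 e2 e3 hcd
  obtain ⟨a0, a1, a2, a3⟩ := a
  obtain ⟨b0, b1, b2, b3⟩ := b
  obtain ⟨c0, c1, c2, c3⟩ := c
  obtain ⟨d0, d1, d2, d3⟩ := d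
  simp only [dotq] at *
  clear h hc hd
  obtain ⟨n1, hn1⟩ : ∃ t, t = a2 * b3 - a3 * b2 := ⟨_, rfl⟩
  obtain ⟨n2, hn2⟩ : ∃ t, t = a3 * b1 - a1 * b3 := ⟨_, rfl⟩
  obtain ⟨n3, hn3⟩ : ∃ t, t = a1 * b2 - a2 * b1 := ⟨_, rfl⟩
  obtain ⟨m1, hm1⟩ : ∃ t, t = c2 * d3 - c3 * d2 := ⟨_, rfl⟩
  obtain ⟨m2, hm2⟩ : ∃ t, t = c3 * d1 - c1 * d3 := ⟨_, rfl⟩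
  obtain ⟨m3, hm3⟩ : ∃ t, t = c1 * d2 - c2 * d1 := ⟨_, rfl⟩
  obtain ⟨w0, hw0⟩ : ∃ t, t = a0 * b0 - a1 * b1 - a2 * b2 - a3 * b3 := ⟨_, rfl⟩
  obtain ⟨w1, hw1⟩ : ∃ t, t = a0 * b1 + b0 * a1 := ⟨_, rfl⟩
  obtain ⟨w2, hw2⟩ : ∃ t, t = a0 * b2 + b0 * a2 := ⟨_, rfl⟩
  obtain ⟨w3, hw3⟩ : ∃ t, t = a0 * b3 + b0 * a3 := ⟨_, rfl⟩
  obtain ⟨v0, hv0⟩ : ∃ t, t = c0 * d0 - c1 * d1 - c2 * d2 - c3 * d3 := ⟨_, rfl⟩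
  obtain ⟨v1, hv1⟩ : ∃ t, t = c0 * d1 + d0 * c1 := ⟨_, rfl⟩
  obtain ⟨v2, hv2⟩ : ∃ t, t = c0 * d2 + d0 * c2 := ⟨_, rfl⟩
  obtain ⟨v3, hv3⟩ : ∃ t, t = c0 * d3 + d0 * c3 := ⟨_, rfl⟩
  rw [← hn1, ← hn2, ← hn3]
  have f0 : w1 * m1 + w2 * m2 + w3 * m3 + v1 * n1 + v2 * n2 + v3 * n3 = 0 := by
    subst_vars; linear_combination (-1/2) * e0
  have f1 : w2 * v3 - w3 * v2 + w0 * m1 + v0 * n1 + (n2 * m3 - n3 * m2) = 0 := by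
    subst_vars; linear_combination (1/2) * e1
  have f2 : w3 * v1 - w1 * v3 + w0 * m2 + v0 * n2 + (n3 * m1 - n1 * m3) = 0 := by
    subst_vars; linear_combination (1/2) * e2
  have f3 : w1 * v2 - w2 * v1 + w0 * m3 + v0 * n3 + (n1 * m2 - n2 * m1) = 0 := by
    subst_vars; linear_combination (1/2) * e3
  have g1 : w1 * n1 + w2 * n2 + w3 * n3 = 0 := by subst_vars; ring
  have g2 : v1 * m1 + v2 * m2 + v3 * m3 = 0 := by subst_vars; ring
  have g3 : n1 * a1 + n2 * a2 + n3 * a3 = 0 := by subst_vars; ring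
  have g4 : n1 * b1 + n2 * b2 + n3 * b3 = 0 := by subst_vars; ring
  have g5 : m1 * c1 + m2 * c2 + m3 * c3 = 0 := by subst_vars; ring
  have g6 : m1 * d1 + m2 * d2 + m3 * d3 = 0 := by subst_vars; ring
  have k0 : (w1 * m1 + w2 * m2 + w3 * m3) ^ 2 + ((n2 * m3 - n3 * m2) ^ 2 + (n3 * m1 - n1 * m3) ^ 2 + (n1 * m2 - n2 * m1) ^ 2) = 0 := by
    linear_combination (n2 * m3 - n3 * m2) * f1 + (n3 * m1 - n1 * m3) * f2 + (n1 * m2 - n2 * m1) * f3 - g1 * (v1 * m1 + v2 * m2 + v3 * m3) + (w1 * m1 + w2 * m2 + w3 * m3) * f0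
  have kk : (n2 * m3 - n3 * m2) ^ 2 + (n3 * m1 - n1 * m3) ^ 2 + (n1 * m2 - n2 * m1) ^ 2 = 0 := by
    have z1 : 0 ≤ (w1 * m1 + w2 * m2 + w3 * m3) ^ 2 := sq_nonneg _
    have z2 : 0 ≤ (n2 * m3 - n3 * m2) ^ 2 + (n3 * m1 - n1 * m3) ^ 2 + (n1 * m2 - n2 * m1) ^ 2 := by positivity
    exact le_antisymm (by linarith only [z1, k0]) z2
  have k4 : w1 * m1 + w2 * m2 + w3 * m3 = 0 := by
    rw [kk, add_zero] at k0; exact pow_eq_zero_iff two_ne_zero |>.1 k0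
  obtain ⟨k1, k2, k3⟩ := sq3 kk
  by_cases hn : n1 ^ 2 + n2 ^ 2 + n3 ^ 2 = 0
  · exact Or.inl (sq3 hn)
  right
  refine ⟨![n1, n2, n3], ?_, ?_⟩
  · intro hh
    have i1 := congrFun hh 0
    have i2 := congrFun hh 1
    have i3 := congrFun hh 2
    simp at i1 i2 i3
    exact hn (by rw [i1, i2, i3]; ring)
  simp only [Matrix.cons_val]
  refine ⟨g3, g4, ?_⟩
  by_cases hm : m1 ^ 2 + m2 ^ 2 + m3 ^ 2 = 0
  · obtain ⟨i1, i2, i3⟩ := sq3 hm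
    have q1 : v1 * n1 + v2 * n2 + v3 * n3 = 0 := by linarith
    have hv : v1 ^ 2 + v2 ^ 2 + v3 ^ 2 ≠ 0 := by
      intro hv
      obtain ⟨j1, j2, j3⟩ := sq3 hv
      have hu : v0 ^ 2 + (v1 + m1) ^ 2 + (v2 + m2) ^ 2 + (v3 + m3) ^ 2 = 1 := by
        rw [← hcd]; subst_vars; ring
      have hv0 : v0 ≠ 0 := by intro h; rw [h, j1, j2, j3, i1, i2, i3] at hu; norm_num at hu
      have l1 : n1 = 0 := mul_left_cancel₀ hv0 (by linear_combination f1 - w2 * j3 + w3 * j2 - w0 * i1 - k1)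
      have l2 : n2 = 0 := mul_left_cancel₀ hv0 (by linear_combination f2 - w3 * j1 + w1 * j3 - w0 * i2 - k2)
      have l3 : n3 = 0 := mul_left_cancel₀ hv0 (by linear_combination f3 - w1 * j2 + w2 * j1 - w0 * i3 - k3)
      exact hn (by rw [l1, l2, l3]; ring)
    rw [i1] at hm1; rw [i2] at hm2; rw [i3] at hm3
    constructor
    · refine par_perp (v1 := v1) (v2 := v2) (v3 := v3) ?_ ?_ ?_ hv (by linarith)
      · rw [hv2, hv3]; linear_combination -c0 * hm1
      · rw [hv1, hv3]; linear_combination -c0 * hm2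
      · rw [hv1, hv2]; linear_combination -c0 * hm3
    · refine par_perp (v1 := v1) (v2 := v2) (v3 := v3) ?_ ?_ ?_ hv (by linarith)
      · rw [hv2, hv3]; linear_combination d0 * hm1
      · rw [hv1, hv3]; linear_combination d0 * hm2
      · rw [hv1, hv2]; linear_combination d0 * hm3
  · constructor
    · have := par_perp (c1 := n1) (c2 := n2) (c3 := n3) (n1 := c1) (n2 := c2) (n3 := c3) k1 k2 k3 hm (by linarith)
      linarith
    · have := par_perp (c1 := n1) (c2 := n2) (c3 := n3) (n1 := d1) (n2 := d2) (n3 := d3) k1 k2 k3 hm (by linarith)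
      linarith

lemma planar (a b c d : Quaternion ℝ) (ha : ‖a‖ = 1) (hb : ‖b‖ = 1) (hc : ‖c‖ = 1) (hd : ‖d‖ = 1)
    (h : a * b * c * d = d * c * b * a) :
    ∃ n : Fin 3 → ℝ, n ≠ 0 ∧ dotq n a = 0 ∧ dotq n b = 0 ∧ dotq n c = 0 ∧ dotq n d = 0 := by
  rcases planar_aux a b c d hc hd h with ⟨h1, h2, h3⟩ | h1
  swap
  · exact h1
  rcases planar_aux d c b a hb ha h.symm with ⟨h4, h5, h6⟩ | ⟨n, hn, h1, h2, h3, h4⟩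
  swap
  · exact ⟨n, hn, h4, h3, h2, h1⟩
  obtain ⟨p, hp⟩ := par_exists h1 h2 h3
  obtain ⟨q, hq⟩ := par_exists h4 h5 h6
  obtain ⟨n, hn, np, nq⟩ := perp2 p q
  exact ⟨n, hn, (hp n np).1, (hp n np).2, (hq n nq).2, (hq n nq).1⟩

/-- rotate `n` to the `k` axis. -/
lemma rot_to_k (n : Fin 3 → ℝ) (hn : n ≠ 0) : ∃ u : Quaternion ℝ, ‖u‖ = 1 ∧
    ∀ q, dotq n q = 0 → (u * q * u⁻¹).imK = 0 := by
  wlog h : 0 ≤ n 2 with H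
  · obtain ⟨u, hu, h2⟩ := H (-n) (by simpa using hn) (by simp; linarith)
    exact ⟨u, hu, fun q hq => h2 q (by simp [dotq] at hq ⊢; linarith)⟩
  obtain ⟨r, hr0, hr⟩ : ∃ r : ℝ, 0 < r ∧ r ^ 2 = n 0 ^ 2 + n 1 ^ 2 + n 2 ^ 2 := by
    have : 0 < n 0 ^ 2 + n 1 ^ 2 + n 2 ^ 2 := by
      rcases lt_or_eq_of_le (show 0 ≤ n 0 ^ 2 + n 1 ^ 2 + n 2 ^ 2 by positivity) with h | h
      · exact h
      · exfalso; apply hn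
        obtain ⟨h1, h2, h3⟩ := sq3 h.symm
        funext i; fin_cases i <;> simp [h1, h2, h3]
    exact ⟨_, Real.sqrt_pos.2 this, Real.sq_sqrt this.le⟩
  -- p = r - k n
  obtain ⟨p, p0, p1, p2, p3⟩ : ∃ p : Quaternion ℝ, p.re = r + n 2 ∧ p.imI = n 1 ∧ p.imJ = - n 0 ∧ p.imK = 0 :=
    ⟨⟨r + n 2, n 1, - n 0, 0⟩, rfl, rfl, rfl, rfl⟩
  have hp : p ≠ 0 := by
    intro h0
    have : p.re = 0 := by rw [h0]; rfl
    linarith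
  have hpn : ‖p‖ ≠ 0 := by simpa using hp
  refine ⟨(‖p‖⁻¹ : ℝ) • p, by rw [norm_smul]; simp [hpn], fun q hq => ?_⟩
  have : ((‖p‖⁻¹ : ℝ) • p) * q * ((‖p‖⁻¹ : ℝ) • p)⁻¹ = p * q * p⁻¹ := by
    have e : ((‖p‖⁻¹ : ℝ) • p)⁻¹ = ‖p‖ • p⁻¹ := by
      apply inv_eq_of_mul_eq_one_right; simp [smul_smul, hpn, hp]
    rw [e]; simp [smul_smul, hpn]
  rw [this, Quaternion.inv_def]
  simp only [mul_smul_comm, Quaternion.imK_smul, smul_eq_mul]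
  apply mul_eq_zero_of_right
  simp only [Quaternion.imK_mul, Quaternion.re_mul, Quaternion.imI_mul, Quaternion.imJ_mul, Quaternion.re_star, Quaternion.imI_star, Quaternion.imJ_star, Quaternion.imK_star, p0, p1, p2, p3]
  simp only [dotq] at hq
  linear_combination 2 * (r + n 2) * hq + q.imK * hr

lemma psi_surj : Function.Surjective psi := by
  intro x
  obtain ⟨t, rfl⟩ := Quot.exists_rep x
  have hn := norm_wA t
  have hr := rel_wA t
  obtain ⟨n, n0, ha, hb, hc, hd⟩ := planar _ _ _ _ (hn 0) (hn 1) (hn 2) (hn 3) hr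
  obtain ⟨u, hu, hk⟩ := rot_to_k n n0
  have u0 := ne_zero_of_norm hu
  have hk' : ∀ i, (u * wA t.1 i * u⁻¹).imK = 0 := by
    intro i; apply hk; fin_cases i <;> assumption
  let v : Fin 4 → VV := fun i => ((u * wA t.1 i * u⁻¹).re, ⟨(u * wA t.1 i * u⁻¹).imI, (u * wA t.1 i * u⁻¹).imJ⟩)
  have hv : ∀ i, emb (v i) = u * wA t.1 i * u⁻¹ := fun i => by
    ext
    · rfl
    · rfl
    · rfl
    · exact (hk' i).symm
  have hU : ∀ i, IsU (v i) := fun i => by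
    have : ‖emb (v i)‖ = 1 := by rw [hv]; simp [hu, hn]
    rw [norm_one_iff] at this
    simp at this
    unfold IsU; linarith
  have hf : f0 v = 0 := by
    have h1 : emb (v 0) * emb (v 1) * emb (v 2) * emb (v 3) = emb (v 3) * emb (v 2) * emb (v 1) * emb (v 0) := by
      simp only [hv]
      have hs : u⁻¹ * u = 1 := inv_mul_cancel₀ u0
      have hm : ∀ x y, (u * x * u⁻¹) * (u * y * u⁻¹) = u * (x * y) * u⁻¹ := fun x y => by
        have : (u * x * u⁻¹) * (u * y * u⁻¹) = u * x * (u⁻¹ * u) * y * u⁻¹ := by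
          simp only [mul_assoc]
        rw [this, hs, mul_one]; simp only [mul_assoc]
      simp only [hm, hr]
    have h2 := congrArg (fun q => q.imK) h1
    unfold f0
    simp only [Quaternion.imK_mul, Quaternion.re_mul, Quaternion.imI_mul, Quaternion.imJ_mul, emb_re, emb_imI, emb_imJ, emb_imK] at h2 ⊢
    linarith
  refine ⟨⟨v, hU, hf⟩, ?_⟩
  symm
  apply Quot.sound
  refine ⟨u, hu, ?_⟩
  have e := wX_conj hu (wA t.1 0) (wA t.1 1) (wA t.1 2) (wA t.1 3)
  simp only [toX, hv, e, wX_wA]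
  exact ⟨trivial, trivial, trivial, trivial⟩


structure Good (f : (Fin 4 → VV) → ℝ) : Prop where
  cont : Continuous f
  add : ∀ v i x y, f (Function.update v i (x + y)) = f (Function.update v i x) + f (Function.update v i y)
  smul : ∀ v i (t : ℝ) x, f (Function.update v i (t • x)) = t * f (Function.update v i x)
  rot : ∀ u v, ‖u‖ = 1 → f (fun i => rotv u (v i)) = f v
  cj : ∀ v, f (fun i => cjv (v i)) = - f v

def crs (x y : ℂ) : ℝ := x.re * y.im - x.im * y.re
def dtt (x y : ℂ) : ℝ := x.re * y.re + x.im * y.im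

lemma f0_eq (v : Fin 4 → VV) : f0 v = ((v 0).1 * (v 1).1 - dtt (v 0).2 (v 1).2) * crs (v 2).2 (v 3).2 +
    ((v 2).1 * (v 3).1 - dtt (v 2).2 (v 3).2) * crs (v 0).2 (v 1).2 +
    (v 0).1 * (v 2).1 * crs (v 1).2 (v 3).2 + (v 0).1 * (v 3).1 * crs (v 1).2 (v 2).2 +
    (v 1).1 * (v 2).1 * crs (v 0).2 (v 3).2 + (v 1).1 * (v 3).1 * crs (v 0).2 (v 2).2 := by
  simp only [f0, crs, dtt, Quaternion.imK_mul, Quaternion.re_mul, Quaternion.imI_mul, Quaternion.imJ_mul, emb_re, emb_imI, emb_imJ, emb_imK]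
  ring

lemma normsq_one {u : ℂ} (hu : ‖u‖ = 1) : u.re ^ 2 + u.im ^ 2 = 1 := by
  have : ‖u‖ ^ 2 = 1 := by rw [hu]; norm_num
  rw [← Complex.normSq_eq_norm_sq, Complex.normSq_apply] at this; nlinarith

lemma crs_rot {u : ℂ} (hu : ‖u‖ = 1) (x y : ℂ) : crs (u * x) (u * y) = crs x y := by
  have := normsq_one hu
  simp only [crs, Complex.mul_re, Complex.mul_im]
  linear_combination (x.re * y.im - x.im * y.re) * this
lemma dtt_rot {u : ℂ} (hu : ‖u‖ = 1) (x y : ℂ) : dtt (u * x) (u * y) = dtt x y := by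
  have := normsq_one hu
  simp only [dtt, Complex.mul_re, Complex.mul_im]
  linear_combination (x.re * y.re + x.im * y.im) * this
lemma crs_cj (x y : ℂ) : crs (starRingEnd ℂ x) (starRingEnd ℂ y) = - crs x y := by
  simp only [crs, Complex.conj_re, Complex.conj_im]; ring
lemma dtt_cj (x y : ℂ) : dtt (starRingEnd ℂ x) (starRingEnd ℂ y) = dtt x y := by
  simp only [dtt, Complex.conj_re, Complex.conj_im]; ring

lemma good_f0 : Good f0 where
  cont := by
    have := fun i : Fin 4 => continuous_emb.comp (continuous_apply (A := fun _ => VV) i)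
    unfold f0
    apply Quaternion.continuous_imK.comp
    exact (((this 0).mul (this 1)).mul (this 2)).mul (this 3)
  add := by
    intro v i x y
    fin_cases i <;> simp [f0_eq, crs, dtt, Function.update] <;> ring
  smul := by
    intro v i t x
    fin_cases i <;> simp [f0_eq, crs, dtt, Function.update] <;> ring
  rot := by
    intro u v hu
    simp only [f0_eq, rotv, crs_rot hu, dtt_rot hu]
  cj := by
    intro v
    simp only [f0_eq, cjv, crs_cj, dtt_cj]; ring

lemma isU_rot {u : ℂ} (hu : ‖u‖ = 1) {v : VV} (h : IsU v) : IsU (rotv u v) := by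
  have := normsq_one hu
  simp only [IsU, rotv, Complex.mul_re, Complex.mul_im] at *
  linear_combination h + (v.2.re ^ 2 + v.2.im ^ 2) * this
lemma isU_cj {v : VV} (h : IsU v) : IsU (cjv v) := by
  simp only [IsU, cjv, Complex.conj_re, Complex.conj_im] at *
  linear_combination h

def rotZ {f : (Fin 4 → VV) → ℝ} (hf : Good f) (u : ℂ) (hu : ‖u‖ = 1) (v : ZZ f) : ZZ f :=
  ⟨fun i => rotv u (v.1 i), fun i => isU_rot hu (v.2.1 i), by rw [hf.rot u v.1 hu]; exact v.2.2⟩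
def cjZ {f : (Fin 4 → VV) → ℝ} (hf : Good f) (v : ZZ f) : ZZ f :=
  ⟨fun i => cjv (v.1 i), fun i => isU_cj (v.2.1 i), by rw [hf.cj v.1, v.2.2, neg_zero]⟩

lemma continuous_rotv (u : ℂ) : Continuous (rotv u) := by unfold rotv; fun_prop
lemma continuous_cjv : Continuous cjv := by
  unfold cjv; exact continuous_fst.prodMk (Complex.continuous_conj.comp continuous_snd)

lemma continuous_rotZ {f : (Fin 4 → VV) → ℝ} (hf : Good f) (u : ℂ) (hu : ‖u‖ = 1) : Continuous (rotZ hf u hu) :=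
  Continuous.subtype_mk (continuous_pi fun i => (continuous_rotv u).comp ((continuous_apply i).comp continuous_subtype_val)) _
lemma continuous_cjZ {f : (Fin 4 → VV) → ℝ} (hf : Good f) : Continuous (cjZ hf) :=
  Continuous.subtype_mk (continuous_pi fun i => continuous_cjv.comp ((continuous_apply i).comp continuous_subtype_val)) _

lemma rotv_rotv (u w : ℂ) (v : VV) : rotv u (rotv w v) = rotv (u * w) v := by simp [rotv, mul_assoc]
lemma rotv_one (v : VV) : rotv 1 v = v := by simp [rotv]
lemma cjv_cjv (v : VV) : cjv (cjv v) = v := by simp [cjv]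
lemma cjv_rotv (u : ℂ) (v : VV) : cjv (rotv u v) = rotv (starRingEnd ℂ u) (cjv v) := by simp [cjv, rotv]

lemma conj_mul_self1 {u : ℂ} (hu : ‖u‖ = 1) : starRingEnd ℂ u * u = 1 := by
  rw [mul_comm, Complex.mul_conj, Complex.normSq_eq_norm_sq, hu]; simp

lemma Orb.symm {v v' : Fin 4 → VV} (h : Orb v v') : Orb v' v := by
  obtain ⟨u, hu, h | h⟩ := h
  · refine ⟨starRingEnd ℂ u, by simpa using hu, Or.inl fun i => ?_⟩
    rw [h, rotv_rotv, conj_mul_self1 hu, rotv_one]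
  · refine ⟨u, hu, Or.inr fun i => ?_⟩
    rw [h, cjv_rotv, rotv_rotv, mul_comm, conj_mul_self1 hu, cjv_cjv, rotv_one]

instance compactZZ : CompactSpace (ZZ f0) := by
  refine (isCompact_iff_compactSpace (s := {v : Fin 4 → VV | (∀ i, IsU (v i)) ∧ f0 v = 0})).1 ?_
  apply Metric.isCompact_of_isClosed_isBounded
  · refine IsClosed.inter ?_ (isClosed_eq good_f0.cont continuous_const)
    show IsClosed {v : Fin 4 → VV | ∀ i, IsU (v i)}
    simp only [Set.ofPred_forall]
    refine isClosed_iInter fun i => ?_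
    have := Complex.continuous_re
    have := Complex.continuous_im
    exact isClosed_eq (by fun_prop) continuous_const
  · refine (Metric.isBounded_closedBall (x := (0 : Fin 4 → VV)) (r := 1)).subset ?_
    rintro v ⟨hv, -⟩
    rw [mem_closedBall_zero_iff, pi_norm_le_iff_of_nonneg (by norm_num)]
    intro i
    have h := hv i
    unfold IsU at h
    rw [Prod.norm_def, max_le_iff]
    constructor
    · rw [Real.norm_eq_abs, abs_le]; constructor <;> nlinarith [sq_nonneg (v i).1, sq_nonneg (v i).2.re, sq_nonneg (v i).2.im]
    · rw [← sq_le_one_iff₀ (norm_nonneg _), ← Complex.normSq_eq_norm_sq, Complex.normSq_apply]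
      nlinarith [sq_nonneg (v i).1]

instance compactChi : CompactSpace ChiF2 := psi_surj.compactSpace continuous_psi

lemma Gam_inj : Function.Injective Gam := by
  intro x y h
  obtain ⟨v, rfl⟩ := psi_surj x
  obtain ⟨v', rfl⟩ := psi_surj y
  exact psi_eq_of_orb _ _ (orb_of_Gam _ _ h)

instance t2Chi : T2Space ChiF2 := T2Space.of_injective_continuous Gam_inj continuous_Gam

lemma isOpenMap_psi : IsOpenMap psi := by
  have hq : IsQuotientMap psi := (continuous_psi.isClosedMap).isQuotientMap continuous_psi psi_surj
  intro W hW
  rw [← hq.isOpen_preimage]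
  have : psi ⁻¹' (psi '' W) = ⋃ u : {u : ℂ // ‖u‖ = 1}, (rotZ good_f0 u.1 u.2 ⁻¹' W ∪
      (fun v => rotZ good_f0 u.1 u.2 (cjZ good_f0 v)) ⁻¹' W) := by
    ext v'
    simp only [Set.mem_preimage, Set.mem_image, Set.mem_iUnion, Set.mem_union]
    constructor
    · rintro ⟨v, hv, h⟩
      obtain ⟨u, hu, h | h⟩ := ((psi_fib _ _).1 h).symm
      · refine ⟨⟨u, hu⟩, Or.inl ?_⟩
        convert hv using 1
        exact Subtype.ext (funext fun i => (h i).symm)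
      · refine ⟨⟨u, hu⟩, Or.inr ?_⟩
        convert hv using 1
        exact Subtype.ext (funext fun i => (h i).symm)
    · rintro ⟨⟨u, hu⟩, h | h⟩
      · exact ⟨_, h, ((psi_fib _ _).2 ⟨u, hu, Or.inl fun i => rfl⟩).symm⟩
      · exact ⟨_, h, ((psi_fib _ _).2 ⟨u, hu, Or.inr fun i => rfl⟩).symm⟩
  rw [this]
  refine isOpen_iUnion fun u => IsOpen.union ?_ ?_
  · exact hW.preimage (continuous_rotZ _ _ _)
  · exact hW.preimage ((continuous_rotZ _ _ _).comp (continuous_cjZ _))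

structure Setup {χ : Type} [TopologicalSpace χ] (f : (Fin 4 → VV) → ℝ) (ψ : ZZ f → χ) : Prop where
  good : Good f
  cont : Continuous ψ
  op : IsOpenMap ψ
  fib : ∀ v v', ψ v = ψ v' ↔ Orb v.1 v'.1

lemma setup0 : Setup f0 psi := ⟨good_f0, continuous_psi, isOpenMap_psi, psi_fib⟩

lemma Setup.transport {χ : Type} [TopologicalSpace χ] {f f' : (Fin 4 → VV) → ℝ} {ψ : ZZ f → χ} (S : Setup f ψ)
    (hf' : Good f') (h : ZZ f' ≃ₜ ZZ f) (ho : ∀ v v', Orb (h v).1 (h v').1 ↔ Orb v.1 v'.1) :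
    Setup f' (ψ ∘ h) :=
  ⟨hf', S.cont.comp h.continuous, S.op.comp h.isOpenMap, fun v v' => by
    rw [← ho]; exact S.fib _ _⟩

/-- permutations -/
lemma Setup.perm {χ : Type} [TopologicalSpace χ] {f : (Fin 4 → VV) → ℝ} {ψ : ZZ f → χ} (S : Setup f ψ) (σ : Equiv.Perm (Fin 4)) :
    ∃ ψ' : ZZ (fun v => f (v ∘ σ)) → χ, Setup (fun v => f (v ∘ σ)) ψ' ∧
      ∀ v : ZZ f, ∀ v' : ZZ (fun v => f (v ∘ σ)), v'.1 ∘ σ = v.1 → ψ' v' = ψ v := by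
  have hG : Good (fun v => f (v ∘ σ)) := {
    cont := S.good.cont.comp (by fun_prop)
    add := fun v i x y => by
      simp only [Function.update_comp_equiv]; exact S.good.add _ _ _ _
    smul := fun v i x y => by
      simp only [Function.update_comp_equiv]; exact S.good.smul _ _ _ _
    rot := fun u v hu => S.good.rot u (v ∘ σ) hu
    cj := fun v => S.good.cj (v ∘ σ) }
  let h : ZZ (fun v => f (v ∘ σ)) ≃ₜ ZZ f := {
    toFun := fun v => ⟨v.1 ∘ σ, fun i => v.2.1 _, v.2.2⟩
    invFun := fun v => ⟨v.1 ∘ σ.symm, fun i => v.2.1 _, by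
      have := v.2.2
      simpa [Function.comp_assoc] using this⟩
    left_inv := fun v => by ext1; simp [Function.comp_assoc]
    right_inv := fun v => by ext1; simp [Function.comp_assoc]
    continuous_toFun := by
      refine Continuous.subtype_mk ?_ _
      refine continuous_pi fun i => ?_
      exact (continuous_apply (σ i)).comp continuous_subtype_val
    continuous_invFun := by
      refine Continuous.subtype_mk ?_ _
      refine continuous_pi fun i => ?_
      exact (continuous_apply (σ.symm i)).comp continuous_subtype_val }
  refine ⟨ψ ∘ h, S.transport hG h ?_, ?_⟩
  · intro v v'
    have aux : ∀ g : Fin 4 → Prop, (∀ i, g (σ i)) ↔ ∀ i, g i := fun g => σ.forall_congr_right (q := g)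
    show (∃ u : ℂ, ‖u‖ = 1 ∧ ((∀ i, v'.1 (σ i) = rotv u (v.1 (σ i))) ∨ (∀ i, v'.1 (σ i) = rotv u (cjv (v.1 (σ i)))))) ↔ _
    unfold Orb
    refine exists_congr fun u => and_congr_right fun _ => or_congr (aux fun i => v'.1 i = rotv u (v.1 i)) (aux fun i => v'.1 i = rotv u (cjv (v.1 i)))
  · intro v v' hv
    show ψ (h v') = ψ v
    congr 1
    exact Subtype.ext hv

lemma isU_sgn {e : ℝ} (he : e * e = 1) {v : VV} (h : IsU v) : IsU (e • v) := by
  simp only [IsU, Prod.smul_fst, Prod.smul_snd, Complex.smul_re, Complex.smul_im, smul_eq_mul] at *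
  linear_combination h + (v.1 ^ 2 + v.2.re ^ 2 + v.2.im ^ 2) * he

lemma f0_sgn (e : Fin 4 → ℝ) (v : Fin 4 → VV) : f0 (fun i => e i • v i) = (e 0 * e 1 * e 2 * e 3) * f0 v := by
  simp [f0_eq, crs, dtt]; ring

lemma rotv_smul (u : ℂ) (e : ℝ) (v : VV) : rotv u (e • v) = e • rotv u v := by
  simp [rotv, mul_left_comm]
lemma cjv_smul (e : ℝ) (v : VV) : cjv (e • v) = e • cjv v := by
  simp [cjv]

lemma Orb.sgn (e : Fin 4 → ℝ) {v v' : Fin 4 → VV} (h : Orb v v') : Orb (fun i => e i • v i) (fun i => e i • v' i) := by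
  obtain ⟨u, hu, h | h⟩ := h
  · exact ⟨u, hu, Or.inl fun i => by simp only [h, rotv_smul]⟩
  · exact ⟨u, hu, Or.inr fun i => by simp only [h, rotv_smul, cjv_smul]⟩

lemma setup_sgn (e : Fin 4 → ℝ) (he : ∀ i, e i * e i = 1) : ∃ ψ' : ZZ f0 → ChiF2, Setup f0 ψ' ∧
    ∀ v v' : ZZ f0, (∀ i, v.1 i = e i • v'.1 i) → ψ' v' = psi v := by
  let g : ZZ f0 → ZZ f0 := fun v => ⟨fun i => e i • v.1 i, fun i => isU_sgn (he i) (v.2.1 i), by rw [f0_sgn, v.2.2, mul_zero]⟩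
  have gg : ∀ v, g (g v) = v := fun v => Subtype.ext (funext fun i => by
    show e i • e i • v.1 i = v.1 i
    rw [smul_smul, he, one_smul])
  have gc : Continuous g := Continuous.subtype_mk (continuous_pi fun i => ((continuous_apply i).comp continuous_subtype_val).const_smul (e i)) _
  let h : ZZ f0 ≃ₜ ZZ f0 := ⟨⟨g, g, gg, gg⟩, gc, gc⟩
  refine ⟨psi ∘ h, setup0.transport good_f0 h ?_, ?_⟩
  · intro v v'
    constructor
    · intro hh
      have := hh.sgn e
      have e1 := congrArg Subtype.val (gg v)
      have e2 := congrArg Subtype.val (gg v')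
      rw [← e1, ← e2]; exact this
    · intro hh; exact hh.sgn e
  · intro v v' hv
    show psi (g v') = psi v
    congr 1
    exact Subtype.ext (funext fun i => (hv i).symm)


abbrev C4 : Type := (ℂ × ℂ) × (ℂ × ℂ)
def nq (z : ℂ) : ℝ := Complex.normSq z
lemma nq_nonneg (z : ℂ) : 0 ≤ nq z := Complex.normSq_nonneg z
lemma nq_mul (z w : ℂ) : nq (z * w) = nq z * nq w := Complex.normSq_mul z w
lemma nq_zero {z : ℂ} : nq z = 0 ↔ z = 0 := Complex.normSq_eq_zero
abbrev KK : Type := {o : C4 // nq o.1.1 + nq o.1.2 = nq o.2.1 + nq o.2.2}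

def sm (o : C4) : ℂ × ℂ × ℂ := (o.1.1 * o.2.1, o.1.1 * o.2.2 + o.1.2 * o.2.1, o.1.2 * o.2.2)

lemma sm_bound (o : C4) : (nq o.1.1 + nq o.1.2) * (nq o.2.1 + nq o.2.2) ≤
    2 * nq (sm o).1 + 2 * nq (sm o).2.2 + nq (sm o).2.1 := by
  obtain ⟨⟨a, b⟩, ⟨c, d⟩⟩ := o
  have := Complex.normSq_nonneg (a * starRingEnd ℂ c + b * starRingEnd ℂ d)
  simp only [sm, nq, Complex.normSq_apply, Complex.mul_re, Complex.mul_im, Complex.add_re, Complex.add_im, Complex.conj_re, Complex.conj_im] at this ⊢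
  linarith

lemma sm_cont : Continuous sm := by unfold sm; fun_prop

def Orb4 (o o' : C4) : Prop := ∃ u : ℂ, ‖u‖ = 1 ∧
  ((o'.1.1 = u * o.1.1 ∧ o'.1.2 = u * o.1.2 ∧ o'.2.1 = starRingEnd ℂ u * o.2.1 ∧ o'.2.2 = starRingEnd ℂ u * o.2.2) ∨
   (o'.1.1 = u * o.2.1 ∧ o'.1.2 = u * o.2.2 ∧ o'.2.1 = starRingEnd ℂ u * o.1.1 ∧ o'.2.2 = starRingEnd ℂ u * o.1.2))

lemma sm_of_orb {o o' : C4} (h : Orb4 o o') : sm o = sm o' := by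
  obtain ⟨u, hu, ⟨h1, h2, h3, h4⟩ | ⟨h1, h2, h3, h4⟩⟩ := h
  · have e := conj_mul_self1 hu
    simp only [sm, h1, h2, h3, h4]
    refine Prod.ext ?_ (Prod.ext ?_ ?_)
    · simp only; linear_combination - o.1.1 * o.2.1 * e
    · simp only; linear_combination - (o.1.1 * o.2.2 + o.1.2 * o.2.1) * e
    · simp only; linear_combination - o.1.2 * o.2.2 * e
  · have e := conj_mul_self1 hu
    simp only [sm, h1, h2, h3, h4]
    refine Prod.ext ?_ (Prod.ext ?_ ?_)
    · simp only; linear_combination - o.1.1 * o.2.1 * e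
    · simp only; linear_combination - (o.1.1 * o.2.2 + o.1.2 * o.2.1) * e
    · simp only; linear_combination - o.1.2 * o.2.2 * e

lemma ext_C4_zero {a b c d : ℂ} (h : nq a + nq b = nq c + nq d) (h0 : (nq a + nq b) * (nq c + nq d) ≤ 0) :
    a = 0 ∧ b = 0 ∧ c = 0 ∧ d = 0 := by
  have ha := nq_nonneg a
  have hb := nq_nonneg b
  have hc := nq_nonneg c
  have hd := nq_nonneg d
  rw [← h] at h0
  have h1 : nq a + nq b = 0 := by nlinarith
  refine ⟨nq_zero.1 ?_, nq_zero.1 ?_, nq_zero.1 ?_, nq_zero.1 ?_⟩ <;> linarith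

lemma fib_case {a b c d a' b' c' d' : ℂ} (h : nq a + nq b = nq c + nq d) (h' : nq a' + nq b' = nq c' + nq d')
    (hn : ¬ (a = 0 ∧ b = 0)) (e1 : a * c = a' * c') (e2 : a * d + b * c = a' * d' + b' * c') (e3 : b * d = b' * d')
    (hp : a' * b = b' * a) : ∃ u : ℂ, ‖u‖ = 1 ∧ a' = u * a ∧ b' = u * b ∧ c' = starRingEnd ℂ u * c ∧ d' = starRingEnd ℂ u * d := by
  have ha := nq_nonneg a
  have hb := nq_nonneg b
  have hc := nq_nonneg c
  have hd := nq_nonneg d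
  have hc' := nq_nonneg c'
  have hd' := nq_nonneg d'
  obtain ⟨t, ta, tb⟩ : ∃ t, a' = t * a ∧ b' = t * b := by
    by_cases h0 : a = 0
    · have hb0 : b ≠ 0 := fun hb => hn ⟨h0, hb⟩
      refine ⟨b' / b, ?_, ?_⟩
      · field_simp; linear_combination hp
      · field_simp
    · refine ⟨a' / a, ?_, ?_⟩
      · field_simp
      · field_simp; linear_combination -hp
  obtain ⟨tc, td⟩ : c = t * c' ∧ d = t * d' := by
    rw [ta] at e1 e2
    rw [tb] at e2 e3
    by_cases h0 : a = 0
    · have hb0 : b ≠ 0 := fun hb => hn ⟨h0, hb⟩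
      subst h0
      constructor
      · apply mul_left_cancel₀ hb0; linear_combination e2
      · apply mul_left_cancel₀ hb0; linear_combination e3
    · have hh : c = t * c' := by apply mul_left_cancel₀ h0; linear_combination e1
      refine ⟨hh, ?_⟩
      apply mul_left_cancel₀ h0; linear_combination e2 - b * hh
  have hpos : 0 < nq a + nq b := by
    rcases lt_or_eq_of_le (add_nonneg ha hb) with h | h
    · exact h
    · exfalso; exact hn ⟨nq_zero.1 (by linarith), nq_zero.1 (by linarith)⟩
  have ht0 := nq_nonneg t
  have e5 : nq t * (nq a + nq b) = nq c' + nq d' := by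
    rw [← h', ta, tb, nq_mul, nq_mul]; ring
  have e6 : nq a + nq b = nq t * (nq c' + nq d') := by
    rw [h, tc, td, nq_mul, nq_mul]; ring
  have ht : nq t = 1 := by
    rw [← e5] at e6
    have : (nq t) ^ 2 = 1 := mul_right_cancel₀ hpos.ne' (by linear_combination -e6)
    nlinarith
  have hu : ‖t‖ = 1 := by
    have : ‖t‖ ^ 2 = 1 := by rw [← Complex.normSq_eq_norm_sq]; exact ht
    nlinarith [norm_nonneg t]
  refine ⟨t, hu, ta, tb, ?_, ?_⟩
  · rw [tc, ← mul_assoc, conj_mul_self1 hu, one_mul]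
  · rw [td, ← mul_assoc, conj_mul_self1 hu, one_mul]

lemma orb_of_sm (o o' : KK) (h : sm o.1 = sm o'.1) : Orb4 o.1 o'.1 := by
  obtain ⟨⟨⟨a, b⟩, c, d⟩, ho⟩ := o
  obtain ⟨⟨⟨a', b'⟩, c', d'⟩, ho'⟩ := o'
  have b1 := sm_bound ((a', b'), c', d')
  simp only at h ho ho'
  rw [← h] at b1
  have e1 := congrArg Prod.fst h
  have e2 := congrArg (fun x => x.2.1) h
  have e3 := congrArg (fun x => x.2.2) h
  simp only [sm] at e1 e2 e3 b1
  by_cases hn : a = 0 ∧ b = 0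
  · obtain ⟨rfl, rfl⟩ := hn
    obtain ⟨-, -, rfl, rfl⟩ := ext_C4_zero ho (by simp [nq])
    obtain ⟨rfl, rfl, rfl, rfl⟩ := ext_C4_zero ho' (le_trans b1 (by simp [nq]))
    exact ⟨1, by simp, Or.inl (by simp)⟩
  have key : (a' * b - b' * a) * (c' * b - d' * a) = 0 := by
    linear_combination (- b ^ 2) * e1 + a * b * e2 - a ^ 2 * e3
  rcases mul_eq_zero.1 key with k | k
  · obtain ⟨u, hu, h1, h2, h3, h4⟩ := fib_case ho ho' hn e1 e2 e3 (sub_eq_zero.1 k)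
    exact ⟨u, hu, Or.inl ⟨h1, h2, h3, h4⟩⟩
  · obtain ⟨u, hu, h1, h2, h3, h4⟩ := fib_case (a' := c') (b' := d') (c' := a') (d' := b') ho ho'.symm hn (by rw [e1]; ring) (by rw [e2]; ring) (by rw [e3]; ring) (sub_eq_zero.1 k)
    exact ⟨starRingEnd ℂ u, by simpa using hu, Or.inr ⟨h3, h4, by simpa using h1, by simpa using h2⟩⟩

def sK (o : KK) : ℂ × ℂ × ℂ := sm o.1

lemma sK_surj : Function.Surjective sK := by
  rintro ⟨P, Q, R⟩
  by_cases h0 : P = 0 ∧ Q = 0 ∧ R = 0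
  · obtain ⟨rfl, rfl, rfl⟩ := h0
    exact ⟨⟨((0, 0), 0, 0), by simp⟩, by simp [sK, sm]⟩
  obtain ⟨a, b, c, d, hh⟩ : ∃ a b c d, sm ((a, b), c, d) = (P, Q, R) := by
    by_cases hP : P = 0
    · exact ⟨0, 1, Q, R, by simp [sm, hP]⟩
    · obtain ⟨s, hs⟩ : ∃ s : ℂ, s ^ 2 = Q ^ 2 - 4 * P * R := IsAlgClosed.exists_pow_nat_eq _ (by norm_num)
      refine ⟨P, (Q + s) / 2, 1, (Q - s) / (2 * P), ?_⟩
      simp only [sm]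
      refine Prod.ext ?_ (Prod.ext ?_ ?_)
      · simp
      · simp only; field_simp; ring
      · simp only; field_simp; linear_combination -hs
  have e1 := congrArg Prod.fst hh
  have e2 := congrArg (fun x => x.2.1) hh
  have e3 := congrArg (fun x => x.2.2) hh
  simp only [sm] at e1 e2 e3
  have ha := nq_nonneg a
  have hb := nq_nonneg b
  have hc := nq_nonneg c
  have hd := nq_nonneg d
  have hA : 0 < nq a + nq b := by
    rcases lt_or_eq_of_le (add_nonneg ha hb) with h | h
    · exact h
    · exfalso
      have a0 : a = 0 := nq_zero.1 (by linarith)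
      have b0 : b = 0 := nq_zero.1 (by linarith)
      subst a0 b0
      exact h0 ⟨by rw [← e1]; ring, by rw [← e2]; ring, by rw [← e3]; ring⟩
  have hB : 0 < nq c + nq d := by
    rcases lt_or_eq_of_le (add_nonneg hc hd) with h | h
    · exact h
    · exfalso
      have a0 : c = 0 := nq_zero.1 (by linarith)
      have b0 : d = 0 := nq_zero.1 (by linarith)
      subst a0 b0
      exact h0 ⟨by rw [← e1]; ring, by rw [← e2]; ring, by rw [← e3]; ring⟩
  obtain ⟨t, ht, ht4⟩ : ∃ t : ℝ, 0 < t ∧ t ^ 4 = (nq c + nq d) / (nq a + nq b) := by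
    refine ⟨√(√((nq c + nq d) / (nq a + nq b))), Real.sqrt_pos.2 (Real.sqrt_pos.2 (div_pos hB hA)), ?_⟩
    rw [show (4 : ℕ) = 2 * 2 from rfl, pow_mul, Real.sq_sqrt (Real.sqrt_nonneg _), Real.sq_sqrt (div_pos hB hA).le]
  have htc : (t : ℂ) ≠ 0 := by exact_mod_cast ht.ne'
  have nqt : nq (t : ℂ) = t ^ 2 := by simp [nq, pow_two]
  have nqi : nq ((t : ℂ)⁻¹) = (t ^ 2)⁻¹ := by simp [nq, pow_two]
  refine ⟨⟨((t * a, t * b), (t : ℂ)⁻¹ * c, (t : ℂ)⁻¹ * d), ?_⟩, ?_⟩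
  · simp only [nq_mul, nqt, nqi]
    rw [eq_div_iff hA.ne'] at ht4
    field_simp
    linear_combination ht4
  · show sm _ = _
    rw [← hh]
    simp only [sm]
    refine Prod.ext ?_ (Prod.ext ?_ ?_)
    · simp only; field_simp
    · simp only; field_simp
    · simp only; field_simp

lemma isClosed_KK : IsClosed {o : C4 | nq o.1.1 + nq o.1.2 = nq o.2.1 + nq o.2.2} := by
  have : Continuous nq := Complex.continuous_normSq
  exact isClosed_eq (by fun_prop) (by fun_prop)

lemma nq_le_of_norm {z : ℂ} {M : ℝ} (h : ‖z‖ ≤ M) : nq z ≤ M ^ 2 := by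
  unfold nq
  rw [Complex.normSq_eq_norm_sq]
  exact pow_le_pow_left₀ (norm_nonneg _) h 2

lemma norm_le_of_nq {z : ℂ} {M : ℝ} (hM : 0 ≤ M) (h : nq z ≤ M) : ‖z‖ ≤ M + 1 := by
  unfold nq at h
  rw [Complex.normSq_eq_norm_sq] at h
  nlinarith [norm_nonneg z]

lemma sK_closed : IsClosedMap sK := by
  have hc : Continuous sK := sm_cont.comp continuous_subtype_val
  have : IsProperMap sK := by
    rw [isProperMap_iff_isCompact_preimage]
    refine ⟨hc, fun C hC => ?_⟩
    rw [Topology.IsEmbedding.subtypeVal.isCompact_iff]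
    obtain ⟨M, hM⟩ := hC.isBounded.exists_norm_le
    have hM' : ∀ x ∈ C, nq x.1 ≤ M ^ 2 ∧ nq x.2.1 ≤ M ^ 2 ∧ nq x.2.2 ≤ M ^ 2 := fun x hx => by
      have h := hM x hx
      exact ⟨nq_le_of_norm ((norm_fst_le x).trans h), nq_le_of_norm (((norm_fst_le x.2).trans (norm_snd_le x)).trans h),
        nq_le_of_norm (((norm_snd_le x.2).trans (norm_snd_le x)).trans h)⟩
    apply Metric.isCompact_of_isClosed_isBounded
    · have hcl := hC.isClosed.preimage hc
      exact (isClosed_KK.isClosedEmbedding_subtypeVal.isClosedMap) _ hcl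
    · refine (Metric.isBounded_closedBall (x := (0 : C4)) (r := 5 * M ^ 2 + 2)).subset ?_
      rintro _ ⟨o, ho, rfl⟩
      rw [mem_closedBall_zero_iff]
      have bb := sm_bound o.1
      obtain ⟨m1, m2, m3⟩ := hM' _ ho
      have ho2 := o.2
      obtain ⟨⟨⟨a, b⟩, c, d⟩, hoo⟩ := o
      simp only [sK] at *
      have ha := nq_nonneg a
      have hb := nq_nonneg b
      have hc := nq_nonneg c
      have hd := nq_nonneg d
      rw [← ho2] at bb
      have key : nq a + nq b ≤ 5 * M ^ 2 + 1 := by nlinarith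
      have l1 := norm_le_of_nq (z := a) (M := 5 * M ^ 2 + 1) (by positivity) (by linarith)
      have l2 := norm_le_of_nq (z := b) (M := 5 * M ^ 2 + 1) (by positivity) (by linarith)
      have l3 := norm_le_of_nq (z := c) (M := 5 * M ^ 2 + 1) (by positivity) (by linarith)
      have l4 := norm_le_of_nq (z := d) (M := 5 * M ^ 2 + 1) (by positivity) (by linarith)
      simp only [Prod.norm_def, max_le_iff]
      refine ⟨⟨?_, ?_⟩, ?_, ?_⟩ <;> linarith
  exact this.isClosedMap

lemma sK_quot : IsOpen (Set.range sK) ∧ IsQuotientMap (Set.rangeFactorization sK) := by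
  have hc : Continuous sK := sm_cont.comp continuous_subtype_val
  refine ⟨by rw [sK_surj.range_eq]; exact isOpen_univ, ?_⟩
  have h2 : Continuous (Set.rangeFactorization sK) := hc.subtype_mk _
  refine IsClosedMap.isQuotientMap ?_ h2 Set.rangeFactorization_surjective
  intro C hC
  have := (sK_closed C hC).preimage (continuous_subtype_val (p := fun x => x ∈ Set.range sK))
  convert this using 1
  ext ⟨x, hx⟩
  simp only [Set.mem_image, Set.mem_preimage]
  constructor
  · rintro ⟨o, ho, h⟩; exact ⟨o, ho, congrArg Subtype.val h⟩
  · rintro ⟨o, ho, h⟩; exact ⟨o, ho, Subtype.ext h⟩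


def nsv (v : VV) : ℝ := v.1 ^ 2 + (v.2.re ^ 2 + v.2.im ^ 2)
def nrm (v : VV) : VV := (√(nsv v))⁻¹ • v

lemma nsv_smul (t : ℝ) (v : VV) : nsv (t • v) = t ^ 2 * nsv v := by
  simp [nsv]; ring
lemma nsv_nonneg (v : VV) : 0 ≤ nsv v := by unfold nsv; positivity
lemma nsv_pos {v : VV} (h : v ≠ 0) : 0 < nsv v := by
  rcases lt_or_eq_of_le (nsv_nonneg v) with h1 | h1
  · exact h1
  · exfalso; apply h
    obtain ⟨a, b, c⟩ := sq3 (x := v.1) (y := v.2.re) (z := v.2.im) (by unfold nsv at h1; linarith)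
    exact Prod.ext a (Complex.ext b c)
lemma isU_nsv {v : VV} : IsU v ↔ nsv v = 1 := Iff.rfl
lemma sqn_pos {v : VV} (h : v ≠ 0) : 0 < (√(nsv v))⁻¹ := inv_pos.2 (Real.sqrt_pos.2 (nsv_pos h))
lemma isU_nrm {v : VV} (h : v ≠ 0) : IsU (nrm v) := by
  rw [isU_nsv, nrm, nsv_smul, inv_pow, Real.sq_sqrt (nsv_nonneg v), inv_mul_cancel₀ (nsv_pos h).ne']
lemma nrm_smul {v : VV} (hv : IsU v) {t : ℝ} (ht : 0 < t) : nrm (t • v) = v := by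
  rw [nrm, nsv_smul, isU_nsv.1 hv, mul_one, Real.sqrt_sq ht.le, smul_smul, inv_mul_cancel₀ ht.ne', one_smul]
lemma nsv_rot {u : ℂ} (hu : ‖u‖ = 1) (v : VV) : nsv (rotv u v) = nsv v := by
  have := normsq_one hu
  simp only [nsv, rotv, Complex.mul_re, Complex.mul_im] at *
  linear_combination (v.2.re ^ 2 + v.2.im ^ 2) * this
lemma nsv_cj (v : VV) : nsv (cjv v) = nsv v := by
  simp [nsv, cjv]
lemma nrm_rot {u : ℂ} (hu : ‖u‖ = 1) (v : VV) : nrm (rotv u v) = rotv u (nrm v) := by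
  rw [nrm, nrm, nsv_rot hu, rotv_smul]
lemma nrm_cj (v : VV) : nrm (cjv v) = cjv (nrm v) := by
  rw [nrm, nrm, nsv_cj, cjv_smul]
lemma continuous_nsv : Continuous nsv := by
  have := Complex.continuous_re
  have := Complex.continuous_im
  unfold nsv; fun_prop
lemma continuous_nrm {X : Type*} [TopologicalSpace X] {h : X → VV} (hc : Continuous h) (h0 : ∀ x, h x ≠ 0) :
    Continuous fun x => nrm (h x) := by
  unfold nrm
  refine Continuous.smul (Continuous.inv₀ (Real.continuous_sqrt.comp (continuous_nsv.comp hc)) fun x => ?_) hc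
  exact (Real.sqrt_pos.2 (nsv_pos (h0 x))).ne'

def muf (a b : VV) : ℝ := a.1 * b.1 - dtt a.2 b.2
def Qf (a b : VV) : ℂ := (a.1 : ℂ) * b.2 + (b.1 : ℂ) * a.2
def rawB (p q : ℂ) : VV := (1 + dtt p q, q - p + Complex.I * (crs p q : ℂ) * p)
def rP (a : VV) : ℂ := a.2 / (a.1 : ℂ)
def rQ (a b : VV) : ℂ := Qf a b / (muf a b : ℂ)

lemma f0_pair (v : Fin 4 → VV) : f0 v = muf (v 0) (v 1) * crs (v 2).2 (v 3).2 + muf (v 2) (v 3) * crs (v 0).2 (v 1).2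
    + crs (Qf (v 0) (v 1)) (Qf (v 2) (v 3)) := by
  rw [f0_eq]
  simp [muf, Qf, crs, dtt]; ring

lemma muf_raw (p q : ℂ) : muf (1, p) (rawB p q) = 1 + nq p := by
  simp [muf, rawB, dtt, crs, nq, Complex.normSq_apply]; ring
lemma Qf_raw (p q : ℂ) : Qf (1, p) (rawB p q) = ((1 + nq p : ℝ) : ℂ) * q := by
  apply Complex.ext <;> simp [Qf, rawB, dtt, crs, nq, Complex.normSq_apply] <;> ring
lemma crs_raw (p q : ℂ) : crs p (rawB p q).2 = (1 + nq p) * crs p q := by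
  simp [rawB, dtt, crs, nq, Complex.normSq_apply]; ring
lemma muf_smul (s t : ℝ) (a b : VV) : muf (s • a) (t • b) = s * t * muf a b := by
  simp [muf, dtt]; ring
lemma Qf_smul (s t : ℝ) (a b : VV) : Qf (s • a) (t • b) = ((s * t : ℝ) : ℂ) * Qf a b := by
  simp [Qf]; ring
lemma rP_smul {s : ℝ} (hs : s ≠ 0) (a : VV) : rP (s • a) = rP a := by
  have : (s : ℂ) ≠ 0 := by exact_mod_cast hs
  simp only [rP, Prod.smul_fst, Prod.smul_snd, smul_eq_mul, Complex.real_smul, Complex.ofReal_mul]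
  rw [mul_div_mul_left _ _ this]
lemma rQ_smul {s t : ℝ} (hs : s ≠ 0) (ht : t ≠ 0) (a b : VV) : rQ (s • a) (t • b) = rQ a b := by
  have : ((s * t : ℝ) : ℂ) ≠ 0 := by exact_mod_cast mul_ne_zero hs ht
  simp only [rQ, muf_smul, Qf_smul]
  rw [Complex.ofReal_mul (s * t), mul_div_mul_left _ _ this]

lemma one_nq_pos (p : ℂ) : 0 < 1 + nq p := by have := nq_nonneg p; linarith
lemma rawA_ne (p : ℂ) : ((1, p) : VV) ≠ 0 := by intro h; have := congrArg Prod.fst h; simp at this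
lemma rawB_ne (p q : ℂ) : rawB p q ≠ 0 := by
  intro h
  have := muf_raw p q
  rw [h] at this
  simp [muf, dtt] at this
  have := one_nq_pos p
  linarith

lemma rP_raw (p : ℂ) : rP (nrm (1, p)) = p := by
  rw [nrm, rP_smul (sqn_pos (rawA_ne p)).ne']; simp [rP]
lemma rQ_raw (p q : ℂ) : rQ (nrm (1, p)) (nrm (rawB p q)) = q := by
  have : ((1 + nq p : ℝ) : ℂ) ≠ 0 := by exact_mod_cast (one_nq_pos p).ne'
  rw [nrm, nrm, rQ_smul (sqn_pos (rawA_ne p)).ne' (sqn_pos (rawB_ne p q)).ne', rQ, muf_raw, Qf_raw]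
  rw [mul_div_assoc, mul_comm, div_mul_cancel₀ _ this]
lemma muf_raw_pos (p q : ℂ) : 0 < muf (nrm (1, p)) (nrm (rawB p q)) := by
  rw [nrm, nrm, muf_smul, muf_raw]
  exact mul_pos (mul_pos (sqn_pos (rawA_ne p)) (sqn_pos (rawB_ne p q))) (one_nq_pos p)
lemma fst_raw_pos (p : ℂ) : 0 < (nrm (1, p)).1 := by
  rw [nrm]; simpa using sqn_pos (rawA_ne p)

lemma nrm_rP {a : VV} (ha : IsU a) (h : 0 < a.1) : nrm (1, rP a) = a := by
  have h' : (a.1 : ℂ) ≠ 0 := by exact_mod_cast h.ne'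
  have : ((1, rP a) : VV) = (a.1)⁻¹ • a := by
    refine Prod.ext ?_ ?_
    · simp [h.ne']
    · simp [rP]; field_simp
  rw [this, nrm_smul ha (inv_pos.2 h)]

lemma rawB_r {a b : VV} (ha : IsU a) (h : 0 < a.1) (hm : 0 < muf a b) :
    rawB (rP a) (rQ a b) = (a.1 * muf a b)⁻¹ • b := by
  obtain ⟨a0, x⟩ := a
  obtain ⟨b0, y⟩ := b
  simp only [IsU] at ha h
  set m := muf (a0, x) (b0, y) with hmd
  have em : m = a0 * b0 - (x.re * y.re + x.im * y.im) := hmd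
  have hm' := hm.ne'
  have h' := h.ne'
  have eP : rP (a0, x) = ⟨x.re / a0, x.im / a0⟩ := by
    unfold rP; apply Complex.ext <;> simp
  have eQ : rQ (a0, x) (b0, y) = ⟨(a0 * y.re + b0 * x.re) / m, (a0 * y.im + b0 * x.im) / m⟩ := by
    unfold rQ; rw [← hmd]
    unfold Qf; apply Complex.ext <;> simp
  rw [eP, eQ]
  clear_value m
  refine Prod.ext ?_ (Complex.ext ?_ ?_)
  · simp [rawB, dtt]
    field_simp
    rw [em]
    linear_combination b0 * ha
  · simp [rawB, crs]
    field_simp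
    rw [em]
    linear_combination y.re * a0 * ha
  · simp [rawB, crs]
    field_simp
    rw [em]
    linear_combination y.im * a0 * ha

lemma nrm_rawB_r {a b : VV} (ha : IsU a) (hb : IsU b) (h : 0 < a.1) (hm : 0 < muf a b) :
    nrm (rawB (rP a) (rQ a b)) = b := by
  rw [rawB_r ha h hm, nrm_smul hb (inv_pos.2 (mul_pos h hm))]

-- equivariance
lemma muf_rot {u : ℂ} (hu : ‖u‖ = 1) (a b : VV) : muf (rotv u a) (rotv u b) = muf a b := by
  simp only [muf, rotv, dtt_rot hu]
lemma muf_cj (a b : VV) : muf (cjv a) (cjv b) = muf a b := by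
  simp only [muf, cjv, dtt_cj]
lemma rP_rot (u : ℂ) (a : VV) : rP (rotv u a) = u * rP a := by
  simp [rP, rotv]; ring
lemma rP_cj (a : VV) : rP (cjv a) = starRingEnd ℂ (rP a) := by
  simp [rP, cjv]
lemma rQ_rot {u : ℂ} (hu : ‖u‖ = 1) (a b : VV) : rQ (rotv u a) (rotv u b) = u * rQ a b := by
  rw [rQ, muf_rot hu, rQ]; simp [Qf, rotv]; ring
lemma rQ_cj (a b : VV) : rQ (cjv a) (cjv b) = starRingEnd ℂ (rQ a b) := by
  rw [rQ, muf_cj, rQ]; simp [Qf, cjv]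
lemma rawB_rot {u : ℂ} (hu : ‖u‖ = 1) (p q : ℂ) : rawB (u * p) (u * q) = rotv u (rawB p q) := by
  rw [rawB, dtt_rot hu, crs_rot hu, rawB, rotv]
  refine Prod.ext rfl ?_
  simp only; ring
lemma rawB_cj (p q : ℂ) : rawB (starRingEnd ℂ p) (starRingEnd ℂ q) = cjv (rawB p q) := by
  rw [rawB, dtt_cj, crs_cj, rawB, cjv]
  refine Prod.ext rfl ?_
  simp

/-- parametrisation by `(p1,q1,p2,q2)`. -/
def par (p1 q1 p2 q2 : ℂ) : Fin 4 → VV := ![nrm (1, p1), nrm (rawB p1 q1), nrm (1, p2), nrm (rawB p2 q2)]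

lemma isU_par (p1 q1 p2 q2 : ℂ) (i : Fin 4) : IsU (par p1 q1 p2 q2 i) := by
  fin_cases i
  · exact isU_nrm (rawA_ne _)
  · exact isU_nrm (rawB_ne _ _)
  · exact isU_nrm (rawA_ne _)
  · exact isU_nrm (rawB_ne _ _)

lemma f0_par (p1 q1 p2 q2 : ℂ) (h : crs p1 q1 + crs p2 q2 + crs q1 q2 = 0) : f0 (par p1 q1 p2 q2) = 0 := by
  have : par p1 q1 p2 q2 = fun i => (![(√(nsv (1, p1)))⁻¹, (√(nsv (rawB p1 q1)))⁻¹, (√(nsv (1, p2)))⁻¹, (√(nsv (rawB p2 q2)))⁻¹] i) •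
      (![(1, p1), rawB p1 q1, (1, p2), rawB p2 q2] i : VV) := by
    funext i; fin_cases i <;> rfl
  rw [this, f0_sgn, f0_pair]
  apply mul_eq_zero_of_right
  simp only [Matrix.cons_val, muf_raw, Qf_raw, crs_raw]
  have e : ∀ (s t : ℝ) (x y : ℂ), crs (s * x) (t * y) = s * t * crs x y := by
    intro s t x y; simp [crs]; ring
  rw [e]
  linear_combination (1 + nq p1) * (1 + nq p2) * h

def cX (a b : ℂ) : ℂ := (a + starRingEnd ℂ b) / 2
def cY (a b : ℂ) : ℂ := -Complex.I / 2 * (a - starRingEnd ℂ b)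

lemma cX_inv (x y : ℂ) : cX (x + Complex.I * y) (starRingEnd ℂ (x - Complex.I * y)) = x := by
  simp [cX]; ring
lemma cY_inv (x y : ℂ) : cY (x + Complex.I * y) (starRingEnd ℂ (x - Complex.I * y)) = y := by
  simp only [cY, Complex.conj_conj]; linear_combination (-y) * Complex.I_sq
lemma cXY_1 (a b : ℂ) : cX a b + Complex.I * cY a b = a := by
  simp only [cX, cY]; linear_combination (- (a - starRingEnd ℂ b) / 2) * Complex.I_sq
lemma cXY_2 (a b : ℂ) : starRingEnd ℂ (cX a b - Complex.I * cY a b) = b := by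
  have : cX a b - Complex.I * cY a b = starRingEnd ℂ b := by
    simp only [cX, cY]; linear_combination ((a - starRingEnd ℂ b) / 2) * Complex.I_sq
  rw [this, Complex.conj_conj]
lemma crs_cXY (a b : ℂ) : 4 * crs (cX a b) (cY a b) = nq b - nq a := by
  simp [crs, cX, cY, nq, Complex.normSq_apply]; ring

def GKfun (o : C4) : Fin 4 → VV :=
  par (cX o.1.1 o.2.1) (cY o.1.1 o.2.1) (cX o.1.2 o.2.2 - cY o.1.1 o.2.1) (cY o.1.2 o.2.2)

lemma crs_sub_left (x y z : ℂ) : crs (x - y) z = crs x z - crs y z := by simp [crs]; ring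

def GK (o : KK) : ZZ f0 := ⟨GKfun o.1, isU_par _ _ _ _, by
  apply f0_par
  rw [crs_sub_left]
  linarith [crs_cXY o.1.1.1 o.1.2.1, crs_cXY o.1.1.2 o.1.2.2, o.2]⟩

def rKfun (v : Fin 4 → VV) : C4 :=
  ((rP (v 0) + Complex.I * rQ (v 0) (v 1), rP (v 2) + rQ (v 0) (v 1) + Complex.I * rQ (v 2) (v 3)),
    starRingEnd ℂ (rP (v 0) - Complex.I * rQ (v 0) (v 1)), starRingEnd ℂ (rP (v 2) + rQ (v 0) (v 1) - Complex.I * rQ (v 2) (v 3)))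

def DK : Set (ZZ f0) := {v | 0 < (v.1 0).1 ∧ 0 < muf (v.1 0) (v.1 1) ∧ 0 < (v.1 2).1 ∧ 0 < muf (v.1 2) (v.1 3)}

lemma rKfun_GKfun (o : C4) : rKfun (GKfun o) = o := by
  obtain ⟨⟨a, b⟩, c, d⟩ := o
  simp only [rKfun, GKfun, par, Matrix.cons_val, rP_raw, rQ_raw, sub_add_cancel, cXY_1, cXY_2]

lemma GKfun_rKfun (v : ZZ f0) (hv : v ∈ DK) : GKfun (rKfun v.1) = v.1 := by
  obtain ⟨h1, h2, h3, h4⟩ := hv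
  simp only [rKfun, GKfun, par, cX_inv, cY_inv, add_sub_cancel_right]
  rw [nrm_rP (v.2.1 0) h1, nrm_rP (v.2.1 2) h3, nrm_rawB_r (v.2.1 0) (v.2.1 1) h1 h2, nrm_rawB_r (v.2.1 2) (v.2.1 3) h3 h4]
  funext i; fin_cases i <;> rfl

lemma rKfun_mem (v : ZZ f0) (hv : v ∈ DK) : nq (rKfun v.1).1.1 + nq (rKfun v.1).1.2 = nq (rKfun v.1).2.1 + nq (rKfun v.1).2.2 := by
  have e1 := crs_cXY (rKfun v.1).1.1 (rKfun v.1).2.1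
  have e2 := crs_cXY (rKfun v.1).1.2 (rKfun v.1).2.2
  simp only [rKfun, cX_inv, cY_inv] at e1 e2
  simp only [rKfun]
  obtain ⟨h1, h2, h3, h4⟩ := hv
  have hf := v.2.2
  have hA : ∀ {a b : VV}, 0 < a.1 → 0 < muf a b → crs a.2 b.2 = muf a b * crs (rP a) (rQ a b) ∧ Qf a b = (muf a b : ℂ) * rQ a b := by
    intro a b h hm
    have c1 : (a.1 : ℂ) ≠ 0 := by exact_mod_cast h.ne'
    have c2 : (muf a b : ℂ) ≠ 0 := by exact_mod_cast hm.ne'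
    constructor
    · have e : crs (rP a) (rQ a b) = crs a.2 b.2 / muf a b := by
        have eP : rP a = ⟨a.2.re / a.1, a.2.im / a.1⟩ := by
          unfold rP; apply Complex.ext <;> simp
        have eQ : rQ a b = ⟨(a.1 * b.2.re + b.1 * a.2.re) / muf a b, (a.1 * b.2.im + b.1 * a.2.im) / muf a b⟩ := by
          unfold rQ Qf; apply Complex.ext <;> simp
        rw [eP, eQ]
        have := hm.ne'
        have := h.ne'
        simp only [crs]; field_simp; ring
      rw [e]; field_simp
    · rw [rQ]; field_simp
  have e : ∀ (s t : ℝ) (x y : ℂ), crs (s * x) (t * y) = s * t * crs x y := by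
    intro s t x y; simp [crs]; ring
  rw [f0_pair, (hA h1 h2).1, (hA h3 h4).1, (hA h1 h2).2, (hA h3 h4).2, e] at hf
  have hf2 : crs (rP (v.1 2)) (rQ (v.1 2) (v.1 3)) + crs (rP (v.1 0)) (rQ (v.1 0) (v.1 1)) + crs (rQ (v.1 0) (v.1 1)) (rQ (v.1 2) (v.1 3)) = 0 := by
    apply mul_left_cancel₀ (mul_pos h2 h4).ne'
    linear_combination hf
  have e3 : ∀ x y z : ℂ, crs (x + y) z = crs x z + crs y z := by intro x y z; simp [crs]; ring
  rw [e3] at e2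
  linarith

def rK (v : DK) : KK := ⟨rKfun v.1.1, rKfun_mem v.1 v.2⟩


lemma continuous_cX {X : Type*} [TopologicalSpace X] {a b : X → ℂ} (ha : Continuous a) (hb : Continuous b) :
    Continuous fun x => cX (a x) (b x) := by
  unfold cX; exact (ha.add (Complex.continuous_conj.comp hb)).div_const _
lemma continuous_cY {X : Type*} [TopologicalSpace X] {a b : X → ℂ} (ha : Continuous a) (hb : Continuous b) :
    Continuous fun x => cY (a x) (b x) := by
  unfold cY; exact continuous_const.mul (ha.sub (Complex.continuous_conj.comp hb))
lemma continuous_crs {X : Type*} [TopologicalSpace X] {a b : X → ℂ} (ha : Continuous a) (hb : Continuous b) :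
    Continuous fun x => crs (a x) (b x) := by
  have := Complex.continuous_re
  have := Complex.continuous_im
  unfold crs; fun_prop
lemma continuous_dtt {X : Type*} [TopologicalSpace X] {a b : X → ℂ} (ha : Continuous a) (hb : Continuous b) :
    Continuous fun x => dtt (a x) (b x) := by
  have := Complex.continuous_re
  have := Complex.continuous_im
  unfold dtt; fun_prop
lemma continuous_rawB {X : Type*} [TopologicalSpace X] {a b : X → ℂ} (ha : Continuous a) (hb : Continuous b) :
    Continuous fun x => rawB (a x) (b x) := by
  have h1 := continuous_crs ha hb
  have h2 := continuous_dtt ha hb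
  have := Complex.continuous_ofReal
  unfold rawB; fun_prop
lemma continuous_muf {X : Type*} [TopologicalSpace X] {a b : X → VV} (ha : Continuous a) (hb : Continuous b) :
    Continuous fun x => muf (a x) (b x) := by
  have h2 := continuous_dtt (continuous_snd.comp ha) (continuous_snd.comp hb)
  unfold muf
  simp only [Function.comp_def] at h2
  fun_prop

lemma continuous_GK : Continuous GK := by
  refine Continuous.subtype_mk ?_ _
  have c1 : Continuous fun o : KK => cX o.1.1.1 o.1.2.1 := continuous_cX (by fun_prop) (by fun_prop)
  have c2 : Continuous fun o : KK => cY o.1.1.1 o.1.2.1 := continuous_cY (by fun_prop) (by fun_prop)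
  have c3 : Continuous fun o : KK => cX o.1.1.2 o.1.2.2 - cY o.1.1.1 o.1.2.1 := (continuous_cX (by fun_prop) (by fun_prop)).sub c2
  have c4 : Continuous fun o : KK => cY o.1.1.2 o.1.2.2 := continuous_cY (by fun_prop) (by fun_prop)
  refine continuous_pi fun i => ?_
  fin_cases i
  · exact continuous_nrm (continuous_const.prodMk c1) fun _ => rawA_ne _
  · exact continuous_nrm (continuous_rawB c1 c2) fun _ => rawB_ne _ _
  · exact continuous_nrm (continuous_const.prodMk c3) fun _ => rawA_ne _
  · exact continuous_nrm (continuous_rawB c3 c4) fun _ => rawB_ne _ _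

lemma contZ {f : (Fin 4 → VV) → ℝ} (i : Fin 4) : Continuous fun v : ZZ f => v.1 i :=
  (continuous_apply i).comp continuous_subtype_val

lemma isOpen_DK : IsOpen DK := by
  refine IsOpen.inter ?_ (IsOpen.inter ?_ (IsOpen.inter ?_ ?_))
  · exact isOpen_lt continuous_const (continuous_fst.comp (contZ 0))
  · exact isOpen_lt continuous_const (continuous_muf (contZ 0) (contZ 1))
  · exact isOpen_lt continuous_const (continuous_fst.comp (contZ 2))
  · exact isOpen_lt continuous_const (continuous_muf (contZ 2) (contZ 3))

lemma continuous_rK : Continuous rK := by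
  refine Continuous.subtype_mk ?_ _
  have cc : ∀ i, Continuous fun v : DK => v.1.1 i := fun i => (contZ i).comp continuous_subtype_val
  have hP : ∀ i, (∀ v : DK, 0 < (v.1.1 i).1) → Continuous fun v : DK => rP (v.1.1 i) := fun i h => by
    unfold rP
    refine Continuous.div (continuous_snd.comp (cc i)) (Complex.continuous_ofReal.comp (continuous_fst.comp (cc i))) fun v => ?_
    exact_mod_cast (h v).ne'
  have hQ : ∀ i j, (∀ v : DK, 0 < muf (v.1.1 i) (v.1.1 j)) → Continuous fun v : DK => rQ (v.1.1 i) (v.1.1 j) := fun i j h => by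
    unfold rQ
    refine Continuous.div ?_ (Complex.continuous_ofReal.comp (continuous_muf (cc i) (cc j))) fun v => ?_
    · have := cc i
      have := cc j
      have := Complex.continuous_ofReal
      unfold Qf; fun_prop
    · exact_mod_cast (h v).ne'
  have p1 := hP 0 fun v => v.2.1
  have p2 := hP 2 fun v => v.2.2.2.1
  have q1 := hQ 0 1 fun v => v.2.2.1
  have q2 := hQ 2 3 fun v => v.2.2.2.2
  unfold rKfun
  exact ((p1.add (continuous_const.mul q1)).prodMk ((p2.add q1).add (continuous_const.mul q2))).prodMk
    ((Complex.continuous_conj.comp (p1.sub (continuous_const.mul q1))).prodMk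
      (Complex.continuous_conj.comp ((p2.add q1).sub (continuous_const.mul q2))))

lemma GK_mem (o : KK) : GK o ∈ DK :=
  ⟨fst_raw_pos _, muf_raw_pos _ _, fst_raw_pos _, muf_raw_pos _ _⟩

lemma orb_GK_iff (o o' : KK) : Orb (GK o).1 (GK o').1 ↔ Orb4 o.1 o'.1 := by
  constructor
  · rintro ⟨u, hu, h | h⟩
    · refine ⟨u, hu, Or.inl ?_⟩
      have e : GKfun o'.1 = fun i => rotv u (GKfun o.1 i) := funext h
      have e2 := rKfun_GKfun o.1
      rw [← rKfun_GKfun o'.1, e]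
      obtain ⟨⟨⟨a, b⟩, c, d⟩, hoo⟩ := o
      simp only [rKfun, Prod.mk.injEq] at e2
      simp only [rKfun, rP_rot, rQ_rot hu]
      obtain ⟨⟨e3, e4⟩, e5, e6⟩ := e2
      refine ⟨?_, ?_, ?_, ?_⟩
      · refine Eq.trans ?_ (congrArg (u * ·) e3); ring
      · refine Eq.trans ?_ (congrArg (u * ·) e4); ring
      · refine Eq.trans ?_ (congrArg (starRingEnd ℂ u * ·) e5); simp; ring
      · refine Eq.trans ?_ (congrArg (starRingEnd ℂ u * ·) e6); simp; ring
    · refine ⟨u, hu, Or.inr ?_⟩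
      have e : GKfun o'.1 = fun i => rotv u (cjv (GKfun o.1 i)) := funext h
      have e2 := rKfun_GKfun o.1
      rw [← rKfun_GKfun o'.1, e]
      obtain ⟨⟨⟨a, b⟩, c, d⟩, hoo⟩ := o
      simp only [rKfun, Prod.mk.injEq] at e2
      simp only [rKfun, rP_rot, rQ_rot hu, rP_cj, rQ_cj]
      obtain ⟨⟨e3, e4⟩, e5, e6⟩ := e2
      refine ⟨?_, ?_, ?_, ?_⟩
      · refine Eq.trans ?_ (congrArg (u * ·) e5); simp; ring
      · refine Eq.trans ?_ (congrArg (u * ·) e6); simp; ring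
      · refine Eq.trans ?_ (congrArg (starRingEnd ℂ u * ·) e3); simp; ring
      · refine Eq.trans ?_ (congrArg (starRingEnd ℂ u * ·) e4); simp; ring
  · obtain ⟨⟨⟨a, b⟩, c, d⟩, ho⟩ := o
    obtain ⟨⟨⟨a', b'⟩, c', d'⟩, ho'⟩ := o'
    rintro ⟨u, hu, ⟨h1, h2, h3, h4⟩ | ⟨h1, h2, h3, h4⟩⟩
    · simp only at h1 h2 h3 h4
      have x1 : ∀ x y, cX (u * x) (starRingEnd ℂ u * y) = u * cX x y := fun x y => by
        have h2 : starRingEnd ℂ (2:ℂ) = 2 := Complex.conj_ofNat 2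
        simp [cX, h2]; ring
      have y1 : ∀ x y, cY (u * x) (starRingEnd ℂ u * y) = u * cY x y := fun x y => by
        have h2 : starRingEnd ℂ (2:ℂ) = 2 := Complex.conj_ofNat 2
        simp [cY, h2]; ring
      have ra : ∀ x, ((1, u * x) : VV) = rotv u (1, x) := fun x => rfl
      refine ⟨u, hu, Or.inl fun i => ?_⟩
      show GKfun _ i = rotv u (GKfun _ i)
      simp only [GKfun, h1, h2, h3, h4, x1, y1, par, ← mul_sub, rawB_rot hu, ra, nrm_rot hu]
      fin_cases i <;> rfl
    · simp only at h1 h2 h3 h4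
      have x1 : ∀ x y, cX (u * y) (starRingEnd ℂ u * x) = u * starRingEnd ℂ (cX x y) := fun x y => by
        have h2 : starRingEnd ℂ (2:ℂ) = 2 := Complex.conj_ofNat 2
        simp [cX, h2]; ring
      have y1 : ∀ x y, cY (u * y) (starRingEnd ℂ u * x) = u * starRingEnd ℂ (cY x y) := fun x y => by
        have h2 : starRingEnd ℂ (2:ℂ) = 2 := Complex.conj_ofNat 2
        simp [cY, h2]; ring
      have ra : ∀ x, ((1, u * x) : VV) = rotv u (1, x) := fun x => rfl
      have ca : ∀ x, ((1, starRingEnd ℂ x) : VV) = cjv (1, x) := fun x => rfl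
      refine ⟨u, hu, Or.inr fun i => ?_⟩
      show GKfun _ i = rotv u (cjv (GKfun _ i))
      simp only [GKfun, h1, h2, h3, h4, x1, y1, par, ← mul_sub, rawB_rot hu, ra, nrm_rot hu, ← map_sub, rawB_cj, ca, nrm_cj]
      fin_cases i <;> rfl

lemma central_chart {χ : Type} [TopologicalSpace χ] {ψ : ZZ f0 → χ} (S : Setup f0 ψ) (v : ZZ f0) (hv : ∀ i, v.1 i = (1, 0)) :
    LocE (ψ v) := by
  have key := fun o => locE_chart (E := ℂ × ℂ × ℂ) (by simp) (fun o => ψ (GK o)) (S.cont.comp continuous_GK)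
    (open_of_retract ψ S.op GK DK isOpen_DK rK continuous_rK GK_mem (fun o => Subtype.ext (rKfun_GKfun o.1))
      (fun z => congrArg ψ (Subtype.ext (GKfun_rKfun z.1 z.2)))) sK sK_quot.1 sK_quot.2 (fun o o' => by
        rw [S.fib, orb_GK_iff]
        exact ⟨sm_of_orb, orb_of_sm o o'⟩) o
  have hD : v ∈ DK := by simp [DK, hv, muf, dtt]
  have := key (rK ⟨v, hD⟩)
  have e : GK (rK ⟨v, hD⟩) = v := Subtype.ext (GKfun_rKfun v hD)
  simp only [e] at this
  exact this

lemma locE_central (v : ZZ f0) (hv : ∀ i, (v.1 i).2 = 0) : LocE (psi v) := by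
  have he : ∀ i, (v.1 i).1 * (v.1 i).1 = 1 := fun i => by
    have := v.2.1 i
    simp [IsU, hv] at this
    rcases this with h | h <;> simp [h]
  obtain ⟨ψ', S, h⟩ := setup_sgn (fun i => (v.1 i).1) he
  have hf : f0 (fun _ => ((1, 0) : VV)) = 0 := by simp [f0_eq, crs, dtt]
  let w : ZZ f0 := ⟨fun _ => (1, 0), fun _ => by simp [IsU], hf⟩
  rw [← h v w fun i => Prod.ext (by simp [w]) (by simp [w, hv])]
  exact central_chart S w fun _ => rfl


lemma upd0 (a b c d x : VV) : Function.update ![a, b, c, d] 0 x = ![x, b, c, d] := by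
  ext i <;> fin_cases i <;> rfl
lemma upd1 (a b c d x : VV) : Function.update ![a, b, c, d] 1 x = ![a, x, c, d] := by
  ext i <;> fin_cases i <;> rfl
lemma upd2 (a b c d x : VV) : Function.update ![a, b, c, d] 2 x = ![a, b, x, d] := by
  ext i <;> fin_cases i <;> rfl
lemma upd3 (a b c d x : VV) : Function.update ![a, b, c, d] 3 x = ![a, b, c, x] := by
  ext i <;> fin_cases i <;> rfl

lemma Good.smul4 {f : (Fin 4 → VV) → ℝ} (hf : Good f) (a b c d : VV) (p q r s : ℝ) :
    f ![p • a, q • b, r • c, s • d] = p * q * r * s * f ![a, b, c, d] := by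
  have h0 := hf.smul ![a, q • b, r • c, s • d] 0 p a
  have h1 := hf.smul ![a, b, r • c, s • d] 1 q b
  have h2 := hf.smul ![a, b, c, s • d] 2 r c
  have h3 := hf.smul ![a, b, c, d] 3 s d
  simp only [upd0, upd1, upd2, upd3] at h0 h1 h2 h3
  rw [h0, h1, h2, h3]; ring
lemma Good.add3 {f : (Fin 4 → VV) → ℝ} (hf : Good f) (a b c d e : VV) (s : ℝ) :
    f ![a, b, c, d + s • e] = f ![a, b, c, d] + s * f ![a, b, c, e] := by
  have h0 := hf.add ![a, b, c, d] 3 d (s • e)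
  have h3 := hf.smul ![a, b, c, d] 3 s e
  simp only [upd3] at h0 h3
  rw [h0, h3]
lemma vec_eta (v : Fin 4 → VV) : v = ![v 0, v 1, v 2, v 3] := by
  ext i <;> fin_cases i <;> rfl

abbrev EE : Type := ℝ × ℂ × ℂ × ℝ

section chart
variable (f : (Fin 4 → VV) → ℝ) (φ1 φ2 φ3 : VV ≃L[ℝ] VV)

def wa (o : EE) : VV := (o.1, 1)
def wb (o : EE) : VV := φ1 (1, o.2.1)
def wc (o : EE) : VV := φ2 (1, o.2.2.1)
def w3 (o : EE) : VV := φ3 (1, (o.2.2.2 : ℂ))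
def eI : VV := φ3 (0, Complex.I)
def CC (o : EE) : ℝ := f ![wa o, wb φ1 o, wc φ2 o, eI φ3]
def AA (o : EE) : ℝ := f ![wa o, wb φ1 o, wc φ2 o, w3 φ3 o]
def rho (o : EE) : ℝ := -(AA f φ1 φ2 φ3 o) / CC f φ1 φ2 φ3 o
def wd (o : EE) : VV := w3 φ3 o + rho f φ1 φ2 φ3 o • eI φ3
def OO : Set EE := {o | CC f φ1 φ2 φ3 o ≠ 0}
def Gfun (o : EE) : Fin 4 → VV := ![nrm (wa o), nrm (wb φ1 o), nrm (wc φ2 o), nrm (wd f φ1 φ2 φ3 o)]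

lemma wd_eq (o : EE) : wd f φ1 φ2 φ3 o = φ3 (1, (o.2.2.2 : ℂ) + (rho f φ1 φ2 φ3 o : ℂ) * Complex.I) := by
  unfold wd w3 eI
  rw [← map_smul, ← map_add]
  congr 1
  simp

lemma one_ne (z : ℂ) : ((1, z) : VV) ≠ 0 := rawA_ne z
lemma ph_ne (φ : VV ≃L[ℝ] VV) (z : ℂ) : φ (1, z) ≠ 0 := by
  rw [Ne, map_eq_zero_iff φ φ.injective]; exact one_ne z
lemma wa_ne (o : EE) : wa o ≠ 0 := by
  intro h; have := congrArg Prod.snd h; simp [wa] at this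
lemma wb_ne (o : EE) : wb φ1 o ≠ 0 := ph_ne _ _
lemma wc_ne (o : EE) : wc φ2 o ≠ 0 := ph_ne _ _
lemma wd_ne (o : EE) : wd f φ1 φ2 φ3 o ≠ 0 := by rw [wd_eq]; exact ph_ne _ _

lemma cont4 {X : Type*} [TopologicalSpace X] {a b c d : X → VV} (ha : Continuous a) (hb : Continuous b)
    (hc : Continuous c) (hd : Continuous d) : Continuous fun x => (![a x, b x, c x, d x] : Fin 4 → VV) := by
  refine continuous_pi fun i => ?_
  fin_cases i
  · exact ha
  · exact hb
  · exact hc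
  · exact hd

lemma cont_wa : Continuous wa := by unfold wa; fun_prop
lemma cont_wb : Continuous (wb φ1) := by unfold wb; fun_prop
lemma cont_wc : Continuous (wc φ2) := by unfold wc; fun_prop
lemma cont_w3 : Continuous (w3 φ3) := by
  have := Complex.continuous_ofReal
  unfold w3; fun_prop

variable {f} (hf : Good f)
include hf

lemma cont_CC : Continuous (CC f φ1 φ2 φ3) :=
  hf.cont.comp (cont4 cont_wa (cont_wb _) (cont_wc _) continuous_const)
lemma cont_AA : Continuous (AA f φ1 φ2 φ3) :=
  hf.cont.comp (cont4 cont_wa (cont_wb _) (cont_wc _) (cont_w3 _))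

lemma isOpen_OO : IsOpen (OO f φ1 φ2 φ3) := isOpen_ne_fun (cont_CC _ _ _ hf) continuous_const

lemma cont_wd : Continuous fun o : OO f φ1 φ2 φ3 => wd f φ1 φ2 φ3 o.1 := by
  have h : Continuous fun o : OO f φ1 φ2 φ3 => rho f φ1 φ2 φ3 o.1 := by
    unfold rho
    exact ((cont_AA _ _ _ hf).comp continuous_subtype_val).neg.div ((cont_CC _ _ _ hf).comp continuous_subtype_val) fun o => o.2
  have h2 : Continuous fun o : OO f φ1 φ2 φ3 => w3 φ3 o.1 := (cont_w3 φ3).comp continuous_subtype_val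
  unfold wd
  fun_prop

lemma f_raw (o : OO f φ1 φ2 φ3) : f ![wa o.1, wb φ1 o.1, wc φ2 o.1, wd f φ1 φ2 φ3 o.1] = 0 := by
  unfold wd
  rw [hf.add3]
  show AA f φ1 φ2 φ3 o.1 + _ * CC f φ1 φ2 φ3 o.1 = 0
  have : CC f φ1 φ2 φ3 o.1 ≠ 0 := o.2
  unfold rho; field_simp; ring

def GG (o : OO f φ1 φ2 φ3) : ZZ f := ⟨Gfun f φ1 φ2 φ3 o.1, by
  intro i; fin_cases i
  · exact isU_nrm (wa_ne _)
  · exact isU_nrm (wb_ne _ _)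
  · exact isU_nrm (wc_ne _ _)
  · exact isU_nrm (wd_ne _ _ _ _ _), by
  unfold Gfun nrm
  rw [hf.smul4, f_raw _ _ _ hf, mul_zero]⟩

lemma cont_GG : Continuous (GG φ1 φ2 φ3 hf) := by
  refine Continuous.subtype_mk ?_ _
  exact cont4 (continuous_nrm (cont_wa.comp continuous_subtype_val) fun o => wa_ne _)
    (continuous_nrm ((cont_wb φ1).comp continuous_subtype_val) fun o => wb_ne _ _)
    (continuous_nrm ((cont_wc φ2).comp continuous_subtype_val) fun o => wc_ne _ _)
    (continuous_nrm (cont_wd φ1 φ2 φ3 hf) fun o => wd_ne _ _ _ _ _)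

omit hf

def uu (v : Fin 4 → VV) : ℂ := starRingEnd ℂ (v 0).2 / (‖(v 0).2‖ : ℂ)
def rw4 (v : Fin 4 → VV) (i : Fin 4) : VV := rotv (uu v) (v i)
def Y1 (v : Fin 4 → VV) : VV := φ1.symm (rw4 v 1)
def Y2 (v : Fin 4 → VV) : VV := φ2.symm (rw4 v 2)
def Y3 (v : Fin 4 → VV) : VV := φ3.symm (rw4 v 3)
def rfun (v : Fin 4 → VV) : EE := ((v 0).1 / ‖(v 0).2‖, (Y1 φ1 v).2 / ((Y1 φ1 v).1 : ℂ), (Y2 φ2 v).2 / ((Y2 φ2 v).1 : ℂ),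
  ((Y3 φ3 v).2 / ((Y3 φ3 v).1 : ℂ)).re)
def DD : Set (ZZ f) := {v | (v.1 0).2 ≠ 0 ∧ 0 < (Y1 φ1 v.1).1 ∧ 0 < (Y2 φ2 v.1).1 ∧ 0 < (Y3 φ3 v.1).1 ∧
  f ![rw4 v.1 0, rw4 v.1 1, rw4 v.1 2, eI φ3] ≠ 0}

lemma norm_uu {v : Fin 4 → VV} (h : (v 0).2 ≠ 0) : ‖uu v‖ = 1 := by
  have : ‖(v 0).2‖ ≠ 0 := by simpa using h
  simp [uu, this]
lemma rw4_zero {v : Fin 4 → VV} (h : (v 0).2 ≠ 0) : rw4 v 0 = ‖(v 0).2‖ • wa (rfun φ1 φ2 φ3 v) := by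
  have h2 : ‖(v 0).2‖ ≠ 0 := by simpa using h
  have h3 : (‖(v 0).2‖ : ℂ) ≠ 0 := by exact_mod_cast h2
  ext1
  · simp [rw4, rotv, wa, rfun]; field_simp
  · simp only [rw4, rotv, uu, wa, Prod.smul_snd, Complex.real_smul, mul_one]
    rw [div_mul_eq_mul_div, mul_comm, Complex.mul_conj, Complex.normSq_eq_norm_sq]
    field_simp
    push_cast; ring

lemma ph_Y (φ : VV ≃L[ℝ] VV) (w : VV) (h : 0 < (φ.symm w).1) :
    w = (φ.symm w).1 • φ (1, (φ.symm w).2 / ((φ.symm w).1 : ℂ)) := by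
  rw [← map_smul]
  apply φ.symm.injective
  rw [φ.symm_apply_apply]
  have h3 : ((φ.symm w).1 : ℂ) ≠ 0 := by exact_mod_cast h.ne'
  ext1
  · simp
  · simp; field_simp

lemma rw4_one {v : Fin 4 → VV} (h : 0 < (Y1 φ1 v).1) : rw4 v 1 = (Y1 φ1 v).1 • wb φ1 (rfun φ1 φ2 φ3 v) :=
  ph_Y φ1 _ h
lemma rw4_two {v : Fin 4 → VV} (h : 0 < (Y2 φ2 v).1) : rw4 v 2 = (Y2 φ2 v).1 • wc φ2 (rfun φ1 φ2 φ3 v) :=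
  ph_Y φ2 _ h

include hf
lemma CC_r (v : DD (f := f) φ1 φ2 φ3) : CC f φ1 φ2 φ3 (rfun φ1 φ2 φ3 v.1.1) ≠ 0 := by
  obtain ⟨v, h0, h1, h2, h3, h4⟩ := v
  rw [rw4_zero φ1 φ2 φ3 h0, rw4_one φ1 φ2 φ3 h1, rw4_two φ1 φ2 φ3 h2] at h4
  have := hf.smul4 (wa (rfun φ1 φ2 φ3 v.1)) (wb φ1 (rfun φ1 φ2 φ3 v.1)) (wc φ2 (rfun φ1 φ2 φ3 v.1)) (eI φ3) ‖(v.1 0).2‖ (Y1 φ1 v.1).1 (Y2 φ2 v.1).1 1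
  rw [one_smul] at this
  rw [this] at h4
  exact right_ne_zero_of_mul h4

lemma rw4_three (v : DD (f := f) φ1 φ2 φ3) : rw4 v.1.1 3 = (Y3 φ3 v.1.1).1 • wd f φ1 φ2 φ3 (rfun φ1 φ2 φ3 v.1.1) := by
  have hC := CC_r φ1 φ2 φ3 hf v
  obtain ⟨v, h0, h1, h2, h3, h4⟩ := v
  have e3 := ph_Y φ3 _ h3
  change rw4 v.1 3 = (Y3 φ3 v.1).1 • φ3 (1, (Y3 φ3 v.1).2 / ((Y3 φ3 v.1).1 : ℂ)) at e3
  set y := (Y3 φ3 v.1).2 / ((Y3 φ3 v.1).1 : ℂ) with hy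
  have hw : φ3 (1, y) = w3 φ3 (rfun φ1 φ2 φ3 v.1) + y.im • eI φ3 := by
    unfold w3 eI
    rw [← map_smul, ← map_add]
    congr 1
    have : (rfun φ1 φ2 φ3 v.1).2.2.2 = y.re := rfl
    rw [this]
    ext1
    · simp
    · simp
  have hz : f (rw4 v.1) = 0 := by
    have := hf.rot (uu v.1) v.1 (norm_uu h0)
    rw [v.2.2] at this; exact this
  rw [vec_eta (rw4 v.1), rw4_zero φ1 φ2 φ3 h0, rw4_one φ1 φ2 φ3 h1, rw4_two φ1 φ2 φ3 h2, e3, hf.smul4, hw, hf.add3] at hz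
  have hn : 0 < ‖(v.1 0).2‖ := norm_pos_iff.2 h0
  have hp : ‖(v.1 0).2‖ * (Y1 φ1 v.1).1 * (Y2 φ2 v.1).1 * (Y3 φ3 v.1).1 ≠ 0 := by positivity
  have hz2 := (mul_eq_zero.1 hz).resolve_left hp
  change AA f φ1 φ2 φ3 (rfun φ1 φ2 φ3 v.1) + y.im * CC f φ1 φ2 φ3 (rfun φ1 φ2 φ3 v.1) = 0 at hz2
  have : y.im = rho f φ1 φ2 φ3 (rfun φ1 φ2 φ3 v.1) := by
    unfold rho; field_simp; linarith
  rw [e3, hw, this]; rfl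

def rr (v : DD (f := f) φ1 φ2 φ3) : OO f φ1 φ2 φ3 := ⟨rfun φ1 φ2 φ3 v.1.1, CC_r φ1 φ2 φ3 hf v⟩

lemma GG_rr (v : DD (f := f) φ1 φ2 φ3) : GG φ1 φ2 φ3 hf (rr φ1 φ2 φ3 hf v) = rotZ hf (uu v.1.1) (norm_uu v.2.1) v.1 := by
  apply Subtype.ext
  show Gfun f φ1 φ2 φ3 (rfun φ1 φ2 φ3 v.1.1) = rw4 v.1.1
  have hU : ∀ i, IsU (rw4 v.1.1 i) := fun i => isU_rot (norm_uu v.2.1) (v.1.2.1 i)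
  have key : ∀ (w w' : VV) (t : ℝ), 0 < t → IsU w → w = t • w' → nrm w' = w := by
    intro w w' t ht hw h
    have : w' = t⁻¹ • w := by rw [h, smul_smul, inv_mul_cancel₀ ht.ne', one_smul]
    rw [this]; exact nrm_smul hw (inv_pos.2 ht)
  have hn : 0 < ‖(v.1.1 0).2‖ := norm_pos_iff.2 v.2.1
  rw [vec_eta (rw4 v.1.1)]
  unfold Gfun
  rw [key _ _ _ hn (hU 0) (rw4_zero φ1 φ2 φ3 v.2.1), key _ _ _ v.2.2.1 (hU 1) (rw4_one φ1 φ2 φ3 v.2.2.1),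
    key _ _ _ v.2.2.2.1 (hU 2) (rw4_two φ1 φ2 φ3 v.2.2.2.1), key _ _ _ v.2.2.2.2.1 (hU 3) (rw4_three φ1 φ2 φ3 hf v)]

omit hf
lemma cont_uu : ContinuousOn uu {v : Fin 4 → VV | (v 0).2 ≠ 0} := by
  unfold uu
  refine ContinuousOn.div ?_ ?_ ?_
  · exact (Complex.continuous_conj.comp (by fun_prop)).continuousOn
  · exact (Complex.continuous_ofReal.comp (by fun_prop)).continuousOn
  · intro v hv; simpa using hv

include hf

lemma cont_rw4 (i : Fin 4) : ContinuousOn (fun v : ZZ f => rw4 v.1 i) {v : ZZ f | (v.1 0).2 ≠ 0} := by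
  have hu : ContinuousOn (fun v : ZZ f => uu v.1) {v : ZZ f | (v.1 0).2 ≠ 0} :=
    cont_uu.comp continuous_subtype_val.continuousOn fun v hv => hv
  unfold rw4 rotv
  have := (contZ (f := f) i)
  exact (continuous_fst.comp this).continuousOn.prodMk (hu.mul (continuous_snd.comp this).continuousOn)

lemma isOpen_DD : IsOpen (DD (f := f) φ1 φ2 φ3) := by
  have h0 : IsOpen {v : ZZ f | (v.1 0).2 ≠ 0} := isOpen_ne_fun (continuous_snd.comp (contZ 0)) continuous_const
  have hY : ∀ (φ : VV ≃L[ℝ] VV) i, ContinuousOn (fun v : ZZ f => (φ.symm (rw4 v.1 i)).1) {v : ZZ f | (v.1 0).2 ≠ 0} := fun φ i =>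
    (continuous_fst.comp φ.symm.continuous).comp_continuousOn (cont_rw4 hf i)
  have h1 := (hY φ1 1).isOpen_inter_preimage h0 isOpen_Ioi (t := Set.Ioi 0)
  have h2 := (hY φ2 2).isOpen_inter_preimage h0 isOpen_Ioi (t := Set.Ioi 0)
  have h3 := (hY φ3 3).isOpen_inter_preimage h0 isOpen_Ioi (t := Set.Ioi 0)
  have hF : ContinuousOn (fun v : ZZ f => f ![rw4 v.1 0, rw4 v.1 1, rw4 v.1 2, eI φ3]) {v : ZZ f | (v.1 0).2 ≠ 0} := by
    refine hf.cont.comp_continuousOn ?_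
    refine continuousOn_pi.2 fun i => ?_
    fin_cases i
    · exact cont_rw4 hf 0
    · exact cont_rw4 hf 1
    · exact cont_rw4 hf 2
    · exact continuousOn_const
  have h4 := hF.isOpen_inter_preimage h0 isOpen_compl_singleton (t := {0}ᶜ)
  convert h1.inter (h2.inter (h3.inter h4)) using 1
  ext v
  simp only [DD, Set.mem_ofPred_eq, Set.mem_inter_iff, Set.mem_preimage, Set.mem_Ioi, Set.mem_compl_iff, Set.mem_singleton_iff, Y1, Y2, Y3]
  tauto

lemma cont_rr : Continuous (rr φ1 φ2 φ3 hf) := by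
  refine Continuous.subtype_mk ?_ _
  have hw : ∀ i, Continuous fun v : DD (f := f) φ1 φ2 φ3 => rw4 v.1.1 i := fun i =>
    (cont_rw4 hf i).comp_continuous continuous_subtype_val fun v => v.2.1
  have hd : ∀ (φ : VV ≃L[ℝ] VV) i, (∀ v : DD (f := f) φ1 φ2 φ3, 0 < (φ.symm (rw4 v.1.1 i)).1) →
      Continuous fun v : DD (f := f) φ1 φ2 φ3 => (φ.symm (rw4 v.1.1 i)).2 / ((φ.symm (rw4 v.1.1 i)).1 : ℂ) := fun φ i h => by
    refine Continuous.div ?_ ?_ fun v => ?_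
    · exact continuous_snd.comp (φ.symm.continuous.comp (hw i))
    · exact Complex.continuous_ofReal.comp (continuous_fst.comp (φ.symm.continuous.comp (hw i)))
    · exact_mod_cast (h v).ne'
  have c0 : Continuous fun v : DD (f := f) φ1 φ2 φ3 => v.1.1 0 := (contZ 0).comp continuous_subtype_val
  have ct : Continuous fun v : DD (f := f) φ1 φ2 φ3 => (v.1.1 0).1 / ‖(v.1.1 0).2‖ :=
    (continuous_fst.comp c0).div (continuous_snd.comp c0).norm fun v => norm_ne_zero_iff.2 v.2.1
  exact ct.prodMk ((hd φ1 1 fun v => v.2.2.1).prodMk ((hd φ2 2 fun v => v.2.2.2.1).prodMk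
    (Complex.continuous_re.comp (hd φ3 3 fun v => v.2.2.2.2.1))))

lemma GG_zero (o : OO f φ1 φ2 φ3) : ∃ t : ℝ, 0 < t ∧ (((GG φ1 φ2 φ3 hf o).1 0).2 = (t : ℂ)) := by
  refine ⟨(√(nsv (wa o.1)))⁻¹, sqn_pos (wa_ne _), ?_⟩
  show (nrm (wa o.1)).2 = _
  simp [nrm, wa]

omit hf in
lemma uu_pos {v : Fin 4 → VV} {t : ℝ} (ht : 0 < t) (h : (v 0).2 = (t : ℂ)) : uu v = 1 := by
  unfold uu; rw [h]
  have : (t : ℂ) ≠ 0 := by exact_mod_cast ht.ne'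
  simp [abs_of_pos ht, this]

omit hf in
lemma Yaux (φ : VV ≃L[ℝ] VV) (v : Fin 4 → VV) (i : Fin 4) (hu : uu v = 1) (z : ℂ) (h : v i = nrm (φ (1, z))) :
    0 < (φ.symm (rw4 v i)).1 ∧ (φ.symm (rw4 v i)).2 / ((φ.symm (rw4 v i)).1 : ℂ) = z := by
  have hp := sqn_pos (ph_ne φ z)
  have : φ.symm (rw4 v i) = (√(nsv (φ (1, z))))⁻¹ • ((1, z) : VV) := by
    unfold rw4
    rw [hu, rotv_one, h, nrm, map_smul, φ.symm_apply_apply]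
  rw [this]
  constructor
  · simpa using hp
  · have hc : (((√(nsv (φ (1, z))))⁻¹ : ℝ) : ℂ) ≠ 0 := by exact_mod_cast hp.ne'
    simp only [Prod.smul_snd, Prod.smul_fst, Complex.real_smul, smul_eq_mul, mul_one]
    rw [mul_comm, mul_div_assoc, div_self hc, mul_one]

lemma GG_mem (o : OO f φ1 φ2 φ3) : GG φ1 φ2 φ3 hf o ∈ DD (f := f) φ1 φ2 φ3 := by
  obtain ⟨t, ht, h⟩ := GG_zero φ1 φ2 φ3 hf o
  have hu := uu_pos ht h
  refine ⟨?_, (Yaux φ1 _ 1 hu o.1.2.1 rfl).1, (Yaux φ2 _ 2 hu o.1.2.2.1 rfl).1, (Yaux φ3 _ 3 hu (o.1.2.2.2 + rho f φ1 φ2 φ3 o.1 * Complex.I) ?_).1, ?_⟩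
  · rw [h]; exact_mod_cast ht.ne'
  · rw [← wd_eq]; rfl
  · simp only [rw4, hu, rotv_one]
    show f ![nrm (wa o.1), nrm (wb φ1 o.1), nrm (wc φ2 o.1), eI φ3] ≠ 0
    have := hf.smul4 (wa o.1) (wb φ1 o.1) (wc φ2 o.1) (eI φ3) (√(nsv (wa o.1)))⁻¹ (√(nsv (wb φ1 o.1)))⁻¹ (√(nsv (wc φ2 o.1)))⁻¹ 1
    rw [one_smul] at this
    unfold nrm
    rw [this]
    have a1 := sqn_pos (wa_ne o.1)
    have a2 := sqn_pos (wb_ne φ1 o.1)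
    have a3 := sqn_pos (wc_ne φ2 o.1)
    exact mul_ne_zero (by positivity) o.2

lemma rr_GG (o : OO f φ1 φ2 φ3) : rr φ1 φ2 φ3 hf ⟨GG φ1 φ2 φ3 hf o, GG_mem φ1 φ2 φ3 hf o⟩ = o := by
  obtain ⟨t, ht, h⟩ := GG_zero φ1 φ2 φ3 hf o
  have hu := uu_pos ht h
  apply Subtype.ext
  show rfun φ1 φ2 φ3 (GG φ1 φ2 φ3 hf o).1 = o.1
  have e1 := (Yaux φ1 (GG φ1 φ2 φ3 hf o).1 1 hu o.1.2.1 rfl).2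
  have e2 := (Yaux φ2 (GG φ1 φ2 φ3 hf o).1 2 hu o.1.2.2.1 rfl).2
  have e3 := (Yaux φ3 (GG φ1 φ2 φ3 hf o).1 3 hu (o.1.2.2.2 + rho f φ1 φ2 φ3 o.1 * Complex.I) (by rw [← wd_eq]; rfl)).2
  have e0 : ((GG φ1 φ2 φ3 hf o).1 0).1 / ‖((GG φ1 φ2 φ3 hf o).1 0).2‖ = o.1.1 := by
    show (nrm (wa o.1)).1 / ‖(nrm (wa o.1)).2‖ = o.1.1
    have a1 := sqn_pos (wa_ne o.1)
    set q := (√(nsv (wa o.1)))⁻¹ with hq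
    have : nrm (wa o.1) = q • wa o.1 := rfl
    rw [this]
    simp [wa, abs_of_pos a1]
    field_simp
  unfold rfun Y1 Y2 Y3
  rw [e0, e1, e2, e3]
  simp

lemma GG_inj {o o' : OO f φ1 φ2 φ3} (h : GG φ1 φ2 φ3 hf o = GG φ1 φ2 φ3 hf o') : o = o' := by
  rw [← rr_GG φ1 φ2 φ3 hf o, ← rr_GG φ1 φ2 φ3 hf o']
  congr 1
  exact Subtype.ext h

lemma orb_GG (o o' : OO f φ1 φ2 φ3) : Orb (GG φ1 φ2 φ3 hf o).1 (GG φ1 φ2 φ3 hf o').1 ↔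
    GG φ1 φ2 φ3 hf o' = GG φ1 φ2 φ3 hf o ∨ GG φ1 φ2 φ3 hf o' = cjZ hf (GG φ1 φ2 φ3 hf o) := by
  obtain ⟨t, ht, h⟩ := GG_zero φ1 φ2 φ3 hf o
  obtain ⟨t', ht', h'⟩ := GG_zero φ1 φ2 φ3 hf o'
  have key : ∀ u : ℂ, ‖u‖ = 1 → (t' : ℂ) = u * t → u = 1 := by
    intro u hu e
    have e2 := congrArg norm e
    rw [norm_mul, hu, Complex.norm_of_nonneg ht.le, Complex.norm_of_nonneg ht'.le, one_mul] at e2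
    rw [e2] at e
    have : (t : ℂ) ≠ 0 := by exact_mod_cast ht.ne'
    field_simp at e
    exact e.symm
  constructor
  · rintro ⟨u, hu, e | e⟩
    · have := congrArg Prod.snd (e 0)
      simp only [rotv, h, h'] at this
      have := key u hu this
      subst this
      left; apply Subtype.ext; funext i; rw [e, rotv_one]
    · have := congrArg Prod.snd (e 0)
      simp only [rotv, cjv, h, h', Complex.conj_ofReal] at this
      have := key u hu this
      subst this
      right; apply Subtype.ext; funext i; rw [e, rotv_one]; rfl
  · rintro (e | e)
    · exact ⟨1, by simp, Or.inl fun i => by rw [e, rotv_one]⟩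
    · exact ⟨1, by simp, Or.inr fun i => by rw [e, rotv_one]; rfl⟩

end chart

section final
variable {χ : Type} [TopologicalSpace χ] {f : (Fin 4 → VV) → ℝ} {ψ : ZZ f → χ}

lemma psiGG_open (S : Setup f ψ) (φ1 φ2 φ3 : VV ≃L[ℝ] VV) :
    IsOpenMap fun o : OO f φ1 φ2 φ3 => ψ (GG φ1 φ2 φ3 S.good o) :=
  open_of_retract ψ S.op (GG φ1 φ2 φ3 S.good) (DD φ1 φ2 φ3) (isOpen_DD φ1 φ2 φ3 S.good) (rr φ1 φ2 φ3 S.good)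
    (cont_rr φ1 φ2 φ3 S.good) (GG_mem φ1 φ2 φ3 S.good) (rr_GG φ1 φ2 φ3 S.good) fun z => by
      rw [GG_rr]
      exact ((S.fib _ _).2 ⟨_, norm_uu z.2.1, Or.inl fun i => rfl⟩).symm

lemma p_mem_DD (φ1 φ2 φ3 : VV ≃L[ℝ] VV) (p : ZZ f) {t : ℝ} (ht : 0 < t) (h : (p.1 0).2 = (t : ℂ))
    (h1 : φ1 (1, 0) = p.1 1) (h2 : φ2 (1, 0) = p.1 2) (h3 : φ3 (1, 0) = p.1 3)
    (hL : f ![p.1 0, p.1 1, p.1 2, φ3 (0, Complex.I)] ≠ 0) : p ∈ DD (f := f) φ1 φ2 φ3 := by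
  have hu := uu_pos ht h
  have hw : ∀ i, rw4 p.1 i = p.1 i := fun i => by unfold rw4; rw [hu, rotv_one]
  refine ⟨?_, ?_, ?_, ?_, ?_⟩
  · rw [h]; exact_mod_cast ht.ne'
  · unfold Y1; rw [hw, ← h1, φ1.symm_apply_apply]; norm_num
  · unfold Y2; rw [hw, ← h2, φ2.symm_apply_apply]; norm_num
  · unfold Y3; rw [hw, ← h3, φ3.symm_apply_apply]; norm_num
  · rw [hw, hw, hw]; exact hL

lemma p_GG (hf : Good f) (φ1 φ2 φ3 : VV ≃L[ℝ] VV) (p : ZZ f) {t : ℝ} (ht : 0 < t) (h : (p.1 0).2 = (t : ℂ))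
    (h1 : φ1 (1, 0) = p.1 1) (h2 : φ2 (1, 0) = p.1 2) (h3 : φ3 (1, 0) = p.1 3)
    (hL : f ![p.1 0, p.1 1, p.1 2, φ3 (0, Complex.I)] ≠ 0) : ∃ o : OO f φ1 φ2 φ3, GG φ1 φ2 φ3 hf o = p := by
  refine ⟨rr φ1 φ2 φ3 hf ⟨p, p_mem_DD φ1 φ2 φ3 p ht h h1 h2 h3 hL⟩, ?_⟩
  rw [GG_rr]
  apply Subtype.ext; funext i
  show rotv (uu p.1) (p.1 i) = p.1 i
  rw [uu_pos ht h, rotv_one]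

end final


section final2
variable {χ : Type} [TopologicalSpace χ] {f : (Fin 4 → VV) → ℝ} {ψ : ZZ f → χ}

lemma isU_ne {v : VV} (h : IsU v) : v ≠ 0 := by
  rintro rfl; simp [IsU] at h

lemma chart_free (S : Setup f ψ) (p : ZZ f) {t : ℝ} (ht : 0 < t) (h : (p.1 0).2 = (t : ℂ))
    (w : VV) (hw : f ![p.1 0, p.1 1, p.1 2, w] ≠ 0) (hp : cjZ S.good p ≠ p) : LocE (ψ p) := by
  have h10 : ((1, 0) : VV) ≠ 0 := one_ne 0
  obtain ⟨φ1, h1⟩ := SeparatingDual.exists_continuousLinearEquiv_apply_eq (R := ℝ) h10 (isU_ne (p.2.1 1))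
  obtain ⟨φ2, h2⟩ := SeparatingDual.exists_continuousLinearEquiv_apply_eq (R := ℝ) h10 (isU_ne (p.2.1 2))
  obtain ⟨φ, h3⟩ := SeparatingDual.exists_continuousLinearEquiv_apply_eq (R := ℝ) h10 (isU_ne (p.2.1 3))
  have e : w = φ (0, (φ.symm w).2) + (φ.symm w).1 • p.1 3 := by
    rw [← h3, ← map_smul, ← map_add]
    apply φ.symm.injective
    rw [φ.symm_apply_apply]
    ext1 <;> simp
  have hz : f ![p.1 0, p.1 1, p.1 2, p.1 3] = 0 := by rw [← vec_eta]; exact p.2.2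
  rw [e, S.good.add3, hz, mul_zero, add_zero] at hw
  set x := (φ.symm w).2
  have hx : x ≠ 0 := by
    intro hx
    apply hw
    rw [hx]
    have := S.good.add3 (p.1 0) (p.1 1) (p.1 2) 0 0 1
    have e0 : φ ((0 : ℝ), (0 : ℂ)) = 0 := map_zero φ
    rw [e0]
    simp at this; exact this
  obtain ⟨M, hM⟩ := SeparatingDual.exists_continuousLinearEquiv_apply_eq (R := ℝ) Complex.I_ne_zero hx
  let φ3 : VV ≃L[ℝ] VV := ((ContinuousLinearEquiv.refl ℝ ℝ).prodCongr M).trans φ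
  have g3 : φ3 (1, 0) = p.1 3 := by
    rw [← h3]; simp [φ3]
  have gI : φ3 (0, Complex.I) = φ (0, x) := by simp [φ3, hM]
  rw [← gI] at hw
  obtain ⟨o, ho⟩ := p_GG S.good φ1 φ2 φ3 p ht h h1 h2 g3 hw
  obtain ⟨W', W, oW', oW, m', m, hd⟩ := t2_separation hp
  let O' : Set (OO f φ1 φ2 φ3) := {o | GG φ1 φ2 φ3 S.good o ∈ W ∧ cjZ S.good (GG φ1 φ2 φ3 S.good o) ∈ W'}
  have cG := cont_GG φ1 φ2 φ3 S.good
  have oO : IsOpen O' := (oW.preimage cG).inter (oW'.preimage ((continuous_cjZ S.good).comp cG))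
  have oE := (isOpen_OO φ1 φ2 φ3 S.good).isOpenEmbedding_subtypeVal.comp oO.isOpenEmbedding_subtypeVal
  have q := quot_of_open (fun o : O' => (o.1.1 : EE)) oE.continuous oE.isOpenMap
  have key := locE_chart (E := EE) (by simp) (fun o : O' => ψ (GG φ1 φ2 φ3 S.good o.1))
    (S.cont.comp (cG.comp continuous_subtype_val)) ((psiGG_open S φ1 φ2 φ3).comp oO.isOpenMap_subtype_val)
    (fun o : O' => (o.1.1 : EE)) q.1 q.2 (fun a b => by
      rw [S.fib, orb_GG]
      constructor
      · rintro (e | e)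
        · rw [GG_inj _ _ _ _ e]
        · exfalso
          have hb := b.2.1
          rw [e] at hb
          exact Set.disjoint_left.1 hd a.2.2 hb
      · intro e
        left
        have : a.1 = b.1 := Subtype.ext e
        rw [this]) ⟨o, by show GG φ1 φ2 φ3 S.good o ∈ W; rw [ho]; exact m, by rw [ho]; exact m'⟩
  simp only [ho] at key
  exact key

lemma vext {v w : VV} (h1 : v.1 = w.1) (h2 : v.2.re = w.2.re) (h3 : v.2.im = w.2.im) : v = w :=
  Prod.ext h1 (Complex.ext h2 h3)

def rotPhi (t x : ℝ) (h : t ^ 2 + x ^ 2 = 1) : VV ≃L[ℝ] VV :=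
  LinearEquiv.toContinuousLinearEquiv {
    toFun := fun v => (t * v.1 - x * v.2.re, ⟨x * v.1 + t * v.2.re, v.2.im⟩)
    invFun := fun v => (t * v.1 + x * v.2.re, ⟨-x * v.1 + t * v.2.re, v.2.im⟩)
    map_add' := fun v w => by
      refine vext ?_ ?_ ?_
      · simp; ring
      · simp; ring
      · simp
    map_smul' := fun r v => by
      refine vext ?_ ?_ ?_
      · simp; ring
      · simp; ring
      · simp
    left_inv := fun v => by
      refine vext ?_ ?_ ?_
      · simp; linear_combination v.1 * h
      · simp; linear_combination v.2.re * h
      · simp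
    right_inv := fun v => by
      refine vext ?_ ?_ ?_
      · simp; linear_combination v.1 * h
      · simp; linear_combination v.2.re * h
      · simp }

lemma rotPhi_apply (t x : ℝ) (h : t ^ 2 + x ^ 2 = 1) (v : VV) :
    rotPhi t x h v = (t * v.1 - x * v.2.re, ⟨x * v.1 + t * v.2.re, v.2.im⟩) := rfl
lemma rotPhi_cj (t x : ℝ) (h : t ^ 2 + x ^ 2 = 1) (v : VV) : rotPhi t x h (cjv v) = cjv (rotPhi t x h v) := by
  rw [rotPhi_apply, rotPhi_apply]
  refine vext ?_ ?_ ?_ <;> simp [cjv]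
lemma rotPhi_I (t x : ℝ) (h : t ^ 2 + x ^ 2 = 1) : rotPhi t x h (0, Complex.I) = (0, Complex.I) := by
  rw [rotPhi_apply]
  refine vext ?_ ?_ ?_ <;> simp

lemma exists_rotPhi {v : VV} (hv : IsU v) (hc : cjv v = v) : ∃ φ : VV ≃L[ℝ] VV, φ (1, 0) = v ∧
    (∀ w, φ (cjv w) = cjv (φ w)) ∧ φ (0, Complex.I) = (0, Complex.I) := by
  have him : v.2.im = 0 := by
    have := congrArg (fun w : VV => w.2.im) hc
    simp [cjv] at this; linarith
  have h : v.1 ^ 2 + v.2.re ^ 2 = 1 := by unfold IsU at hv; rw [him] at hv; linarith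
  refine ⟨rotPhi v.1 v.2.re h, ?_, rotPhi_cj _ _ _, rotPhi_I _ _ _⟩
  rw [rotPhi_apply]
  refine vext ?_ ?_ ?_ <;> simp [him]

def iota (o : EE) : EE := (o.1, starRingEnd ℂ o.2.1, starRingEnd ℂ o.2.2.1, o.2.2.2)

abbrev E6 : Type := (ℝ × ℝ × ℝ × ℝ) × ℂ

def hE6 : EE ≃ₜ E6 where
  toFun o := ((o.1, o.2.1.re, o.2.2.1.re, o.2.2.2), Complex.equivRealProdCLM.symm (o.2.1.im, o.2.2.1.im))
  invFun p := (p.1.1, Complex.equivRealProdCLM.symm (p.1.2.1, p.2.re), Complex.equivRealProdCLM.symm (p.1.2.2.1, p.2.im), p.1.2.2.2)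
  left_inv o := by ext <;> simp <;> apply Complex.ext <;> simp
  right_inv p := by ext <;> simp <;> apply Complex.ext <;> simp
  continuous_toFun := by
    have := Complex.continuous_re
    have := Complex.continuous_im
    fun_prop
  continuous_invFun := by
    have := Complex.continuous_re
    have := Complex.continuous_im
    fun_prop

def s6 (o : EE) : E6 := ((hE6 o).1, (hE6 o).2 ^ 2)

lemma s6_cont : Continuous s6 := by
  have := hE6.continuous
  unfold s6; fun_prop
lemma s6_open : IsOpenMap s6 := by
  have h := (IsOpenMap.id (X := ℝ × ℝ × ℝ × ℝ)).prodMap (Complex.isOpenQuotientMap_pow 2).isOpenMap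
  exact h.comp hE6.isOpenMap
lemma s6_fib (o o' : EE) : s6 o = s6 o' ↔ o' = o ∨ o' = iota o := by
  have hi : hE6 (iota o) = ((hE6 o).1, -(hE6 o).2) := by
    ext <;> simp [hE6, iota] <;> apply Complex.ext <;> simp
  rw [← hE6.injective.eq_iff, ← hE6.injective.eq_iff (b := iota o), hi]
  unfold s6
  rw [Prod.mk.injEq, sq_eq_sq_iff_eq_or_eq_neg]
  generalize hE6 o = x
  generalize hE6 o' = y
  obtain ⟨x1, x2⟩ := x
  obtain ⟨y1, y2⟩ := y
  simp only [Prod.mk.injEq]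
  constructor
  · rintro ⟨rfl, rfl | rfl⟩
    · simp
    · right; simp
  · rintro (⟨rfl, rfl⟩ | ⟨rfl, rfl⟩)
    · simp
    · simp

lemma chart_sym (S : Setup f ψ) (p : ZZ f) {t : ℝ} (ht : 0 < t) (h : (p.1 0).2 = (t : ℂ))
    (w : VV) (hw : f ![p.1 0, p.1 1, p.1 2, w] ≠ 0) (hp : cjZ S.good p = p) : LocE (ψ p) := by
  have hpc : ∀ i, cjv (p.1 i) = p.1 i := fun i => congrFun (congrArg Subtype.val hp) i
  obtain ⟨φ1, h1, c1, -⟩ := exists_rotPhi (p.2.1 1) (hpc 1)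
  obtain ⟨φ2, h2, c2, -⟩ := exists_rotPhi (p.2.1 2) (hpc 2)
  obtain ⟨φ3, h3, c3, i3⟩ := exists_rotPhi (p.2.1 3) (hpc 3)
  have hf := S.good
  have cj4 : ∀ a b c d, f ![cjv a, cjv b, cjv c, cjv d] = - f ![a, b, c, d] := fun a b c d => by
    have := hf.cj ![a, b, c, d]
    rw [← this]; congr 1
    ext i <;> fin_cases i <;> rfl
  have e : w = ((w.1, (w.2.re : ℂ)) : VV) + w.2.im • ((0, Complex.I) : VV) := by
    ext <;> simp
  have hz : f ![p.1 0, p.1 1, p.1 2, ((w.1, (w.2.re : ℂ)) : VV)] = 0 := by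
    have := cj4 (p.1 0) (p.1 1) (p.1 2) (w.1, (w.2.re : ℂ))
    rw [hpc, hpc, hpc] at this
    have e2 : cjv (w.1, (w.2.re : ℂ)) = (w.1, (w.2.re : ℂ)) := by simp [cjv]
    rw [e2] at this; linarith
  rw [e, hf.add3, hz, zero_add] at hw
  have hL := right_ne_zero_of_mul hw
  rw [← i3] at hL
  obtain ⟨o, ho⟩ := p_GG hf φ1 φ2 φ3 p ht h h1 h2 h3 hL
  have wa_i : ∀ o, wa (iota o) = cjv (wa o) := fun o => by simp [wa, iota, cjv]
  have wb_i : ∀ o, wb φ1 (iota o) = cjv (wb φ1 o) := fun o => by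
    unfold wb; rw [← c1]; rfl
  have wc_i : ∀ o, wc φ2 (iota o) = cjv (wc φ2 o) := fun o => by
    unfold wc; rw [← c2]; rfl
  have w3_i : ∀ o, w3 φ3 (iota o) = cjv (w3 φ3 o) := fun o => by
    unfold w3; rw [← c3]; simp [iota, cjv]
  have eI_i : eI φ3 = -cjv (eI φ3) := by
    unfold eI; rw [i3]; simp [cjv]
  have AA_i : ∀ o, AA f φ1 φ2 φ3 (iota o) = - AA f φ1 φ2 φ3 o := fun o => by
    unfold AA; rw [wa_i, wb_i, wc_i, w3_i, cj4]
  have CC_i : ∀ o, CC f φ1 φ2 φ3 (iota o) = CC f φ1 φ2 φ3 o := fun o => by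
    have e1 : CC f φ1 φ2 φ3 (iota o) = f ![cjv (wa o), cjv (wb φ1 o), cjv (wc φ2 o), -cjv (eI φ3)] := by
      unfold CC; rw [wa_i, wb_i, wc_i, ← eI_i]
    have e2 := hf.smul4 (cjv (wa o)) (cjv (wb φ1 o)) (cjv (wc φ2 o)) (cjv (eI φ3)) 1 1 1 (-1)
    rw [cj4] at e2
    simp only [one_smul, neg_smul] at e2
    rw [e1, e2]; unfold CC; ring
  have rho_i : ∀ o, rho f φ1 φ2 φ3 (iota o) = - rho f φ1 φ2 φ3 o := fun o => by
    unfold rho; rw [AA_i, CC_i]; ring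
  have wd_i : ∀ o, wd f φ1 φ2 φ3 (iota o) = cjv (wd f φ1 φ2 φ3 o) := fun o => by
    rw [wd_eq, wd_eq, rho_i, ← c3]; congr 1; simp [cjv, iota]
  let io : OO f φ1 φ2 φ3 → OO f φ1 φ2 φ3 := fun o => ⟨iota o.1, by
    show CC f φ1 φ2 φ3 (iota o.1) ≠ 0
    rw [CC_i]; exact o.2⟩
  have G_i : ∀ o, GG φ1 φ2 φ3 hf (io o) = cjZ hf (GG φ1 φ2 φ3 hf o) := fun o => by
    apply Subtype.ext
    show Gfun f φ1 φ2 φ3 (iota o.1) = fun i => cjv (Gfun f φ1 φ2 φ3 o.1 i)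
    unfold Gfun
    rw [wa_i, wb_i, wc_i, wd_i, nrm_cj, nrm_cj, nrm_cj, nrm_cj]
    ext i <;> fin_cases i <;> rfl
  have oO := isOpen_OO φ1 φ2 φ3 hf
  have q := quot_of_open (fun o : OO f φ1 φ2 φ3 => s6 o.1) (s6_cont.comp continuous_subtype_val) (s6_open.comp oO.isOpenMap_subtype_val)
  have key := locE_chart (E := E6) (by simp) (fun o => ψ (GG φ1 φ2 φ3 hf o))
    (S.cont.comp (cont_GG φ1 φ2 φ3 hf)) (psiGG_open S φ1 φ2 φ3) _ q.1 q.2 (fun a b => by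
      rw [S.fib, orb_GG, s6_fib, ← G_i]
      refine or_congr ⟨fun e => by rw [GG_inj _ _ _ _ e], fun e => by rw [Subtype.ext e]⟩
        ⟨fun e => by rw [GG_inj _ _ _ _ e], fun e => ?_⟩
      have : b = io a := Subtype.ext e
      rw [this]) o
  rw [ho] at key
  exact key

lemma chart_gen (S : Setup f ψ) (p : ZZ f) (h : (p.1 0).2 ≠ 0)
    (w : VV) (hw : f ![p.1 0, p.1 1, p.1 2, w] ≠ 0) : LocE (ψ p) := by
  have hu := norm_uu h
  have e : ψ p = ψ (rotZ S.good (uu p.1) hu p) := (S.fib _ _).2 ⟨_, hu, Or.inl fun i => rfl⟩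
  rw [e]
  have hn : 0 < ‖(p.1 0).2‖ := norm_pos_iff.2 h
  have h0 : ((rotZ S.good (uu p.1) hu p).1 0).2 = (‖(p.1 0).2‖ : ℂ) := by
    show uu p.1 * (p.1 0).2 = _
    have h3 : (‖(p.1 0).2‖ : ℂ) ≠ 0 := by exact_mod_cast hn.ne'
    rw [uu, div_mul_eq_mul_div, mul_comm, Complex.mul_conj, Complex.normSq_eq_norm_sq]
    field_simp
    push_cast; ring
  have hw' : f ![(rotZ S.good (uu p.1) hu p).1 0, (rotZ S.good (uu p.1) hu p).1 1, (rotZ S.good (uu p.1) hu p).1 2, rotv (uu p.1) w] ≠ 0 := by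
    have := S.good.rot (uu p.1) ![p.1 0, p.1 1, p.1 2, w] hu
    rw [← this] at hw
    convert hw using 2
    ext i <;> fin_cases i <;> rfl
  by_cases hc : cjZ S.good (rotZ S.good (uu p.1) hu p) = rotZ S.good (uu p.1) hu p
  · exact chart_sym S _ hn h0 _ hw' hc
  · exact chart_free S _ hn h0 _ hw' hc

end final2


lemma chart_ij (v : ZZ f0) (i j : Fin 4) (hij : i ≠ j) (hi : (v.1 i).2 ≠ 0) (w : VV)
    (hw : f0 (Function.update v.1 j w) ≠ 0) : LocE (psi v) := by
  have hs : ∃ σ : Equiv.Perm (Fin 4), σ i = 0 ∧ σ j = 3 := by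
    refine ⟨Equiv.swap (Equiv.swap i 0 j) 3 * Equiv.swap i 0, ?_, ?_⟩
    · rw [Equiv.Perm.mul_apply, Equiv.swap_apply_left, Equiv.swap_apply_of_ne_of_ne _ (by decide)]
      intro h
      apply hij
      apply (Equiv.swap i 0).injective
      rw [← h, Equiv.swap_apply_left]
    · rw [Equiv.Perm.mul_apply, Equiv.swap_apply_left]
  obtain ⟨σ, s0, s3⟩ := hs
  obtain ⟨ψ', S, h⟩ := setup0.perm σ
  have hc : (v.1 ∘ σ.symm) ∘ σ = v.1 := by simp [Function.comp_assoc]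
  let v' : ZZ (fun v => f0 (v ∘ σ)) := ⟨v.1 ∘ σ.symm, fun i => v.2.1 _, by
    show f0 ((v.1 ∘ σ.symm) ∘ σ) = 0
    rw [hc]; exact v.2.2⟩
  rw [← h v v' hc]
  refine chart_gen S v' ?_ w ?_
  · show (v.1 (σ.symm 0)).2 ≠ 0
    rw [← s0, σ.symm_apply_apply]; exact hi
  · show f0 (![v'.1 0, v'.1 1, v'.1 2, w] ∘ σ) ≠ 0
    rw [← upd3 _ _ _ (v'.1 3), ← vec_eta, Function.update_comp_equiv, hc, ← s3, σ.symm_apply_apply]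
    exact hw

abbrev HU : Type := (Quaternion ℝ)ˣ
abbrev PH : Type := HU ⧸ Subgroup.center HU

def uq (v : VV) (h : IsU v) : HU := Units.mk0 (emb v) (ne_zero_of_norm (norm_emb h))
lemma qK_ne : qK ≠ 0 := by
  intro h; have := congrArg QuaternionAlgebra.imK h; simp at this; exact one_ne_zero this
def uK : HU := Units.mk0 qK qK_ne
lemma qI_ne : qI ≠ 0 := by
  intro h; have := congrArg QuaternionAlgebra.imI h; simp at this; exact one_ne_zero this
lemma qJ_ne : qJ ≠ 0 := by
  intro h; have := congrArg QuaternionAlgebra.imJ h; simp at this; exact one_ne_zero this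

lemma eq_of_smul (x y : HU) (l : ℝ) (h : (x : Quaternion ℝ) = (l : Quaternion ℝ) * y) : (x : PH) = (y : PH) := by
  rw [QuotientGroup.eq, Subgroup.mem_center_iff]
  have hl : (l : Quaternion ℝ) ≠ 0 := by
    intro h0; rw [h0, zero_mul] at h; exact x.ne_zero h
  let L : HU := Units.mk0 (l : Quaternion ℝ) hl
  have hx : x = L * y := Units.ext h
  have hL : ∀ g : HU, L * g = g * L := fun g => Units.ext (Quaternion.coe_commutes l (g : Quaternion ℝ))
  intro g
  have : x⁻¹ * y = L⁻¹ := by rw [hx, hL]; group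
  rw [this]
  have h2 := hL g
  rw [eq_inv_mul_iff_mul_eq, ← mul_assoc, h2]; group

lemma central_zero {v : VV} (h : IsU v) (hc : (uq v h : PH) = 1) : v.2 = 0 := by
  rw [QuotientGroup.eq_one_iff, Subgroup.mem_center_iff] at hc
  have h1 := congrArg (fun x : HU => (x : Quaternion ℝ).imK) (hc (Units.mk0 qI qI_ne))
  have h2 := congrArg (fun x : HU => (x : Quaternion ℝ).imK) (hc (Units.mk0 qJ qJ_ne))
  simp [uq] at h1 h2
  apply Complex.ext
  · simp; linarith
  · simp; linarith

lemma vanish (A B : HU) (h : ∀ w : VV, ((A : Quaternion ℝ) * emb w * B).imK = 0) :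
    (B : PH) * (uK : PH) * (A : PH) = (uK : PH) := by
  have h1 := h (1, 0)
  have h2 := h (0, 1)
  have h3 := h (0, Complex.I)
  rw [← QuotientGroup.mk_mul, ← QuotientGroup.mk_mul]
  apply eq_of_smul _ _ ((B : Quaternion ℝ) * qK * A).imK
  simp only [Quaternion.imK_mul, Quaternion.re_mul, Quaternion.imI_mul, Quaternion.imJ_mul, emb_re, emb_imI, emb_imJ, emb_imK] at h1 h2 h3
  simp at h1 h2 h3
  simp only [Units.val_mul, uK, Units.val_mk0]
  ext <;> simp
  · linear_combination -h1
  · linear_combination h2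
  · linear_combination h3

lemma Kconj {v : VV} (h : IsU v) : (uq v h : PH) * (uK : PH) = (uK : PH) * (uq v h : PH)⁻¹ := by
  rw [← QuotientGroup.mk_inv, ← QuotientGroup.mk_mul, ← QuotientGroup.mk_mul]
  congr 1
  apply Units.ext
  simp only [Units.val_mul, uK, Units.val_mk0, uq, Units.val_inv_eq_inv_val, inv_eq_star (norm_emb h)]
  ext <;> simp

section grp
variable {G : Type*} [Group G] {a b c d k : G}
lemma g3 (h : 1 * k * (a * b * c) = k) : a * b * c = 1 := by simpa using h
lemma g2 (hd : d * k = k * d⁻¹) (h : d * k * (a * b) = k) : a * b = d := by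
  rw [hd, mul_assoc, mul_eq_left, inv_mul_eq_one] at h; exact h.symm
lemma g1 (hc : c * k = k * c⁻¹) (hd : d * k = k * d⁻¹) (h : c * d * k * a = k) : a = d * c := by
  rw [mul_assoc c d k, hd, ← mul_assoc, hc, mul_assoc, mul_assoc, mul_eq_left, ← mul_assoc, ← mul_inv_rev, inv_mul_eq_one] at h
  exact h.symm
lemma g0 (h : b * c * d * k * 1 = k) : b * c * d = 1 := by simpa using h
lemma k0 (h1 : a = d * c) (h2 : a * b = d) (h3 : a * b * c = 1) : a = 1 := by
  rw [h2] at h3; rw [h1, h3]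
lemma k1 (h0 : b * c * d = 1) (h2 : a * b = d) (h3 : a * b * c = 1) : b = 1 := by
  rw [h2] at h3
  have : c = d⁻¹ := eq_inv_of_mul_eq_one_right h3
  simpa [this] using h0
lemma k2 (h0 : b * c * d = 1) (h1 : a = d * c) (h3 : a * b * c = 1) : c = 1 := by
  have hb : b = (c * d)⁻¹ := eq_inv_of_mul_eq_one_left (by rw [← mul_assoc]; exact h0)
  rw [h1, hb] at h3
  have : d * c * (c * d)⁻¹ * c = d * c * d⁻¹ := by group
  rw [this] at h3
  have h4 : d * c = d := by simpa [mul_inv_eq_one] using h3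
  simpa using h4
lemma k3 (h0 : b * c * d = 1) (h1 : a = d * c) (h2 : a * b = d) : d = 1 := by
  rw [h1, mul_assoc, mul_eq_left] at h2
  have : b = c⁻¹ := eq_inv_of_mul_eq_one_right h2
  simpa [this] using h0
end grp

lemma all_points (v : ZZ f0) : LocE (psi v) := by
  by_cases hv : ∀ i, (v.1 i).2 = 0
  · exact locE_central v hv
  push Not at hv
  obtain ⟨i, hi⟩ := hv
  by_contra hcon
  have H : ∀ j, i ≠ j → ∀ w, f0 (Function.update v.1 j w) = 0 := fun j hij w => by
    by_contra hw
    exact hcon (chart_ij v i j hij hi w hw)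
  have U := v.2.1
  set a := (uq _ (U 0) : PH) with ha
  set b := (uq _ (U 1) : PH) with hb
  set c := (uq _ (U 2) : PH) with hc
  set d := (uq _ (U 3) : PH) with hd
  have kc := Kconj (U 2)
  have kd := Kconj (U 3)
  have H0 : i ≠ 0 → b * c * d = 1 := fun h => g0 (vanish 1 (uq _ (U 1) * uq _ (U 2) * uq _ (U 3)) fun w => by
    have := H 0 h w
    rw [vec_eta v.1, upd0] at this
    simpa [f0, uq, mul_assoc] using this)
  have H1 : i ≠ 1 → a = d * c := fun h => g1 kc kd (vanish (uq _ (U 0)) (uq _ (U 2) * uq _ (U 3)) fun w => by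
    have := H 1 h w
    rw [vec_eta v.1, upd1] at this
    simpa [f0, uq, mul_assoc] using this)
  have H2 : i ≠ 2 → a * b = d := fun h => g2 kd (vanish (uq _ (U 0) * uq _ (U 1)) (uq _ (U 3)) fun w => by
    have := H 2 h w
    rw [vec_eta v.1, upd2] at this
    simpa [f0, uq, mul_assoc] using this)
  have H3 : i ≠ 3 → a * b * c = 1 := fun h => g3 (vanish (uq _ (U 0) * uq _ (U 1) * uq _ (U 2)) 1 fun w => by
    have := H 3 h w
    rw [vec_eta v.1, upd3] at this
    simpa [f0, uq, mul_assoc] using this)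
  apply hi
  fin_cases i
  · exact central_zero (U 0) (k0 (H1 (by decide)) (H2 (by decide)) (H3 (by decide)))
  · exact central_zero (U 1) (k1 (H0 (by decide)) (H2 (by decide)) (H3 (by decide)))
  · exact central_zero (U 2) (k2 (H0 (by decide)) (H1 (by decide)) (H3 (by decide)))
  · exact central_zero (U 3) (k3 (H0 (by decide)) (H1 (by decide)) (H2 (by decide)))

/-- `χ(F₂)` is a compact Hausdorff space in which every point has an open neighborhood
homeomorphic to `ℝ⁶`; i.e. `χ(F₂)` is a closed topological 6-manifold. -/
theorem chiF2_is_closed_topological_six_manifold :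
    CompactSpace ChiF2 ∧ T2Space ChiF2 ∧
      ∀ x : ChiF2, ∃ U : Set ChiF2, x ∈ U ∧ IsOpen U ∧ Nonempty (U ≃ₜ (Fin 6 → ℝ)) := by
  refine ⟨compactChi, t2Chi, fun x => ?_⟩
  obtain ⟨v, rfl⟩ := psi_surj x
  exact all_points v
end
end

section
/- Let Y = {(x₁,…,x₆) ∈ SU(2)⁶ : Re(xᵢ) = 0 for all i, and x₁x₂x₃x₄x₅x₆ = 1}, and let χ(S²,6) denote the quotient of Y by simultaneous conjugation by SU(2), with the quotient topology. Let ν : χ(S²,6) → χ(S²,6) be the involution induced by (x₁,…,x₆) ↦ (−x₁,…,−x₆). Let X = {(R₋,S₋,R₊,S₊) ∈ SU(2)⁴ : R₋S₋R₋⁻¹S₋⁻¹R₊S₊R₊⁻¹S₊⁻¹ = 1} and let χ(F₂) be its quotient by simultaneous conjugation, with the quotient topology. Then the map p* sending the conjugacy class of (x₁,…,x₆) to the conjugacy class of (x₁x₂, x₃⁻¹x₂⁻¹, x₄x₅, x₆⁻¹x₅⁻¹) is a well-defined continuous surjection χ(S²,6) → χ(F₂) satisfying p*∘ν = p*, and the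 induced map on the quotient χ(S²,6)/ν → χ(F₂) is a homeomorphism. -/
noncomputable section

/-- The condition defining the traceless representation space of the six punctured sphere:
sixtuples of traceless unit quaternions whose product is `1`. -/
def memY (x : Fin 6 → Quaternion ℝ) : Prop :=
  (∀ i, ‖x i‖ = 1) ∧ (∀ i, (x i).re = 0) ∧ x 0 * x 1 * x 2 * x 3 * x 4 * x 5 = 1

abbrev SixPuncturedRepSpace : Type := {x // memY x}

/-- Simultaneous conjugation relation on `Y`. -/
def conjRelY (s t : SixPuncturedRepSpace) : Prop :=
  ∃ u : Quaternion ℝ, ‖u‖ = 1 ∧ ∀ i, t.1 i = u * s.1 i * u⁻¹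

/-- The traceless `SU(2)` character variety `χ(S²,6)` of the six punctured sphere. -/
abbrev ChiS26 : Type := Quot conjRelY

/-- The quadruple `(x₁x₂, x₃⁻¹x₂⁻¹, x₄x₅, x₆⁻¹x₅⁻¹)` associated to a sixtuple. -/
def pstarTuple (x : Fin 6 → Quaternion ℝ) :
    Quaternion ℝ × Quaternion ℝ × Quaternion ℝ × Quaternion ℝ :=
  (x 0 * x 1, (x 2)⁻¹ * (x 1)⁻¹, x 3 * x 4, (x 5)⁻¹ * (x 4)⁻¹)

lemma aux_sq {x : Quaternion ℝ} (h : ‖x‖ = 1) (h0 : x.re = 0) : x * x = -1 := by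
  have h1 : Quaternion.normSq x = 1 := by rw [Quaternion.normSq_eq_norm_mul_self, h]; norm_num
  rw [Quaternion.normSq_def'] at h1
  have o1 : (1 : Quaternion ℝ).re = 1 := rfl
  have o2 : (1 : Quaternion ℝ).imI = 0 := rfl
  have o3 : (1 : Quaternion ℝ).imJ = 0 := rfl
  have o4 : (1 : Quaternion ℝ).imK = 0 := rfl
  ext <;> simp [h0, o1, o2, o3, o4] <;> nlinarith

lemma aux_inv {x : Quaternion ℝ} (h : x * x = -1) : x⁻¹ = -x := by
  apply inv_eq_of_mul_eq_one_right
  simp [h]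

lemma aux_re {x : Quaternion ℝ} (h : x * x = -1) : x.re = 0 := by
  have h1 := congrArg (fun q : Quaternion ℝ => q.re) h
  have h2 := congrArg (fun q : Quaternion ℝ => q.imI) h
  have h3 := congrArg (fun q : Quaternion ℝ => q.imJ) h
  have h4 := congrArg (fun q : Quaternion ℝ => q.imK) h
  have o1 : (1 : Quaternion ℝ).re = 1 := rfl
  have o2 : (1 : Quaternion ℝ).imI = 0 := rfl
  have o3 : (1 : Quaternion ℝ).imJ = 0 := rfl
  have o4 : (1 : Quaternion ℝ).imK = 0 := rfl
  simp [o1, o2, o3, o4] at h1 h2 h3 h4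
  by_contra h0
  have e2 : x.imI = 0 := by
    have : x.re * x.imI = 0 := by linarith
    simpa [h0] using this
  have e3 : x.imJ = 0 := by
    have : x.re * x.imJ = 0 := by linarith
    simpa [h0] using this
  have e4 : x.imK = 0 := by
    have : x.re * x.imK = 0 := by linarith
    simpa [h0] using this
  rw [e2, e3, e4] at h1
  nlinarith

lemma aux_norm {x : Quaternion ℝ} (h : x * x = -1) : ‖x‖ = 1 := by
  have := congrArg norm h
  rw [norm_mul, norm_neg, norm_one] at this
  nlinarith [norm_nonneg x]

lemma aux_comm {p q : Quaternion ℝ} : p * q = q * p ↔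
    p.imJ * q.imK = p.imK * q.imJ ∧ p.imK * q.imI = p.imI * q.imK ∧
      p.imI * q.imJ = p.imJ * q.imI := by
  rw [Quaternion.ext_iff]
  simp
  constructor
  · rintro ⟨h1, h2, h3, h4⟩
    refine ⟨?_, ?_, ?_⟩ <;> linarith
  · rintro ⟨h1, h2, h3⟩
    refine ⟨?_, ?_, ?_, ?_⟩ <;> linarith

lemma aux_central {t R S : Quaternion ℝ} (h1 : t * R = R * t) (h2 : t * S = S * t)
    (h3 : R * S ≠ S * R) : t = (t.re : Quaternion ℝ) := by
  rw [aux_comm] at h1 h2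
  obtain ⟨a1, a2, a3⟩ := h1
  obtain ⟨b1, b2, b3⟩ := h2
  by_contra hne
  apply h3
  rw [aux_comm]
  by_cases hI : t.imI = 0
  · by_cases hJ : t.imJ = 0
    · by_cases hK : t.imK = 0
      · exact absurd (by ext <;> simp [hI, hJ, hK]) hne
      · refine ⟨?_, ?_, ?_⟩ <;> apply mul_left_cancel₀ hK <;> grind
    · refine ⟨?_, ?_, ?_⟩ <;> apply mul_left_cancel₀ hJ <;> grind
  · refine ⟨?_, ?_, ?_⟩ <;> apply mul_left_cancel₀ hI <;> grind

lemma aux_flip {q v : Quaternion ℝ} (h0 : v.re = 0) (h : (q * v).re = 0) (hq : ‖q‖ = 1) :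
    q * v = v * q⁻¹ := by
  have : q⁻¹ = star q := by
    apply inv_eq_of_mul_eq_one_right
    rw [Quaternion.self_mul_star, Quaternion.normSq_eq_norm_mul_self, hq]; simp
  rw [this]
  simp [h0] at h
  ext <;> simp [h0] <;> linarith

/-- two unit imaginary quaternions flipping noncommuting `R,S` agree up to sign. -/
lemma aux_pm {b b' R S : Quaternion ℝ} (hb : b * b = -1) (hb' : b' * b' = -1)
    (h1 : R * b = b * R⁻¹) (h2 : S * b = b * S⁻¹)
    (h1' : R * b' = b' * R⁻¹) (h2' : S * b' = b' * S⁻¹) (hR : R ≠ 0) (hS : S ≠ 0)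
    (h3 : R * S ≠ S * R) : b' = b ∨ b' = -b := by
  have key : ∀ Q : Quaternion ℝ, Q ≠ 0 → Q * b = b * Q⁻¹ → Q * b' = b' * Q⁻¹ →
      b' * b * Q = Q * (b' * b) := by
    intro Q hQ h h'
    have : Q⁻¹ * b = b * Q := by
      rw [inv_mul_eq_iff_eq_mul₀ hQ, ← mul_assoc, h, mul_assoc, inv_mul_cancel₀ hQ, mul_one]
    rw [← mul_assoc, h', mul_assoc, mul_assoc, this]
  have hc := aux_central (key R hR h1 h1') (key S hS h2 h2') h3
  set r := (b' * b).re
  have hn : ‖b' * b‖ = 1 := by rw [norm_mul, aux_norm hb, aux_norm hb', mul_one]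
  have hbb : b' = -(b' * b) * b := by rw [neg_mul, mul_assoc, hb]; simp
  rw [hc] at hn hbb
  rw [Quaternion.norm_coe, Real.norm_eq_abs] at hn
  rcases eq_or_eq_neg_of_abs_eq hn with h | h
  · right; rw [hbb, h]; simp
  · left; rw [hbb, h]; simp

lemma aux_exists (p q : Quaternion ℝ) : ∃ v : Quaternion ℝ, ‖v‖ = 1 ∧ v.re = 0 ∧
    (p * v).re = 0 ∧ (q * v).re = 0 := by
  let f : Quaternion ℝ →ₗ[ℝ] (Fin 3 → ℝ) :=
    { toFun := fun v => ![v.re, (p * v).re, (q * v).re]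
      map_add' := by intro x y; ext i; fin_cases i <;> simp <;> ring
      map_smul' := by intro x y; ext i; fin_cases i <;> simp <;> ring }
  have hk := LinearMap.ker_ne_bot_of_finrank_lt (f := f) (by simp [Quaternion.finrank_eq_four])
  obtain ⟨w, hw, hw0⟩ := (Submodule.ne_bot_iff _).1 hk
  have hw' : f w = 0 := hw
  have e0 : w.re = 0 := congrFun hw' 0
  have e1 : (p * w).re = 0 := congrFun hw' 1
  have e2 : (q * w).re = 0 := congrFun hw' 2
  refine ⟨‖w‖⁻¹ • w, ?_, ?_, ?_, ?_⟩
  · rw [norm_smul, norm_inv, norm_norm, inv_mul_cancel₀ (norm_ne_zero_iff.2 hw0)]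
  · rw [Quaternion.re_smul, e0, smul_zero]
  · rw [mul_smul_comm, Quaternion.re_smul, e1, smul_zero]
  · rw [mul_smul_comm, Quaternion.re_smul, e2, smul_zero]

lemma aux_axis {R S : Quaternion ℝ} (h : R * S = S * R) : ∃ p : Quaternion ℝ,
    ∀ v : Quaternion ℝ, v.re = 0 → (p * v).re = 0 → (R * v).re = 0 ∧ (S * v).re = 0 := by
  rw [aux_comm] at h
  obtain ⟨a1, a2, a3⟩ := h
  by_cases hI : R.imI = 0
  · by_cases hJ : R.imJ = 0
    · by_cases hK : R.imK = 0
      · exact ⟨S, fun v h0 h => ⟨by simp [h0, hI, hJ, hK], h⟩⟩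
      · refine ⟨R, fun v h0 h => ⟨h, ?_⟩⟩
        simp [h0] at h ⊢
        apply mul_left_cancel₀ hK; grind
    · refine ⟨R, fun v h0 h => ⟨h, ?_⟩⟩
      simp [h0] at h ⊢
      apply mul_left_cancel₀ hJ; grind
  · refine ⟨R, fun v h0 h => ⟨h, ?_⟩⟩
    simp [h0] at h ⊢
    apply mul_left_cancel₀ hI; grind

lemma aux_sqrt {g k : Quaternion ℝ} (hg : ‖g‖ = 1) (h : g * g = k * k) (h1 : g * g ≠ -1) :
    g = k ∨ g = -k := by
  have hc : g * k = k * g := by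
    by_contra hne
    have hm := aux_central (t := g * g) (R := g) (S := k) (mul_assoc _ _ _)
      (by rw [h, mul_assoc]) hne
    have hn : ‖g * g‖ = 1 := by rw [norm_mul, hg, mul_one]
    rw [hm, Quaternion.norm_coe, Real.norm_eq_abs] at hn
    rcases eq_or_eq_neg_of_abs_eq hn with h2 | h2
    · rw [h2] at hm
      have : g * g = 1 := by simpa using hm
      rcases mul_self_eq_one_iff.1 this with h3 | h3 <;> simp [h3] at hne
    · rw [h2] at hm
      exact h1 (by simpa using hm)
  have : (g - k) * (g + k) = 0 := by
    rw [sub_mul, mul_add, mul_add, h, hc]; abel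
  rcases mul_eq_zero.1 this with h2 | h2
  · left; exact sub_eq_zero.1 h2
  · right; exact eq_neg_of_add_eq_zero_left h2

lemma aux_flip_inv {Q v : Quaternion ℝ} (hQ : Q ≠ 0) (h : Q * v = v * Q⁻¹) :
    Q⁻¹ * v = v * Q := by
  rw [inv_mul_eq_iff_eq_mul₀ hQ, ← mul_assoc, h, mul_assoc, inv_mul_cancel₀ hQ, mul_one]

lemma aux_flip_mul {R S v : Quaternion ℝ} (h : R * v = v * R⁻¹) (h' : S * v = v * S⁻¹)
    (hc : R * S = S * R) : R * S * v = v * (R * S)⁻¹ := by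
  rw [mul_assoc, h', ← mul_assoc, h, hc, mul_inv_rev, mul_assoc]

lemma aux_flip_sq {Q v : Quaternion ℝ} (hQ : Q ≠ 0) (h : Q * v = v * Q⁻¹) (hv : v * v = -1) :
    Q * v * (Q * v) = -1 := by
  nth_rw 1 [h]
  rw [mul_assoc, inv_mul_cancel_left₀ hQ, hv]

lemma aux_flip_comm {R Q v : Quaternion ℝ} (h : R * v = v * R⁻¹) (hc : R * Q = Q * R) :
    R * (Q * v) = Q * v * R⁻¹ := by
  rw [← mul_assoc, hc, mul_assoc, h, mul_assoc]

lemma aux_half {R S v : Quaternion ℝ} (hR : R ≠ 0) (hS : S ≠ 0) (h : R * v = v * R⁻¹)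
    (h' : S * v = v * S⁻¹) (hc : R * S = S * R) (hv : v * v = -1) :
    ∃ b : Quaternion ℝ, b * b = -1 ∧ R * b = b * R⁻¹ ∧ S * b = b * S⁻¹ ∧ R * S * b = v := by
  have hRS : R * S ≠ 0 := mul_ne_zero hR hS
  refine ⟨(R * S)⁻¹ * v, ?_, ?_, ?_, ?_⟩
  · apply aux_flip_sq (inv_ne_zero hRS) _ hv
    rw [aux_flip_inv hRS (aux_flip_mul h h' hc), inv_inv]
  · apply aux_flip_comm h
    have : Commute R (R * S) := (Commute.refl R).mul_right hc
    exact this.inv_right₀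
  · apply aux_flip_comm h'
    have : Commute S (R * S) := Commute.mul_right hc.symm (Commute.refl S)
    exact this.inv_right₀
  · rw [mul_inv_cancel_left₀ hRS]

lemma aux_gsq {R S b : Quaternion ℝ} (hb : b * b = -1) (h : R * b = b * R⁻¹)
    (hR : R ≠ 0) (hS : S ≠ 0)
    (h' : S * b = b * S⁻¹) : R * S * b * (R * S * b) = -(R * S * R⁻¹ * S⁻¹) := by
  have e1 : b * R = R⁻¹ * b := (aux_flip_inv hR h).symm
  have e2 : b * S = S⁻¹ * b := (aux_flip_inv hS h').symm
  calc R * S * b * (R * S * b) = R * S * (b * R) * S * b := by simp only [mul_assoc]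
    _ = R * S * R⁻¹ * (b * S) * b := by rw [e1]; simp only [mul_assoc]
    _ = R * S * R⁻¹ * S⁻¹ * (b * b) := by rw [e2]; simp only [mul_assoc]
    _ = _ := by rw [hb]; simp

lemma aux_commutator {R S : Quaternion ℝ} (hR : R ≠ 0) (hS : S ≠ 0) :
    R * S * R⁻¹ * S⁻¹ = 1 ↔ R * S = S * R := by
  rw [mul_inv_eq_one₀ hS, mul_inv_eq_iff_eq_mul₀ hR]

lemma aux_find {R S R' S' : Quaternion ℝ} (nR : ‖R‖ = 1) (nS : ‖S‖ = 1) (nR' : ‖R'‖ = 1)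
    (nS' : ‖S'‖ = 1) (hrel : R * S * R⁻¹ * S⁻¹ * (R' * S' * R'⁻¹ * S'⁻¹) = 1) :
    ∃ b e : Quaternion ℝ, b * b = -1 ∧ e * e = -1 ∧ R * b = b * R⁻¹ ∧ S * b = b * S⁻¹ ∧
      R' * e = e * R'⁻¹ ∧ S' * e = e * S'⁻¹ ∧ R * S * b * (R' * S' * e) = 1 := by
  have z : ∀ {q : Quaternion ℝ}, ‖q‖ = 1 → q ≠ 0 := by
    intro q hq h0; simp [h0] at hq
  by_cases hc : R * S = S * R
  · have hc' : R' * S' = S' * R' := by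
      rw [(aux_commutator (z nR) (z nS)).2 hc, one_mul] at hrel
      exact (aux_commutator (z nR') (z nS')).1 hrel
    obtain ⟨p, hp⟩ := aux_axis hc
    obtain ⟨q, hq⟩ := aux_axis hc'
    obtain ⟨v, nv, rv, pv, qv⟩ := aux_exists p q
    have hv := aux_sq nv rv
    obtain ⟨b, b1, b2, b3, b4⟩ := aux_half (z nR) (z nS) (aux_flip rv (hp v rv pv).1 nR)
      (aux_flip rv (hp v rv pv).2 nS) hc hv
    obtain ⟨e, e1, e2, e3, e4⟩ := aux_half (z nR') (z nS') (aux_flip rv (hq v rv qv).1 nR')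
      (aux_flip rv (hq v rv qv).2 nS') hc' hv
    refine ⟨b, -e, b1, by simpa using e1, b2, b3, by simpa using e2, by simpa using e3, ?_⟩
    rw [b4, mul_neg, e4, mul_neg, hv, neg_neg]
  · obtain ⟨b, nb, rb, b1, b2⟩ := aux_exists R S
    obtain ⟨e, ne, re, e1, e2⟩ := aux_exists R' S'
    have fb1 := aux_flip rb b1 nR
    have fb2 := aux_flip rb b2 nS
    have fe1 := aux_flip re e1 nR'
    have fe2 := aux_flip re e2 nS'
    have hb := aux_sq nb rb
    have he := aux_sq ne re
    have hg := aux_gsq hb fb1 (z nR) (z nS) fb2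
    have hh := aux_gsq he fe1 (z nR') (z nS') fe2
    have hk0 : R' * S' * e ≠ 0 := mul_ne_zero (mul_ne_zero (z nR') (z nS')) (z ne)
    have := aux_sqrt (g := R * S * b) (k := (R' * S' * e)⁻¹) (by simp [nR, nS, nb])
      (by
        rw [← mul_inv_rev, hg, hh, eq_comm]
        apply inv_eq_of_mul_eq_one_left
        rw [neg_mul_neg, hrel])
      (by
        rw [hg, ne_eq, neg_inj, aux_commutator (z nR) (z nS)]; exact hc)
    rcases this with h | h
    · refine ⟨b, e, hb, he, fb1, fb2, fe1, fe2, ?_⟩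
      rw [h, inv_mul_cancel₀ hk0]
    · refine ⟨b, -e, hb, by simpa using he, fb1, fb2, by simpa using fe1, by simpa using fe2, ?_⟩
      rw [h, mul_neg, neg_mul_neg, inv_mul_cancel₀ hk0]

lemma memY_iff {x : Fin 6 → Quaternion ℝ} : memY x ↔
    (∀ i, x i * x i = -1) ∧ x 0 * x 1 * x 2 * x 3 * x 4 * x 5 = 1 :=
  ⟨fun h => ⟨fun i => aux_sq (h.1 i) (h.2.1 i), h.2.2⟩,
    fun h => ⟨fun i => aux_norm (h.1 i), fun i => aux_re (h.1 i), h.2⟩⟩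

lemma aux_flip_of {a b : Quaternion ℝ} (ha : a * a = -1) (hb : b * b = -1) :
    a * b * b = b * (a * b)⁻¹ := by
  have hb0 : b ≠ 0 := by rintro rfl; simp at hb
  rw [mul_inv_rev, mul_inv_cancel_left₀ hb0, aux_inv ha, mul_assoc, hb]; simp

/-- The structure of a point of `Y` in terms of its image. -/
lemma aux_struct {x : Fin 6 → Quaternion ℝ} (hx : memY x) {R S R' S' : Quaternion ℝ}
    (h : pstarTuple x = (R, S, R', S')) :
    R ≠ 0 ∧ S ≠ 0 ∧ R' ≠ 0 ∧ S' ≠ 0 ∧ ‖R‖ = 1 ∧ ‖S‖ = 1 ∧ ‖R'‖ = 1 ∧ ‖S'‖ = 1 ∧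
    R * x 1 = x 1 * R⁻¹ ∧ S * x 1 = x 1 * S⁻¹ ∧ R' * x 4 = x 4 * R'⁻¹ ∧ S' * x 4 = x 4 * S'⁻¹ ∧
    x 0 = -(R * x 1) ∧ x 2 = -(S * x 1) ∧ x 3 = -(R' * x 4) ∧ x 5 = -(S' * x 4) ∧
    R * S * x 1 * (R' * S' * x 4) = 1 := by
  have hn := hx.1
  obtain ⟨hs, hp⟩ := memY_iff.1 hx
  simp only [pstarTuple, Prod.mk.injEq] at h
  rw [aux_inv (hs 1), aux_inv (hs 2), aux_inv (hs 4), aux_inv (hs 5), neg_mul_neg, neg_mul_neg] at h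
  obtain ⟨rfl, rfl, rfl, rfl⟩ := h
  have z : ∀ i, x i ≠ 0 := by
    intro i h0; have := hn i; simp [h0] at this
  refine ⟨by simp [z], by simp [z], by simp [z], by simp [z], by simp [hn], by simp [hn],
    by simp [hn], by simp [hn], aux_flip_of (hs _) (hs _), aux_flip_of (hs _) (hs _),
    aux_flip_of (hs _) (hs _), aux_flip_of (hs _) (hs _), ?_, ?_, ?_, ?_, ?_⟩
  · rw [mul_assoc, hs]; simp
  · rw [mul_assoc, hs]; simp
  · rw [mul_assoc, hs]; simp
  · rw [mul_assoc, hs]; simp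
  · rw [← hp]
    calc _ = x 0 * x 1 * x 2 * (x 1 * x 1) * x 3 * x 4 * x 5 * (x 4 * x 4) := by
          simp only [mul_assoc]
      _ = _ := by rw [hs, hs]; simp

lemma aux_surj {R S R' S' : Quaternion ℝ} (h : memX (R, S, R', S')) :
    ∃ x, memY x ∧ pstarTuple x = (R, S, R', S') := by
  obtain ⟨nR, nS, nR', nS', hrel⟩ := h
  simp only at nR nS nR' nS' hrel
  have z : ∀ {q : Quaternion ℝ}, ‖q‖ = 1 → q ≠ 0 := by
    intro q hq h0; simp [h0] at hq
  obtain ⟨b, e, hb, he, b1, b2, e1, e2, hp⟩ := aux_find nR nS nR' nS' hrel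
  have s1 := aux_flip_sq (z nR) b1 hb
  have s2 := aux_flip_sq (z nS) b2 hb
  have s3 := aux_flip_sq (z nR') e1 he
  have s4 := aux_flip_sq (z nS') e2 he
  refine ⟨![-(R * b), b, -(S * b), -(R' * e), e, -(S' * e)], memY_iff.2 ⟨?_, ?_⟩, ?_⟩
  · intro i
    fin_cases i
    · simpa using s1
    · simpa using hb
    · simpa using s2
    · simpa using s3
    · simpa using he
    · simpa using s4
  · change -(R * b) * b * -(S * b) * -(R' * e) * e * -(S' * e) = 1
    calc _ = R * (b * b) * S * b * R' * (e * e) * S' * e := by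
            simp only [mul_assoc, neg_mul, mul_neg, neg_neg]
      _ = R * S * b * (R' * S' * e) := by
            rw [hb, he]; simp only [mul_assoc, neg_mul, mul_neg, neg_neg, one_mul]
      _ = 1 := hp
  · change (-(R * b) * b, (-(S * b))⁻¹ * b⁻¹, -(R' * e) * e, (-(S' * e))⁻¹ * e⁻¹) = _
    have s2' : -(S * b) * -(S * b) = -1 := by simpa using s2
    have s4' : -(S' * e) * -(S' * e) = -1 := by simpa using s4
    rw [aux_inv hb, aux_inv he, aux_inv s2', aux_inv s4']
    simp [mul_assoc, hb, he]

lemma aux_memX {x : Fin 6 → Quaternion ℝ} (hx : memY x) : memX (pstarTuple x) := by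
  obtain ⟨R, S, R', S', hP⟩ : ∃ R S R' S', pstarTuple x = (R, S, R', S') := ⟨_, _, _, _, rfl⟩
  obtain ⟨z1, z2, z3, z4, nR, nS, nR', nS', f1, f2, f3, f4, -, -, -, -, hp⟩ := aux_struct hx hP
  rw [hP]
  have hs := (memY_iff.1 hx).1
  refine ⟨nR, nS, nR', nS', ?_⟩
  have g1 := aux_gsq (hs 1) f1 z1 z2 f2
  have g2 := aux_gsq (hs 4) f3 z3 z4 f4
  rw [← neg_mul_neg]
  simp only
  rw [← g1, ← g2]
  generalize R * S * x 1 = g at *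
  generalize R' * S' * x 4 = k at *
  calc g * g * (k * k) = g * (g * k) * k := by simp only [mul_assoc]
    _ = 1 := by rw [hp, mul_one, hp]

lemma aux_normalize {x y : Fin 6 → Quaternion ℝ} {u : Quaternion ℝ} (hu : u ≠ 0)
    (h : ∀ i, u * x i = y i * u) :
    ∃ u : Quaternion ℝ, ‖u‖ = 1 ∧ ∀ i, y i = u * x i * u⁻¹ := by
  have hn : ‖u‖ ≠ 0 := norm_ne_zero_iff.2 hu
  refine ⟨‖u‖⁻¹ • u, ?_, fun i => ?_⟩
  · rw [norm_smul, norm_inv, norm_norm, inv_mul_cancel₀ hn]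
  · rw [eq_mul_inv_iff_mul_eq₀ (smul_ne_zero (inv_ne_zero hn) hu), mul_smul_comm, smul_mul_assoc,
      h]

lemma aux_same {x y : Fin 6 → Quaternion ℝ} (hx : memY x) (hy : memY y)
    (hxy : pstarTuple x = pstarTuple y) :
    (∃ u : Quaternion ℝ, ‖u‖ = 1 ∧ ∀ i, y i = u * x i * u⁻¹) ∨ ∀ i, y i = -x i := by
  obtain ⟨R, S, R', S', hP⟩ : ∃ R S R' S', pstarTuple x = (R, S, R', S') := ⟨_, _, _, _, rfl⟩
  obtain ⟨z1, z2, z3, z4, nR, nS, nR', nS', f1, f2, f3, f4, x0, x2, x3, x5, hp⟩ :=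
    aux_struct hx hP
  obtain ⟨-, -, -, -, -, -, -, -, f1', f2', f3', f4', y0, y2, y3, y5, hp'⟩ :=
    aux_struct hy (hxy ▸ hP)
  have hX := aux_memX hx
  rw [hP] at hX
  have hrel : R * S * R⁻¹ * S⁻¹ * (R' * S' * R'⁻¹ * S'⁻¹) = 1 := hX.2.2.2.2
  have hs := (memY_iff.1 hx).1
  have hs' := (memY_iff.1 hy).1
  have fin : ∀ P : Fin 6 → Prop, P 0 → P 1 → P 2 → P 3 → P 4 → P 5 → ∀ i, P i := by
    intro P h0 h1 h2 h3 h4 h5 i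
    fin_cases i <;> assumption
  have hneg : y 1 = -x 1 → y 4 = -x 4 → ∀ i, y i = -x i := by
    intro h1 h4
    apply fin
    · rw [y0, x0, h1, mul_neg]
    · exact h1
    · rw [y2, x2, h1, mul_neg]
    · rw [y3, x3, h4, mul_neg]
    · exact h4
    · rw [y5, x5, h4, mul_neg]
  have hbad : (1 : Quaternion ℝ) ≠ -1 := by
    intro h
    have := congrArg (fun q : Quaternion ℝ => q.re) h
    have o1 : (1 : Quaternion ℝ).re = 1 := rfl
    simp [o1] at this
    linarith
  by_cases hc : R * S = S * R
  · have hc' : R' * S' = S' * R' := by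
      rw [(aux_commutator z1 z2).2 hc, one_mul] at hrel
      exact (aux_commutator z3 z4).1 hrel
    have g2 : R * S * x 1 * (R * S * x 1) = -1 := by
      rw [aux_gsq (hs 1) f1 z1 z2 f2, (aux_commutator z1 z2).2 hc]
    have g2' : R * S * y 1 * (R * S * y 1) = -1 := by
      rw [aux_gsq (hs' 1) f1' z1 z2 f2', (aux_commutator z1 z2).2 hc]
    have hRS : R * S ≠ 0 := mul_ne_zero z1 z2
    have hRS' : R' * S' ≠ 0 := mul_ne_zero z3 z4
    have k1 : R' * S' * x 4 = -(R * S * x 1) := by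
      rw [← aux_inv g2]; exact (inv_eq_of_mul_eq_one_right hp).symm
    have k1' : R' * S' * y 4 = -(R * S * y 1) := by
      rw [← aux_inv g2']; exact (inv_eq_of_mul_eq_one_right hp').symm
    have c1 : R * (R * S) = R * S * R := by rw [mul_assoc, hc]
    have c2 : S * (R * S) = R * S * S := by rw [← mul_assoc, hc]
    have c3 : R' * (R' * S') = R' * S' * R' := by rw [mul_assoc, hc']
    have c4 : S' * (R' * S') = R' * S' * S' := by rw [← mul_assoc, hc']
    have q1 := aux_flip_comm f1 c1
    have q2 := aux_flip_comm f2 c2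
    have q3 := aux_flip_comm f3 c3
    have q4 := aux_flip_comm f4 c4
    have q1' := aux_flip_comm f1' c1
    have q2' := aux_flip_comm f2' c2
    have q3' := aux_flip_comm f3' c3
    have q4' := aux_flip_comm f4' c4
    rw [k1, mul_neg, neg_mul, neg_inj] at q3 q4
    rw [k1', mul_neg, neg_mul, neg_inj] at q3' q4'
    have hx1 : ∀ w : Quaternion ℝ, ∀ g, R * S * w = g → w = (R * S)⁻¹ * g := by
      intro w g h; rw [← h, inv_mul_cancel_left₀ hRS]
    generalize hg : R * S * x 1 = g at *
    generalize hg' : R * S * y 1 = g' at *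
    by_cases hgg : g' = -g
    · right
      apply hneg
      · apply mul_left_cancel₀ hRS
        rw [hg', mul_neg, hg, hgg]
      · apply mul_left_cancel₀ hRS'
        rw [k1', mul_neg, k1, hgg]
    · left
      have hu : 1 - g' * g ≠ 0 := by
        intro h
        apply hgg
        have h1 : g' * g = 1 := (sub_eq_zero.1 h).symm
        calc g' = -(g' * (g * g)) := by rw [g2]; simp
          _ = -g := by rw [← mul_assoc, h1, one_mul]
      have hcomm : ∀ Q : Quaternion ℝ, Q ≠ 0 → Q * g = g * Q⁻¹ → Q * g' = g' * Q⁻¹ →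
          (1 - g' * g) * Q = Q * (1 - g' * g) := by
        intro Q hQ h h'
        rw [sub_mul, mul_sub, one_mul, mul_one, mul_assoc, ← aux_flip_inv hQ h, ← mul_assoc, ← h',
          mul_assoc]
      have m1 := hcomm R z1 q1 q1'
      have m2 := hcomm S z2 q2 q2'
      have m3 := hcomm R' z3 q3 q3'
      have m4 := hcomm S' z4 q4 q4'
      have hug : (1 - g' * g) * g = g' * (1 - g' * g) := by
        rw [sub_mul, mul_sub, mul_assoc, g2, ← mul_assoc, g2']
        simp [add_comm]
      generalize 1 - g' * g = u at *
      have hb : u * x 1 = y 1 * u := by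
        apply mul_left_cancel₀ hRS
        calc R * S * (u * x 1) = R * (S * u) * x 1 := by simp only [mul_assoc]
          _ = R * u * S * x 1 := by rw [← m2]; simp only [mul_assoc]
          _ = u * (R * S * x 1) := by rw [← m1]; simp only [mul_assoc]
          _ = R * S * y 1 * u := by rw [hg, hug, hg']
          _ = _ := by rw [mul_assoc]
      have he : u * x 4 = y 4 * u := by
        apply mul_left_cancel₀ hRS'
        calc R' * S' * (u * x 4) = R' * (S' * u) * x 4 := by simp only [mul_assoc]
          _ = R' * u * S' * x 4 := by rw [← m4]; simp only [mul_assoc]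
          _ = u * (R' * S' * x 4) := by rw [← m3]; simp only [mul_assoc]
          _ = R' * S' * y 4 * u := by rw [k1, k1', mul_neg, neg_mul, hug]
          _ = _ := by rw [mul_assoc]
      apply aux_normalize hu
      apply fin
      · rw [x0, y0, mul_neg, neg_mul, ← mul_assoc, m1, mul_assoc, hb, mul_assoc]
      · exact hb
      · rw [x2, y2, mul_neg, neg_mul, ← mul_assoc, m2, mul_assoc, hb, mul_assoc]
      · rw [x3, y3, mul_neg, neg_mul, ← mul_assoc, m3, mul_assoc, he, mul_assoc]
      · exact he
      · rw [x5, y5, mul_neg, neg_mul, ← mul_assoc, m4, mul_assoc, he, mul_assoc]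
  · have hc' : R' * S' ≠ S' * R' := by
      intro h
      rw [(aux_commutator z3 z4).2 h, mul_one] at hrel
      exact hc ((aux_commutator z1 z2).1 hrel)
    rcases aux_pm (hs 1) (hs' 1) f1 f2 f1' f2' z1 z2 hc with h1 | h1 <;>
    rcases aux_pm (hs 4) (hs' 4) f3 f4 f3' f4' z3 z4 hc' with h4 | h4
    · left
      refine aux_normalize (u := 1) one_ne_zero ?_
      simp only [one_mul, mul_one]
      apply fin
      · rw [y0, x0, h1]
      · exact h1.symm
      · rw [y2, x2, h1]
      · rw [y3, x3, h4]
      · exact h4.symm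
      · rw [y5, x5, h4]
    · exfalso
      rw [h1, h4, mul_neg, mul_neg, hp] at hp'
      exact hbad hp'.symm
    · exfalso
      rw [h1, h4, mul_neg, neg_mul, hp] at hp'
      exact hbad hp'.symm
    · exact Or.inr (hneg h1 h4)

lemma memY_conj {x : Fin 6 → Quaternion ℝ} (hx : memY x) {u : Quaternion ℝ} (hu : u ≠ 0) :
    memY (fun i => u * x i * u⁻¹) := by
  obtain ⟨h1, h2⟩ := memY_iff.1 hx
  refine memY_iff.2 ⟨fun i => ?_, ?_⟩
  · calc u * x i * u⁻¹ * (u * x i * u⁻¹) = u * (x i * x i) * u⁻¹ := by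
          simp only [mul_assoc, inv_mul_cancel_left₀ hu]
      _ = -1 := by rw [h1]; simp [hu]
  · calc _ = u * (x 0 * x 1 * x 2 * x 3 * x 4 * x 5) * u⁻¹ := by
          simp only [mul_assoc, inv_mul_cancel_left₀ hu]
      _ = 1 := by rw [h2]; simp [hu]

lemma memY_neg {x : Fin 6 → Quaternion ℝ} (hx : memY x) : memY (fun i => -(x i)) := by
  obtain ⟨h1, h2⟩ := memY_iff.1 hx
  exact memY_iff.2 ⟨fun i => by simpa using h1 i, by simpa using h2⟩

lemma pstarTuple_conj (x : Fin 6 → Quaternion ℝ) {u : Quaternion ℝ} (hu : u ≠ 0) :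
    pstarTuple (fun i => u * x i * u⁻¹) =
      (u * (pstarTuple x).1 * u⁻¹, u * (pstarTuple x).2.1 * u⁻¹,
        u * (pstarTuple x).2.2.1 * u⁻¹, u * (pstarTuple x).2.2.2 * u⁻¹) := by
  simp only [pstarTuple, mul_inv_rev, inv_inv, mul_assoc, inv_mul_cancel_left₀ hu]

lemma pstarTuple_neg (x : Fin 6 → Quaternion ℝ) :
    pstarTuple (fun i => -(x i)) = pstarTuple x := by
  simp only [pstarTuple, inv_neg, neg_mul_neg]

lemma conjRel_equivalence : Equivalence conjRel := by
  have z : ∀ {q : Quaternion ℝ}, ‖q‖ = 1 → q ≠ 0 := by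
    intro q hq h0; simp [h0] at hq
  refine ⟨fun s => ⟨1, by simp⟩, ?_, ?_⟩
  · rintro s t ⟨u, hu, h1, h2, h3, h4⟩
    have hz := z hu
    refine ⟨u⁻¹, by simp [hu], ?_, ?_, ?_, ?_⟩
    · rw [h1]; simp [mul_assoc, hz]
    · rw [h2]; simp [mul_assoc, hz]
    · rw [h3]; simp [mul_assoc, hz]
    · rw [h4]; simp [mul_assoc, hz]
  · rintro s t r ⟨u, hu, h1, h2, h3, h4⟩ ⟨v, hv, k1, k2, k3, k4⟩
    refine ⟨v * u, by simp [hu, hv], ?_, ?_, ?_, ?_⟩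
    · rw [k1, h1]; simp [mul_assoc]
    · rw [k2, h2]; simp [mul_assoc]
    · rw [k3, h3]; simp [mul_assoc]
    · rw [k4, h4]; simp [mul_assoc]

def pX (x : SixPuncturedRepSpace) : GenusTwoRepSpace := ⟨pstarTuple x.1, aux_memX x.2⟩

lemma pX_continuous : Continuous pX := by
  have hc : ∀ i, Continuous fun x : SixPuncturedRepSpace => x.1 i := fun i =>
    (continuous_apply i).comp continuous_subtype_val
  have hi : ∀ i, Continuous fun x : SixPuncturedRepSpace => (x.1 i)⁻¹ := fun i =>
    (hc i).inv₀ (fun x h0 => by have := x.2.1 i; simp [h0] at this)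
  unfold pX pstarTuple
  refine Continuous.subtype_mk ?_ _
  exact ((hc 0).mul (hc 1)).prodMk (((hi 2).mul (hi 1)).prodMk
    (((hc 3).mul (hc 4)).prodMk ((hi 5).mul (hi 4))))

lemma pX_surjective : Function.Surjective pX := by
  rintro ⟨⟨R, S, R', S'⟩, h⟩
  obtain ⟨x, hx, hP⟩ := aux_surj h
  exact ⟨⟨x, hx⟩, Subtype.ext hP⟩

instance sixCompact : CompactSpace SixPuncturedRepSpace := by
  apply isCompact_iff_compactSpace.1
  change IsCompact {x | memY x}
  have hK : IsCompact (Set.univ.pi fun _ : Fin 6 => Metric.sphere (0 : Quaternion ℝ) 1) :=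
    isCompact_univ_pi fun _ => isCompact_sphere _ _
  refine hK.of_isClosed_subset ?_ ?_
  · have : {x | memY x} = {x : Fin 6 → Quaternion ℝ | (∀ i, x i * x i = -1) ∧
        x 0 * x 1 * x 2 * x 3 * x 4 * x 5 = 1} := by
      ext x; exact memY_iff
    rw [this]
    refine IsClosed.and (p₁ := fun x : Fin 6 → Quaternion ℝ => ∀ i, x i * x i = -1) ?_ ?_
    · simp only [Set.setOf_forall]
      exact isClosed_iInter fun i => isClosed_eq (by fun_prop) (by fun_prop)
    · exact isClosed_eq (by fun_prop) (by fun_prop)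
  · intro x hx i _
    simpa using hx.1 i

lemma pX_quotient : Topology.IsQuotientMap pX :=
  pX_continuous.isClosedMap.isQuotientMap pX_continuous pX_surjective

def pMap : ChiS26 → ChiF2 := Quot.lift (fun x => Quot.mk conjRel (pX x)) (by
  rintro x y ⟨u, hu, h⟩
  have hz : u ≠ 0 := by rintro rfl; simp at hu
  apply Quot.sound
  have hy : y.1 = fun i => u * x.1 i * u⁻¹ := funext h
  have := pstarTuple_conj x.1 hz
  rw [← hy] at this
  refine ⟨u, hu, ?_, ?_, ?_, ?_⟩ <;> simp only [pX, this])

def nuMap : ChiS26 → ChiS26 :=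
  Quot.lift (fun x => Quot.mk conjRelY ⟨fun i => -(x.1 i), memY_neg x.2⟩) (by
  rintro x y ⟨u, hu, h⟩
  apply Quot.sound
  exact ⟨u, hu, fun i => by simp [h]⟩)

lemma pMap_nu (y : ChiS26) : pMap (nuMap y) = pMap y := by
  induction y using Quot.ind with
  | mk x => exact congrArg (Quot.mk conjRel) (Subtype.ext (pstarTuple_neg x.1))

lemma pMap_inj (a b : ChiS26) (h : pMap a = pMap b) : b = a ∨ b = nuMap a := by
  induction a using Quot.ind with
  | mk x =>
  induction b using Quot.ind with
  | mk y =>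
  have h' : Quot.mk conjRel (pX x) = Quot.mk conjRel (pX y) := h
  obtain ⟨u, hu, h1, h2, h3, h4⟩ := conjRel_equivalence.eqvGen_iff.1 (Quot.eqvGen_exact h')
  have hz : u ≠ 0 := by rintro rfl; simp at hu
  have hw := memY_conj x.2 hz
  have e1 : (Quot.mk conjRelY ⟨_, hw⟩ : ChiS26) = Quot.mk conjRelY x :=
    (Quot.sound ⟨u, hu, fun i => rfl⟩).symm
  have hP : pstarTuple (fun i => u * x.1 i * u⁻¹) = pstarTuple y.1 := by
    rw [pstarTuple_conj x.1 hz]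
    exact (Prod.ext h1 (Prod.ext h2 (Prod.ext h3 h4))).symm
  rw [← e1]
  rcases aux_same hw y.2 hP with ⟨v, hv, h5⟩ | h5
  · left
    exact (Quot.sound ⟨v, hv, h5⟩).symm
  · right
    exact congrArg (Quot.mk conjRelY) (Subtype.ext (funext h5))

lemma pMap_quotient : Topology.IsQuotientMap pMap := by
  have h : Topology.IsQuotientMap (pMap ∘ Quot.mk conjRelY) :=
    Topology.IsQuotientMap.comp (g := Quot.mk conjRel) isQuotientMap_quot_mk pX_quotient
  have hc : Continuous pMap := continuous_quot_lift _ (continuous_quot_mk.comp pX_continuous)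
  exact Topology.IsQuotientMap.of_comp continuous_quot_mk hc h

/-- There is a well-defined continuous surjection `p* : χ(S²,6) → χ(F₂)` sending the class
of `(x₁,…,x₆)` to the class of `(x₁x₂, x₃⁻¹x₂⁻¹, x₄x₅, x₆⁻¹x₅⁻¹)`; it satisfies
`p* ∘ ν = p*` for the involution `ν` induced by `(x₁,…,x₆) ↦ (−x₁,…,−x₆)`, and the induced
map on the quotient `χ(S²,6)/ν → χ(F₂)` is a homeomorphism. -/
theorem pstar_induces_homeomorph :
    ∃ p : ChiS26 → ChiF2,
      Continuous p ∧ Function.Surjective p ∧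
      (∀ x : SixPuncturedRepSpace, ∃ h : memX (pstarTuple x.1),
        p (Quot.mk _ x) = Quot.mk conjRel ⟨pstarTuple x.1, h⟩) ∧
      ∃ ν : ChiS26 → ChiS26,
        (∀ x : SixPuncturedRepSpace, ∃ h : memY (fun i => -(x.1 i)),
          ν (Quot.mk _ x) = Quot.mk conjRelY ⟨fun i => -(x.1 i), h⟩) ∧
        p ∘ ν = p ∧
        ∃ φ : Quot (fun a b : ChiS26 => b = a ∨ b = ν a) ≃ₜ ChiF2,
          ∀ y : ChiS26, φ (Quot.mk _ y) = p y := by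
  refine ⟨pMap, pMap_quotient.continuous, pMap_quotient.surjective,
    fun x => ⟨aux_memX x.2, rfl⟩, nuMap, fun x => ⟨memY_neg x.2, rfl⟩, funext pMap_nu, ?_⟩
  let F : Quot (fun a b : ChiS26 => b = a ∨ b = nuMap a) → ChiF2 := Quot.lift pMap (by
    rintro a b (rfl | rfl)
    · rfl
    · exact (pMap_nu a).symm)
  have hF : Continuous F := continuous_quot_lift _ pMap_quotient.continuous
  have hq : Topology.IsQuotientMap F :=
    Topology.IsQuotientMap.of_comp continuous_quot_mk hF pMap_quotient
  have hinj : Function.Injective F := by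
    intro a b
    induction a using Quot.ind with
    | mk a =>
    induction b using Quot.ind with
    | mk b =>
    intro h
    exact Quot.sound (pMap_inj a b h)
  exact ⟨(Equiv.ofBijective F ⟨hinj, hq.surjective⟩).toHomeomorph
    (fun s => hq.isOpen_preimage), fun y => rfl⟩
end
end
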